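/- arXiv:1707.02916 — 3 statements merged into one kernel-verified Lean document; each statement's English description precedes it below -/
import Mathlib

section
/- Let r ≥ 1 and let H be an r-tree (that is, a K_{r+1}-decomposable graph). Then for every η > 0 there exists ρ > 0 and n₀ such that for every d ∈ (0,1] and every (ρ,d)-dense graph G with at least n₀ vertices, t_H(G) ≥ d^{|E(H)|} − η. -/
open MeasureTheory

/-- The homomorphism density `t_H(G)`. -/
noncomputable def homDensity {α β : Type*} [Fintype α] [Fintype β]
    (H : SimpleGraph α) (G : SimpleGraph β) : ℝ :=
  (Nat.card (H →g G) : ℝ) / (Fintype.card β : ℝ) ^ (Fintype.card α)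

/-- The number of edges of a graph. -/
noncomputable def edgeCount {α : Type*} (H : SimpleGraph α) : ℕ :=
  Nat.card H.edgeSet

/-- `G` is `(ρ,d)`-dense: every vertex subset `X` with `|X| ≥ ρ|V(G)|`
spans at least `(d/2)|X|²` edges. -/
def LocallyDense {β : Type*} [Fintype β] (G : SimpleGraph β) (ρ d : ℝ) : Prop :=
  ∀ X : Finset β, ρ * (Fintype.card β : ℝ) ≤ (X.card : ℝ) →
    d / 2 * (X.card : ℝ) ^ 2 ≤
      (Nat.card {e : Sym2 β // e ∈ G.edgeSet ∧ ∀ v ∈ e, v ∈ X} : ℝ)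

/-- `(bag, T)` is a tree decomposition of `H`. -/
def IsTreeDecomp {α ι : Type*} [DecidableEq α] (H : SimpleGraph α) (bag : ι → Finset α)
    (T : SimpleGraph ι) : Prop :=
  T.IsTree ∧
  (∀ v : α, ∃ X, v ∈ bag X) ∧
  (∀ u v : α, H.Adj u v → ∃ X, u ∈ bag X ∧ v ∈ bag X) ∧
  (∀ X Y Z : ι, ∀ p : T.Walk X Y, p.IsPath → Z ∈ p.support →
    bag X ∩ bag Y ⊆ bag Z)

/-- `(bag, T)` is a `J`-decomposition of `H`: a tree decomposition in which every
bag induces a copy of `J`, and for adjacent bags there is an isomorphism between the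
induced copies of `J` fixing the intersection pointwise. -/
def IsJDecomp {α ι γ : Type*} [DecidableEq α] (H : SimpleGraph α) (J : SimpleGraph γ)
    (bag : ι → Finset α) (T : SimpleGraph ι) : Prop :=
  IsTreeDecomp H bag T ∧
  (∀ X : ι, Nonempty (H.induce ↑(bag X) ≃g J)) ∧
  (∀ X Y : ι, T.Adj X Y → ∃ e : H.induce ↑(bag X) ≃g H.induce ↑(bag Y),
      ∀ (v : α) (h1 : v ∈ bag X) (h2 : v ∈ bag Y),
        ((e ⟨v, h1⟩ : ↑(bag Y)) : α) = v)

/-- `H` is `J`-decomposable. -/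
def JDecomposable {α γ : Type*} [DecidableEq α] (H : SimpleGraph α) (J : SimpleGraph γ) : Prop :=
  ∃ (ι : Type) (_ : Fintype ι) (bag : ι → Finset α) (T : SimpleGraph ι),
    IsJDecomp H J bag T

set_option linter.unusedSectionVars false
noncomputable section RTree
open Finset Classical

variable {α : Type*} {β : Type} [Fintype α] [Fintype β]

/-- Average of a function over all maps. -/
def EE (h : (α → β) → ℝ) : ℝ := (∑ x, h x) / (Fintype.card (α → β) : ℝ)

/-- Conditional expectation onto the coordinates in `S`. -/
def AA (S : Finset α) (h : (α → β) → ℝ) : (α → β) → ℝ :=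
  fun x => EE (fun y => h (S.piecewise x y))

/-- `h` depends only on the coordinates in `S`. -/
def Dep (S : Finset α) (h : (α → β) → ℝ) : Prop :=
  ∀ x x', (∀ v ∈ S, x v = x' v) → h x = h x'

lemma cardN_pos [Nonempty β] : (0:ℝ) < (Fintype.card (α → β) : ℝ) := by
  exact_mod_cast Fintype.card_pos

lemma EE_const [Nonempty β] (c : ℝ) : EE (fun _ : α → β => c) = c := by
  have := cardN_pos (α := α) (β := β)
  unfold EE
  rw [Finset.sum_const, nsmul_eq_mul, Finset.card_univ]
  field_simp

lemma EE_add (f g : (α → β) → ℝ) : EE (fun x => f x + g x) = EE f + EE g := by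
  simp [EE, Finset.sum_add_distrib, add_div]

lemma EE_sub (f g : (α → β) → ℝ) : EE (fun x => f x - g x) = EE f - EE g := by
  simp [EE, Finset.sum_sub_distrib, sub_div]

lemma EE_smul (c : ℝ) (g : (α → β) → ℝ) : EE (fun x => c * g x) = c * EE g := by
  simp [EE, ← Finset.mul_sum, mul_div_assoc]

lemma EE_mono {f g : (α → β) → ℝ} (h : ∀ x, f x ≤ g x) : EE f ≤ EE g := by
  unfold EE
  gcongr
  exact h _

lemma EE_nonneg {f : (α → β) → ℝ} (h : ∀ x, 0 ≤ f x) : 0 ≤ EE f := by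
  unfold EE
  exact div_nonneg (Finset.sum_nonneg fun x _ => h x) (by positivity)

lemma EE_zero [Nonempty β] {f : (α → β) → ℝ} (h : ∀ x, 0 ≤ f x) (h0 : EE f = 0) (x : α → β) :
    f x = 0 := by
  have := cardN_pos (α := α) (β := β)
  unfold EE at h0
  rw [div_eq_zero_iff] at h0
  rcases h0 with h0 | h0
  · exact (Finset.sum_eq_zero_iff_of_nonneg (fun x _ => h x)).1 h0 x (Finset.mem_univ _)
  · linarith

/-- The coordinate exchange. -/
lemma EE_swap [Nonempty β] (S : Finset α) (h : (α → β) → ℝ) :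
    EE (fun x => EE (fun y => h (S.piecewise x y))) = EE h := by
  have hN := cardN_pos (α := α) (β := β)
  have key : ∑ x : α → β, ∑ y : α → β, h (S.piecewise x y) =
      ∑ x : α → β, ∑ y : α → β, h x := by
    rw [← Finset.sum_product', ← Finset.sum_product']
    refine Finset.sum_bij' (fun p _ => (S.piecewise p.1 p.2, S.piecewise p.2 p.1))
      (fun p _ => (S.piecewise p.1 p.2, S.piecewise p.2 p.1)) ?_ ?_ ?_ ?_ ?_
    · intros; simp
    · intros; simp
    · rintro ⟨x, y⟩ _
      ext v <;> by_cases hv : v ∈ S <;> simp [hv]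
    · rintro ⟨x, y⟩ _
      ext v <;> by_cases hv : v ∈ S <;> simp [hv]
    · rintro ⟨x, y⟩ _
      rfl
  unfold EE
  rw [← Finset.sum_div, key]
  simp only [Finset.sum_const, Finset.card_univ, nsmul_eq_mul, ← Finset.mul_sum]
  field_simp

lemma EE_AA [Nonempty β] (S : Finset α) (h : (α → β) → ℝ) : EE (AA S h) = EE h := EE_swap S h

lemma AA_dep (S : Finset α) (h : (α → β) → ℝ) : Dep S (AA S h) := by
  intro x x' hx
  unfold AA
  congr 1
  funext y
  congr 1
  ext v
  by_cases hv : v ∈ S <;> simp [hv, hx]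

lemma AA_mul (S : Finset α) {k : (α → β) → ℝ} (hk : Dep S k) (h : (α → β) → ℝ) :
    AA S (fun x => k x * h x) = fun x => k x * AA S h x := by
  funext x
  unfold AA
  rw [← EE_smul]
  congr 1
  funext y
  show k (S.piecewise x y) * _ = _
  rw [hk (S.piecewise x y) x (fun v hv => by simp [hv])]

lemma AA_AA [Nonempty β] (S T : Finset α) (h : (α → β) → ℝ) : AA S (AA T h) = AA (S ∩ T) h := by
  funext x
  unfold AA
  rw [← EE_swap T (fun w => h ((S ∩ T).piecewise x w))]
  congr 1; funext y
  congr 1; funext z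
  congr 1
  ext v
  by_cases hv : v ∈ S <;> by_cases hv' : v ∈ T <;> simp [hv, hv']

lemma AA_self [Nonempty β] {S : Finset α} {h : (α → β) → ℝ} (hh : Dep S h) : AA S h = h := by
  funext x
  unfold AA
  rw [← EE_const (α := α) (β := β) (h x)]
  congr 1
  funext y
  exact hh _ _ (fun v hv => by simp [hv])

lemma AA_inter [Nonempty β] (T : Finset α) {S : Finset α} {h : (α → β) → ℝ} (hh : Dep S h) :
    AA T h = AA (T ∩ S) h := by
  rw [← AA_AA, AA_self hh]

lemma AA_nonneg (S : Finset α) {h : (α → β) → ℝ} (hh : ∀ x, 0 ≤ h x) (x : α → β) :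
    0 ≤ AA S h x := EE_nonneg fun _ => hh _

lemma EE_mul_AA [Nonempty β] (S : Finset α) {k : (α → β) → ℝ} (hk : Dep S k)
    (h : (α → β) → ℝ) : EE (fun x => h x * k x) = EE (fun x => AA S h x * k x) := by
  rw [← EE_AA S (fun x => h x * k x)]
  congr 1
  have := AA_mul S hk h
  simp only [mul_comm (k _)] at this
  exact this

lemma AA_zero [Nonempty β] (S : Finset α) {h : (α → β) → ℝ} (hh : ∀ x, 0 ≤ h x) (x : α → β)
    (h0 : AA S h x = 0) : h x = 0 := by
  have := EE_zero (f := fun y => h (S.piecewise x y)) (fun _ => hh _) h0 x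
  have e : S.piecewise x x = x := by
    ext v; by_cases hv : v ∈ S <;> simp [hv]
  simpa only [e] using this

lemma Dep.mono {S T : Finset α} (hST : S ⊆ T) {h : (α → β) → ℝ} (hh : Dep S h) : Dep T h :=
  fun x x' hx => hh x x' fun v hv => hx v (hST hv)

/-- Gibbs inequality. -/
lemma gibbs [Nonempty β] {f b : (α → β) → ℝ} (hf : ∀ x, 0 ≤ f x) (hf1 : EE f = 1)
    (hb : ∀ x, 0 ≤ b x) (hsupp : ∀ x, f x ≠ 0 → b x = 1) :
    0 < EE b ∧ - Real.log (EE b) ≤ EE (fun x => f x * Real.log (f x)) := by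
  have hpos : 0 < EE b := by
    refine lt_of_le_of_ne (EE_nonneg hb) fun h0 => ?_
    have : f = fun _ => 0 := by
      funext x
      by_contra hx
      have := EE_zero hb h0.symm x
      rw [hsupp x hx] at this
      norm_num at this
    rw [this, EE_const] at hf1
    norm_num at hf1
  refine ⟨hpos, ?_⟩
  have h1 : EE (fun x => f x * (1 - Real.log (EE b)) - (EE b)⁻¹ * b x) ≤
      EE (fun x => f x * Real.log (f x)) := by
    apply EE_mono
    intro x
    by_cases hx : f x = 0
    · rw [hx]
      have : 0 ≤ (EE b)⁻¹ * b x := mul_nonneg (by positivity) (hb x)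
      linarith
    · have hfx : 0 < f x := lt_of_le_of_ne (hf x) (Ne.symm hx)
      rw [hsupp x hx]
      have h2 := Real.log_le_sub_one_of_pos (x := (f x * EE b)⁻¹) (by positivity)
      rw [Real.log_inv, Real.log_mul hx hpos.ne'] at h2
      have h3 := mul_le_mul_of_nonneg_left h2 hfx.le
      have h4 : f x * ((f x * EE b)⁻¹ - 1) = (EE b)⁻¹ - f x := by
        field_simp
      rw [h4] at h3
      linarith
  rw [EE_sub, EE_smul, inv_mul_cancel₀ hpos.ne'] at h1
  have h5 : EE (fun x => f x * (1 - Real.log (EE b))) = 1 - Real.log (EE b) := by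
    have := EE_smul (1 - Real.log (EE b)) f
    simp only [mul_comm _ (f _)] at this
    rw [this, hf1, mul_one]
  linarith

variable (G : SimpleGraph β)

/-- Indicator of `x` being a clique on `S`. -/
def cc (S : Finset α) (x : α → β) : ℝ :=
  if ∀ u ∈ S, ∀ v ∈ S, u ≠ v → G.Adj (x u) (x v) then 1 else 0

/-- Clique density. -/
def tau (S : Finset α) : ℝ := EE (cc G S)

lemma cc_nonneg (S : Finset α) (x : α → β) : 0 ≤ cc G S x := by
  unfold cc; split_ifs <;> norm_num

lemma cc_ne_zero {S : Finset α} {x : α → β} (h : cc G S x ≠ 0) : cc G S x = 1 := by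
  unfold cc at *; split_ifs at * <;> simp_all

lemma cc_one_iff {S : Finset α} {x : α → β} :
    cc G S x = 1 ↔ ∀ u ∈ S, ∀ v ∈ S, u ≠ v → G.Adj (x u) (x v) := by
  unfold cc; split_ifs <;> simp_all

lemma cc_dep (S : Finset α) : Dep S (cc G S) := by
  intro x x' hx
  unfold cc
  congr 1
  apply propext
  constructor
  · intro h u hu v hv; rw [← hx u hu, ← hx v hv]; exact h u hu v hv
  · intro h u hu v hv; rw [hx u hu, hx v hv]; exact h u hu v hv

lemma AA_cc_supp {S X : Finset α} (hSX : S ⊆ X) [Nonempty β] {x : α → β}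
    (h : AA S (cc G X) x ≠ 0) : cc G S x = 1 := by
  rw [cc_one_iff]
  by_contra hcon
  apply h
  unfold AA
  rw [← EE_const (α := α) (β := β) 0]
  congr 1
  funext y
  by_contra h1
  have h2 := (cc_one_iff G).1 (cc_ne_zero G h1)
  apply hcon
  intro u hu v hv huv
  have := h2 u (hSX hu) v (hSX hv) huv
  simpa [hu, hv] using this

lemma exists_perm {S X Y : Finset α} (hX : S ⊆ X) (hY : S ⊆ Y) (h : X.card = Y.card) :
    ∃ σ : Equiv.Perm α, (∀ v ∈ S, σ v = v) ∧ ∀ v, v ∈ X ↔ σ v ∈ Y := by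
  let X' : Finset {a // a ∉ S} := X.subtype _
  let Y' : Finset {a // a ∉ S} := Y.subtype _
  have hc : X'.card = Y'.card := by
    simp only [X', Y', Finset.card_subtype]
    have e1 : X.filter (fun a => a ∉ S) = X \ S := by ext; simp
    have e2 : Y.filter (fun a => a ∉ S) = Y \ S := by ext; simp
    rw [e1, e2, Finset.card_sdiff_of_subset hX, Finset.card_sdiff_of_subset hY, h]
  let e : {a // a ∈ X'} ≃ {a // a ∈ Y'} := Finset.equivOfCardEq hc
  let π : Equiv.Perm {a // a ∉ S} := e.extendSubtype
  refine ⟨Equiv.Perm.ofSubtype π, ?_, ?_⟩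
  · intro v hv
    exact Equiv.Perm.ofSubtype_apply_of_not_mem _ (by simpa using hv)
  · intro v
    by_cases hv : v ∈ S
    · rw [Equiv.Perm.ofSubtype_apply_of_not_mem _ (by simpa using hv)]
      exact ⟨fun _ => hY hv, fun _ => hX hv⟩
    · rw [Equiv.Perm.ofSubtype_apply_of_mem (p := fun a => a ∉ S) _ hv]
      have key : (⟨v, hv⟩ : {a // a ∉ S}) ∈ X' ↔ π ⟨v, hv⟩ ∈ Y' := by
        constructor
        · intro hh; exact Equiv.extendSubtype_mem e _ hh
        · intro hh; by_contra hn; exact Equiv.extendSubtype_not_mem e _ hn hh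
      simpa [X', Y'] using key

lemma AA_cc_eq {S X Y : Finset α} (hX : S ⊆ X) (hY : S ⊆ Y) (h : X.card = Y.card) :
    AA S (cc G X) = AA S (cc G Y) := by
  obtain ⟨σ, hσ, hσ'⟩ := exists_perm hX hY h
  funext x
  unfold AA EE
  congr 1
  refine (Fintype.sum_equiv (Equiv.arrowCongr σ (Equiv.refl β)) _ _ ?_)
  intro y
  unfold cc
  congr 1
  apply propext
  have hz : ∀ v, S.piecewise x y v =
      S.piecewise x ((Equiv.arrowCongr σ (Equiv.refl β)) y) (σ v) := by
    intro v
    by_cases hv : v ∈ S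
    · rw [hσ v hv]; simp [hv]
    · have : σ v ∉ S := by
        intro h'
        have := hσ _ h'
        rw [σ.injective this] at h'
        exact hv h'
      simp [hv, this, Equiv.arrowCongr]
  constructor
  · intro hh u hu v hv huv
    have := hh (σ.symm u) (by rw [hσ']; simpa) (σ.symm v) (by rw [hσ']; simpa) (by simpa)
    rw [hz, hz, σ.apply_symm_apply, σ.apply_symm_apply] at this
    exact this
  · intro hh u hu v hv huv
    rw [hz, hz]
    exact hh _ ((hσ' _).1 hu) _ ((hσ' _).1 hv) (by simpa)

lemma tau_eq [Nonempty β] {X Y : Finset α} (h : X.card = Y.card) : tau G X = tau G Y := by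
  unfold tau
  rw [← EE_AA ∅, AA_cc_eq G (Finset.empty_subset X) (Finset.empty_subset Y) h, EE_AA]

/-- Resampling one coordinate. -/
lemma sum_update (u : α) (h : (α → β) → ℝ) :
    ∑ b : β, ∑ y : α → β, h (Function.update y u b) = ∑ _b : β, ∑ y : α → β, h y := by
  rw [← Finset.sum_product', ← Finset.sum_product']
  refine Finset.sum_bij' (fun p _ => (p.2 u, Function.update p.2 u p.1))
      (fun p _ => (p.2 u, Function.update p.2 u p.1)) ?_ ?_ ?_ ?_ ?_
  · intros; simp
  · intros; simp
  · rintro ⟨b, y⟩ _; simp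
  · rintro ⟨b, y⟩ _; simp
  · rintro ⟨b, y⟩ _; rfl

lemma EE_coord [Nonempty β] (u : α) (F : β → ℝ) :
    EE (fun y : α → β => F (y u)) = (∑ b, F b) / (Fintype.card β : ℝ) := by
  have hN := cardN_pos (α := α) (β := β)
  have hn : (0:ℝ) < (Fintype.card β : ℝ) := by exact_mod_cast Fintype.card_pos
  have := sum_update u (fun y : α → β => F (y u))
  simp only [Function.update_self, Finset.sum_const, Finset.card_univ, nsmul_eq_mul,
    ← Finset.mul_sum] at this
  unfold EE
  rw [div_eq_div_iff hN.ne' hn.ne']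
  linarith

lemma EE_coord2 [Nonempty β] {u v : α} (huv : u ≠ v) (F : β → β → ℝ) :
    EE (fun y : α → β => F (y u) (y v)) = (∑ b, ∑ c, F b c) / (Fintype.card β : ℝ) ^ 2 := by
  have hN := cardN_pos (α := α) (β := β)
  have hn : (0:ℝ) < (Fintype.card β : ℝ) := by exact_mod_cast Fintype.card_pos
  have h1 := sum_update u (fun y : α → β => F (y u) (y v))
  have h2 : ∀ b, EE (fun y : α → β => F b (y v)) = _ := fun b => EE_coord v (F b)
  simp only [Function.update_self, Function.update_of_ne huv.symm, Finset.sum_const,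
    Finset.card_univ, nsmul_eq_mul] at h1
  have h3 : ∀ b, ∑ y : α → β, F b (y v) =
      (∑ c, F b c) / (Fintype.card β : ℝ) * (Fintype.card (α → β) : ℝ) := by
    intro b
    rw [← h2 b]
    unfold EE
    field_simp
  simp only [h3] at h1
  rw [← Finset.sum_mul, ← Finset.sum_div] at h1
  unfold EE
  rw [div_eq_div_iff hN.ne' (by positivity)]
  field_simp at h1
  linarith

lemma dense_pairs {ρ d : ℝ} (hG : LocallyDense G ρ d) (X : Finset β)
    (hX : ρ * (Fintype.card β : ℝ) ≤ (X.card : ℝ)) :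
    d * (X.card : ℝ) ^ 2 ≤
      ∑ b : β, ∑ c : β, (if b ∈ X ∧ c ∈ X ∧ G.Adj b c then (1:ℝ) else 0) := by
  have h := hG X hX
  let G' : SimpleGraph β :=
    { Adj := fun b c => b ∈ X ∧ c ∈ X ∧ G.Adj b c
      symm := ⟨fun b c h => ⟨h.2.1, h.1, h.2.2.symm⟩⟩
      loopless := ⟨fun b h => G.loopless.irrefl _ h.2.2⟩ }
  have e1 : Nat.card {e : Sym2 β // e ∈ G.edgeSet ∧ ∀ v ∈ e, v ∈ X} = G'.edgeFinset.card := by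
    rw [Nat.card_eq_fintype_card, Fintype.card_subtype]
    congr 1
    ext e
    induction e using Sym2.ind with
    | _ b c =>
      simp [G']
      tauto
  have e2 := SimpleGraph.two_mul_card_edgeFinset G'
  have e3 : ∑ b : β, ∑ c : β, (if b ∈ X ∧ c ∈ X ∧ G.Adj b c then (1:ℝ) else 0) =
      (2 * G'.edgeFinset.card : ℕ) := by
    rw [e2, ← Finset.sum_product', Finset.card_filter]
    push_cast
    rfl
  rw [e3]
  rw [e1] at h
  push_cast
  linarith

lemma tau_step [Nonempty β] {ρ d : ℝ} (hd0 : 0 ≤ d) (hd1 : d ≤ 1) (hρ : 0 ≤ ρ)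
    (hG : LocallyDense G ρ d) {Q : Finset α} {u v : α} (hu : u ∉ Q) (hv : v ∉ Q) (huv : u ≠ v) :
    d * tau G (insert u Q) ^ 2 - ρ ^ 2 * tau G Q ^ 2 ≤
      tau G (insert v (insert u Q)) * tau G Q := by
  have hN := cardN_pos (α := α) (β := β)
  have hn : (0:ℝ) < (Fintype.card β : ℝ) := by exact_mod_cast Fintype.card_pos
  let Nb : (α → β) → Finset β := fun x => univ.filter fun b => ∀ q ∈ Q, G.Adj (x q) b
  have h1 : ∀ x, AA Q (cc G (insert u Q)) x =
      cc G Q x * (((Nb x).card : ℝ) / Fintype.card β) := by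
    intro x
    have e : ((Nb x).card : ℝ) = ∑ b : β, if b ∈ Nb x then (1:ℝ) else 0 := by simp
    rw [e, ← EE_coord (α := α) u, ← EE_smul]
    unfold AA
    congr 1
    funext y
    unfold cc
    rw [ite_zero_mul_ite_zero, one_mul]
    congr 1
    apply propext
    have hne : ∀ q ∈ Q, q ≠ u := fun q hq h => hu (h ▸ hq)
    simp only [Nb, Finset.mem_filter, Finset.mem_univ, true_and]
    constructor
    · intro hh
      refine ⟨fun a ha b hb hab => ?_, fun q hq => ?_⟩
      · simpa [ha, hb] using hh a (by simp [ha]) b (by simp [hb]) hab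
      · simpa [hq, hu] using hh q (by simp [hq]) u (by simp) (hne q hq)
    · rintro ⟨h1, h2⟩ a ha b hb hab
      rw [Finset.mem_insert] at ha hb
      rcases ha with rfl | ha <;> rcases hb with rfl | hb
      · exact absurd rfl hab
      · simpa [hb, hu] using (h2 b hb).symm
      · simpa [ha, hu] using (h2 a ha)
      · simpa [ha, hb] using h1 a ha b hb hab
  have h2 : ∀ x, AA Q (cc G (insert v (insert u Q))) x =
      cc G Q x * ((∑ b : β, ∑ c : β,
        (if b ∈ Nb x ∧ c ∈ Nb x ∧ G.Adj b c then (1:ℝ) else 0)) / (Fintype.card β : ℝ) ^ 2) := by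
    intro x
    rw [← EE_coord2 (α := α) huv
      (fun b c => (if b ∈ Nb x ∧ c ∈ Nb x ∧ G.Adj b c then (1:ℝ) else 0)), ← EE_smul]
    unfold AA
    congr 1
    funext y
    unfold cc
    rw [ite_zero_mul_ite_zero, one_mul]
    congr 1
    apply propext
    have hne : ∀ q ∈ Q, q ≠ u := fun q hq h => hu (h ▸ hq)
    have hne' : ∀ q ∈ Q, q ≠ v := fun q hq h => hv (h ▸ hq)
    simp only [Nb, Finset.mem_filter, Finset.mem_univ, true_and]
    constructor
    · intro hh
      refine ⟨fun a ha b hb hab => ?_, fun q hq => ?_, fun q hq => ?_, ?_⟩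
      · simpa [ha, hb] using hh a (by simp [ha]) b (by simp [hb]) hab
      · simpa [hq, hu] using hh q (by simp [hq]) u (by simp) (hne q hq)
      · simpa [hq, hv] using hh q (by simp [hq]) v (by simp) (hne' q hq)
      · simpa [hu, hv] using hh u (by simp) v (by simp) huv
    · rintro ⟨h1, h2, h3, h4⟩ a ha b hb hab
      rw [Finset.mem_insert, Finset.mem_insert] at ha hb
      rcases ha with rfl | rfl | ha <;> rcases hb with rfl | rfl | hb
      · exact absurd rfl hab
      · simpa [hv, hu] using h4.symm
      · simpa [hb, hv] using (h3 b hb).symm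
      · simpa [hv, hu] using h4
      · exact absurd rfl hab
      · simpa [hb, hu] using (h2 b hb).symm
      · simpa [ha, hv] using (h3 a ha)
      · simpa [ha, hu] using (h2 a ha)
      · simpa [ha, hb] using h1 a ha b hb hab
  have h3 : ∀ x, d * (AA Q (cc G (insert u Q)) x) ^ 2 - ρ ^ 2 * cc G Q x ≤
      AA Q (cc G (insert v (insert u Q))) x := by
    intro x
    rw [h1, h2]
    by_cases hc : cc G Q x = 0
    · simp [hc]
    rw [cc_ne_zero G hc]
    simp only [one_mul, mul_one]
    by_cases hX : ρ * (Fintype.card β : ℝ) ≤ ((Nb x).card : ℝ)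
    · have := dense_pairs G hG (Nb x) hX
      have h4 := div_le_div_of_nonneg_right this (sq_nonneg (Fintype.card β : ℝ))
      rw [div_pow, ← mul_div_assoc]
      nlinarith [sq_nonneg ρ]
    · push Not at hX
      have h5 : ((Nb x).card : ℝ) / Fintype.card β ≤ ρ := by
        rw [div_le_iff₀ hn]; exact hX.le
      have h6 : (((Nb x).card : ℝ) / Fintype.card β) ^ 2 ≤ ρ ^ 2 := by
        gcongr
      have h7 : 0 ≤ (∑ b : β, ∑ c : β, (if b ∈ Nb x ∧ c ∈ Nb x ∧ G.Adj b c then (1:ℝ) else 0)) /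
          (Fintype.card β : ℝ) ^ 2 := by
        apply div_nonneg _ (by positivity)
        apply Finset.sum_nonneg; intro b _
        apply Finset.sum_nonneg; intro c _
        split_ifs <;> norm_num
      have h8 : d * (((Nb x).card : ℝ) / Fintype.card β) ^ 2 ≤
          1 * (((Nb x).card : ℝ) / Fintype.card β) ^ 2 := by gcongr
      linarith
  have h4 := EE_mono h3
  rw [EE_AA, EE_sub, EE_smul, EE_smul] at h4
  have h5 : tau G (insert u Q) ^ 2 ≤
      EE (fun x => (AA Q (cc G (insert u Q)) x) ^ 2) * tau G Q := by
    unfold tau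
    rw [← EE_AA Q (cc G (insert u Q))]
    have h6 : ∀ x, AA Q (cc G (insert u Q)) x = AA Q (cc G (insert u Q)) x * cc G Q x := by
      intro x
      by_cases hx : AA Q (cc G (insert u Q)) x = 0
      · rw [hx, zero_mul]
      · rw [AA_cc_supp G (Finset.subset_insert u Q) hx, mul_one]
    have h7 : ∀ x, cc G Q x ^ 2 = cc G Q x := by
      intro x
      unfold cc
      split_ifs <;> norm_num
    have h8 := Finset.sum_mul_sq_le_sq_mul_sq univ (AA Q (cc G (insert u Q))) (cc G Q)
    simp only [← h6, h7] at h8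
    unfold EE
    rw [div_pow, div_mul_div_comm, ← sq]
    gcongr
  have h9 : 0 ≤ tau G Q := EE_nonneg (cc_nonneg G Q)
  change d * _ - ρ ^ 2 * tau G Q ≤ tau G _ at h4
  have h10 := mul_le_mul_of_nonneg_right h4 h9
  have h11 := mul_le_mul_of_nonneg_left h5 hd0
  linarith

lemma tau_empty [Nonempty β] : tau G (∅ : Finset α) = 1 := by
  unfold tau
  rw [← EE_const (α := α) (β := β) 1]
  congr 1
  funext x
  simp [cc]

lemma tau_singleton [Nonempty β] (v : α) : tau G ({v} : Finset α) = 1 := by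
  unfold tau
  rw [← EE_const (α := α) (β := β) 1]
  congr 1
  funext x
  simp [cc]

lemma tau_ratio [Nonempty β] {ρ d ε γ : ℝ} (hγ : 0 < γ) (hε : 0 < ε) (hdε : γ ≤ d - ε)
    (hd1 : d ≤ 1) (hρ : 0 ≤ ρ) (hργ : ρ ^ 2 ≤ ε * (γ ^ Fintype.card α) ^ 2)
    (hG : LocallyDense G ρ d) (k : ℕ) : ∀ S : Finset α, S.card = k →
      0 < tau G S ∧ ∀ v ∉ S, (d - ε) ^ k * tau G S ≤ tau G (insert v S) := by
  induction k with
  | zero =>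
    intro S hS
    rw [Finset.card_eq_zero] at hS
    subst hS
    refine ⟨by rw [tau_empty]; norm_num, fun v _ => ?_⟩
    rw [tau_empty]
    simp [tau_singleton]
  | succ k ih =>
    intro S hS
    obtain ⟨u, Q, hu, rfl, hQ⟩ := Finset.card_eq_succ.1 hS
    obtain ⟨hp, hr⟩ := ih Q hQ
    have hd' : 0 < d - ε := lt_of_lt_of_le hγ hdε
    have hm : 0 < (d - ε) ^ k := by positivity
    have hq := hr u hu
    have hq0 : 0 < tau G (insert u Q) := lt_of_lt_of_le (by positivity) hq
    refine ⟨hq0, fun v hv => ?_⟩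
    simp only [Finset.mem_insert, not_or] at hv
    have hst := tau_step G (by linarith) hd1 hρ hG hu hv.2 (Ne.symm hv.1)
    have hkα : k ≤ Fintype.card α := hQ ▸ Finset.card_le_univ Q
    have hγm : γ ^ Fintype.card α ≤ (d - ε) ^ k := by
      calc γ ^ Fintype.card α ≤ γ ^ k := by
            apply pow_le_pow_of_le_one hγ.le (by linarith) hkα
        _ ≤ (d - ε) ^ k := by gcongr
    have h1 : ρ ^ 2 ≤ ε * ((d - ε) ^ k) ^ 2 := hργ.trans (by gcongr)
    set p := tau G Q
    set q := tau G (insert u Q)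
    set m := (d - ε) ^ k
    have h2 : ρ ^ 2 * p ^ 2 ≤ ε * q ^ 2 := by
      calc ρ ^ 2 * p ^ 2 ≤ ε * m ^ 2 * p ^ 2 := by gcongr
        _ = ε * (m * p) ^ 2 := by ring
        _ ≤ ε * q ^ 2 := by gcongr
    have h3 : (d - ε) * q * (m * p) ≤ (d - ε) * q * q := by gcongr
    have h4 : ((d - ε) ^ (k + 1) * q) * p ≤ tau G (insert v (insert u Q)) * p := by
      rw [pow_succ]
      nlinarith
    exact le_of_mul_le_mul_right h4 hp

lemma tau_choose [Nonempty β] {d' : ℝ} (hd' : 0 < d')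
    (hrat : ∀ S : Finset α, 0 < tau G S ∧ ∀ v ∉ S, d' ^ S.card * tau G S ≤ tau G (insert v S))
    {S X : Finset α} (hSX : S ⊆ X) :
    d' ^ (X.card.choose 2) * tau G S ≤ d' ^ (S.card.choose 2) * tau G X := by
  have key : ∀ R : Finset α, Disjoint S R →
      d' ^ ((S ∪ R).card.choose 2) * tau G S ≤ d' ^ (S.card.choose 2) * tau G (S ∪ R) := by
    intro R
    induction R using Finset.induction_on with
    | empty => simp
    | insert v R hv ih =>
      intro hdis
      rw [Finset.disjoint_insert_right] at hdis
      have ih := ih hdis.2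
      have hvn : v ∉ S ∪ R := by simp [hdis.1, hv]
      rw [Finset.union_insert, Finset.card_insert_of_notMem hvn]
      have h2 := (hrat (S ∪ R)).2 v hvn
      rw [Nat.choose_succ_succ' , Nat.choose_one_right, pow_add]
      calc _ = d' ^ (S ∪ R).card * (d' ^ ((S ∪ R).card.choose 2) * tau G S) := by ring
        _ ≤ d' ^ (S ∪ R).card * (d' ^ (S.card.choose 2) * tau G (S ∪ R)) := by gcongr
        _ = d' ^ (S.card.choose 2) * (d' ^ (S ∪ R).card * tau G (S ∪ R)) := by ring
        _ ≤ _ := by gcongr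
  have := key (X \ S) Finset.disjoint_sdiff
  rwa [Finset.union_sdiff_of_subset hSX] at this

/-- Number of edges of `H` inside `U`. -/
def MM (H : SimpleGraph α) (U : Finset α) : ℕ :=
  (univ.filter fun e : Sym2 α => e ∈ H.edgeSet ∧ ∀ v ∈ e, v ∈ U).card

lemma MM_step (H : SimpleGraph α) (U X : Finset α)
    (hX : ∀ a ∈ X, ∀ b ∈ X, a ≠ b → H.Adj a b) :
    MM H U + X.card.choose 2 ≤ MM H (U ∪ X) + (X ∩ U).card.choose 2 := by
  unfold MM
  rw [← Sym2.card_image_offDiag X, ← Sym2.card_image_offDiag (X ∩ U),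
    ← Finset.card_union_add_card_inter]
  have hP : ∀ (S : Finset α) (a b : α),
      s(a, b) ∈ S.offDiag.image Sym2.mk.uncurry ↔ a ∈ S ∧ b ∈ S ∧ a ≠ b := by
    intro S a b
    simp only [Finset.mem_image, Finset.mem_offDiag, Prod.exists, Function.uncurry_apply_pair,
      Sym2.eq_iff]
    constructor
    · rintro ⟨c, d, ⟨h1, h2, h3⟩, ⟨rfl, rfl⟩ | ⟨rfl, rfl⟩⟩
      · exact ⟨h1, h2, h3⟩
      · exact ⟨h2, h1, h3.symm⟩
    · intro h
      exact ⟨a, b, h, Or.inl ⟨rfl, rfl⟩⟩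
  apply Nat.add_le_add
  · apply Finset.card_le_card
    intro e
    induction e using Sym2.ind with
    | _ a b =>
      rw [Finset.mem_union, hP]
      simp only [Finset.mem_filter, Finset.mem_univ, true_and, SimpleGraph.mem_edgeSet,
        Sym2.mem_iff, forall_eq_or_imp, forall_eq, Finset.mem_union]
      rintro (⟨h1, h2, h3⟩ | ⟨h1, h2, h3⟩)
      · exact ⟨h1, Or.inl h2, Or.inl h3⟩
      · exact ⟨hX a h1 b h2 h3, Or.inr h1, Or.inr h2⟩
  · apply Finset.card_le_card
    intro e
    induction e using Sym2.ind with
    | _ a b =>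
      rw [Finset.mem_inter, hP, hP]
      simp only [Finset.mem_filter, Finset.mem_univ, true_and, SimpleGraph.mem_edgeSet,
        Sym2.mem_iff, forall_eq_or_imp, forall_eq, Finset.mem_inter]
      tauto

/-- Normalised clique density function. -/
def gg (X : Finset α) : (α → β) → ℝ := fun x => (tau G X)⁻¹ * cc G X x

lemma gg_dep (X : Finset α) : Dep X (gg G X) := by
  intro x x' h
  unfold gg
  rw [cc_dep G X x x' h]

lemma AA_gg (S X : Finset α) : AA S (gg G X) = fun x => (tau G X)⁻¹ * AA S (cc G X) x := by
  funext x
  unfold AA gg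
  rw [EE_smul]

lemma gg_nonneg (X : Finset α) (x : α → β) : 0 ≤ gg G X x :=
  mul_nonneg (inv_nonneg.2 (EE_nonneg (cc_nonneg G X))) (cc_nonneg G X x)

lemma EE_gg {X : Finset α} (h : 0 < tau G X) : EE (gg G X) = 1 := by
  unfold gg
  rw [EE_smul]
  exact inv_mul_cancel₀ h.ne'

lemma ent_step [Nonempty β] {d' : ℝ} (hd' : 0 < d')
    (hrat : ∀ S : Finset α, 0 < tau G S ∧ ∀ v ∉ S, d' ^ S.card * tau G S ≤ tau G (insert v S))
    {U X S : Finset α} (hS : S = X ∩ U) {f : (α → β) → ℝ} (hf0 : ∀ x, 0 ≤ f x) (hfU : Dep U f)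
    (hfS : AA S f = AA S (gg G X)) :
    ∃ f' : (α → β) → ℝ, (∀ x, 0 ≤ f' x) ∧ Dep (U ∪ X) f' ∧ AA U f' = f ∧ AA X f' = gg G X ∧
      (∀ x, f' x ≠ 0 → f x ≠ 0 ∧ cc G X x = 1) ∧
      EE (fun x => f' x * Real.log (f' x)) ≤ EE (fun x => f x * Real.log (f x)) -
        ((X.card.choose 2 : ℝ) - (S.card.choose 2 : ℝ)) * Real.log d' := by
  have hSX : S ⊆ X := hS ▸ Finset.inter_subset_left
  have hSU : S ⊆ U := hS ▸ Finset.inter_subset_right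
  have hX0 : 0 < tau G X := (hrat X).1
  have hS0 : 0 < tau G S := (hrat S).1
  set gS := AA S (gg G X) with hgS
  have hgSd : Dep S gS := AA_dep _ _
  have hfz : ∀ x, gS x = 0 → f x = 0 := by
    intro x hx
    rw [← hfS] at hx
    exact AA_zero S hf0 x hx
  have hgz : ∀ x, gS x = 0 → gg G X x = 0 := fun x hx => AA_zero S (gg_nonneg G X) x hx
  have hgS0 : ∀ x, 0 ≤ gS x := AA_nonneg S (gg_nonneg G X)
  let f' : (α → β) → ℝ := fun x => (f x * (gS x)⁻¹) * gg G X x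
  have hf'0 : ∀ x, 0 ≤ f' x := fun x =>
    mul_nonneg (mul_nonneg (hf0 x) (inv_nonneg.2 (hgS0 x))) (gg_nonneg G X x)
  have hU : AA U f' = f := by
    have hk : Dep U (fun x => f x * (gS x)⁻¹) := by
      intro x x' h
      show f x * (gS x)⁻¹ = f x' * (gS x')⁻¹
      rw [hfU x x' h, hgSd.mono hSU x x' h]
    show AA U (fun x => (f x * (gS x)⁻¹) * gg G X x) = f
    rw [AA_mul U hk, AA_inter U (gg_dep G X), Finset.inter_comm, ← hS, ← hgS]
    funext x
    by_cases hx : gS x = 0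
    · rw [hfz x hx]; simp
    · field_simp
  have hX : AA X f' = gg G X := by
    have hk : Dep X (fun x => (gS x)⁻¹ * gg G X x) := by
      intro x x' h
      show (gS x)⁻¹ * gg G X x = (gS x')⁻¹ * gg G X x'
      rw [gg_dep G X x x' h, hgSd.mono hSX x x' h]
    have e : f' = fun x => ((gS x)⁻¹ * gg G X x) * f x := by
      funext x; simp only [f']; ring
    rw [e, AA_mul X hk, AA_inter X hfU, ← hS, hfS]
    funext x
    by_cases hx : gS x = 0
    · rw [hgz x hx]; simp
    · field_simp
  have hS' : AA S f' = gS := by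
    have : S = S ∩ X := (Finset.inter_eq_left.2 hSX).symm
    rw [this, ← AA_AA, hX]
  have hne : ∀ x, f' x ≠ 0 → f x ≠ 0 ∧ gS x ≠ 0 ∧ gg G X x ≠ 0 := by
    intro x hx
    simp only [f'] at hx
    refine ⟨?_, ?_, ?_⟩ <;> · intro h; apply hx; simp [h]
  refine ⟨f', hf'0, ?_, hU, hX, ?_, ?_⟩
  · intro x x' h
    simp only [f']
    rw [hfU.mono Finset.subset_union_left x x' h,
      hgSd.mono (hSU.trans Finset.subset_union_left) x x' h,
      (gg_dep G X).mono Finset.subset_union_right x x' h]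
  · intro x hx
    refine ⟨(hne x hx).1, cc_ne_zero G ?_⟩
    intro h
    exact (hne x hx).2.2 (by simp [gg, h])
  · have hsplit : (fun x => f' x * Real.log (f' x)) = fun x => (f' x * Real.log (f x) +
        f' x * Real.log (gg G X x)) - f' x * Real.log (gS x) := by
      funext x
      by_cases hx : f' x = 0
      · simp [hx]
      · obtain ⟨h1, h2, h3⟩ := hne x hx
        have : Real.log (f' x) = Real.log (f x) - Real.log (gS x) + Real.log (gg G X x) := by
          simp only [f']
          rw [Real.log_mul (mul_ne_zero h1 (inv_ne_zero h2)) h3, Real.log_mul h1 (inv_ne_zero h2),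
            Real.log_inv]
          ring
        rw [this]; ring
    have hlog : ∀ {T : Finset α} {k : (α → β) → ℝ}, Dep T k → Dep T (fun x => Real.log (k x)) := by
      intro T k hk x x' h
      show Real.log (k x) = Real.log (k x')
      rw [hk x x' h]
    rw [hsplit, EE_sub, EE_add, EE_mul_AA U (hlog hfU), EE_mul_AA X (hlog (gg_dep G X)),
      EE_mul_AA S (hlog hgSd), hU, hX, hS']
    have e1 : EE (fun x => gg G X x * Real.log (gg G X x)) = - Real.log (tau G X) := by
      have : (fun x => gg G X x * Real.log (gg G X x)) =
          fun x => (- Real.log (tau G X)) * gg G X x := by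
        funext x
        by_cases hx : cc G X x = 0
        · simp [gg, hx]
        · simp [gg, cc_ne_zero G hx, mul_comm]
      rw [this, EE_smul, EE_gg G hX0, mul_one]
    have e2 : - Real.log (tau G S) ≤ EE (fun x => gS x * Real.log (gS x)) := by
      refine (gibbs hgS0 ?_ (cc_nonneg G S) ?_).2
      · rw [hgS, EE_AA, EE_gg G hX0]
      · intro x hx
        rw [hgS, AA_gg] at hx
        exact AA_cc_supp G hSX (right_ne_zero_of_mul hx)
    have e3 := tau_choose G hd' hrat hSX
    have e4 := Real.log_le_log (by positivity) e3
    rw [Real.log_mul (by positivity) hS0.ne', Real.log_mul (by positivity) hX0.ne', Real.log_pow,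
      Real.log_pow] at e4
    rw [e1]
    linarith

/-- The inductive invariant for a subtree of bags. -/
def Good {ι : Type} (H : SimpleGraph α) (bag : ι → Finset α) (d' : ℝ) (I : Finset ι) : Prop :=
  ∃ f : (α → β) → ℝ, (∀ x, 0 ≤ f x) ∧ Dep (I.biUnion bag) f ∧ EE f = 1 ∧
    (∀ i ∈ I, AA (bag i) f = gg G (bag i)) ∧
    (∀ x, f x ≠ 0 → ∀ i ∈ I, cc G (bag i) x = 1) ∧
    EE (fun x => f x * Real.log (f x)) ≤ - (MM H (I.biUnion bag) : ℝ) * Real.log d'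

lemma good_step [Nonempty β] {ι : Type} (H : SimpleGraph α) (bag : ι → Finset α) {d' : ℝ}
    (hd' : 0 < d') (hd1 : d' ≤ 1)
    (hrat : ∀ S : Finset α, 0 < tau G S ∧ ∀ v ∉ S, d' ^ S.card * tau G S ≤ tau G (insert v S))
    (hcl : ∀ i, ∀ a ∈ bag i, ∀ b ∈ bag i, a ≠ b → H.Adj a b)
    (hcard : ∀ i j, (bag i).card = (bag j).card)
    {I : Finset ι} (hI : Good G H bag d' I) (j : ι)
    (hj : I = ∅ ∨ ∃ i ∈ I, bag j ∩ I.biUnion bag ⊆ bag i) :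
    Good G H bag d' (insert j I) := by
  obtain ⟨f, hf0, hfU, hf1, hfA, hfs, hfe⟩ := hI
  have hfS : AA (bag j ∩ I.biUnion bag) f = AA (bag j ∩ I.biUnion bag) (gg G (bag j)) := by
    rcases hj with rfl | ⟨i, hi, hij⟩
    · rw [Finset.biUnion_empty, Finset.inter_empty]
      funext x
      simp only [AA, Finset.piecewise_empty]
      exact hf1.trans (EE_gg G (hrat _).1).symm
    · have e : bag j ∩ I.biUnion bag = (bag j ∩ I.biUnion bag) ∩ bag i :=
        (Finset.inter_eq_left.2 hij).symm
      rw [e, ← AA_AA, hfA i hi, ← e, AA_gg, AA_gg, tau_eq G (hcard i j),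
        AA_cc_eq G hij Finset.inter_subset_left (hcard i j)]
  obtain ⟨f', h0, hdep, hU, hX, hs, he⟩ := ent_step G hd' hrat rfl hf0 hfU hfS
  have hbi : (insert j I).biUnion bag = I.biUnion bag ∪ bag j := by
    rw [Finset.biUnion_insert, Finset.union_comm]
  refine ⟨f', h0, by rwa [hbi], ?_, ?_, ?_, ?_⟩
  · rw [← EE_AA (I.biUnion bag), hU, hf1]
  · intro i hi
    rcases Finset.mem_insert.1 hi with rfl | hi
    · exact hX
    · have e : bag i = bag i ∩ I.biUnion bag :=
        (Finset.inter_eq_left.2 (Finset.subset_biUnion_of_mem bag hi)).symm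
      conv_lhs => rw [e]
      rw [← AA_AA, hU, hfA i hi]
  · intro x hx i hi
    rcases Finset.mem_insert.1 hi with rfl | hi
    · exact (hs x hx).2
    · exact hfs x (hs x hx).1 i hi
  · refine he.trans ?_
    rw [hbi]
    have hM := MM_step H (I.biUnion bag) (bag j) (hcl j)
    have hM' : (MM H (I.biUnion bag) : ℝ) + ((bag j).card.choose 2 : ℝ) ≤
      MM H (I.biUnion bag ∪ bag j) + ((bag j ∩ I.biUnion bag).card.choose 2 : ℝ) := by
      exact_mod_cast hM
    have hl : Real.log d' ≤ 0 := Real.log_nonpos hd'.le hd1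
    nlinarith

lemma good_empty [Nonempty β] {ι : Type} (H : SimpleGraph α) (bag : ι → Finset α) (d' : ℝ) :
    Good G H bag d' ∅ := by
  refine ⟨fun _ => 1, fun _ => zero_le_one, fun _ _ _ => rfl, EE_const 1, by simp, by simp, ?_⟩
  have : MM H ((∅ : Finset ι).biUnion bag) = 0 := by
    unfold MM
    rw [Finset.card_eq_zero, Finset.filter_eq_empty_iff]
    intro e _
    induction e using Sym2.ind with
    | _ a b => exact fun h => absurd (h.2 a (by simp)) (by simp)
  rw [this]
  simp [EE_const]

lemma good_univ [Nonempty β] {ι : Type} [Fintype ι] (H : SimpleGraph α) (bag : ι → Finset α)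
    (T : SimpleGraph ι) (hT : T.Connected) {d' : ℝ}
    (hd' : 0 < d') (hd1 : d' ≤ 1)
    (hrat : ∀ S : Finset α, 0 < tau G S ∧ ∀ v ∉ S, d' ^ S.card * tau G S ≤ tau G (insert v S))
    (hcl : ∀ i, ∀ a ∈ bag i, ∀ b ∈ bag i, a ≠ b → H.Adj a b)
    (hcard : ∀ i j, (bag i).card = (bag j).card)
    (hpath : ∀ X Y Z : ι, ∀ p : T.Walk X Y, p.IsPath → Z ∈ p.support →
      ∀ v, v ∈ bag X → v ∈ bag Y → v ∈ bag Z) :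
    Good G H bag d' univ := by
  have key : ∀ n ≤ Fintype.card ι, ∃ I : Finset ι, I.card = n ∧ Good G H bag d' I ∧
      ∀ X ∈ I, ∀ Y ∈ I, ∃ p : T.Walk X Y, p.IsPath ∧ ∀ Z ∈ p.support, Z ∈ I := by
    intro n
    induction n with
    | zero => exact fun _ => ⟨∅, rfl, good_empty G H bag d', by simp⟩
    | succ n ih =>
      intro hn
      obtain ⟨I, hIn, hI, hIp⟩ := ih (by omega)
      rcases I.eq_empty_or_nonempty with rfl | ⟨i₀, hi₀⟩
      · obtain ⟨j⟩ := hT.nonempty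
        refine ⟨insert j ∅, ?_, good_step G H bag hd' hd1 hrat hcl hcard hI j (Or.inl rfl), ?_⟩
        · rw [Finset.card_insert_of_notMem (by simp), hIn]
        · intro X hX Y hY
          simp only [Finset.mem_insert, Finset.notMem_empty, or_false] at hX hY
          subst hX; subst hY
          exact ⟨SimpleGraph.Walk.nil, by simp, by simp⟩
      · obtain ⟨k, hk⟩ : ∃ k, k ∉ I := by
          by_contra hcon
          push Not at hcon
          have : I = univ := by ext; simp [hcon]
          rw [this, Finset.card_univ] at hIn
          omega
        obtain ⟨w⟩ := hT.preconnected i₀ k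
        obtain ⟨⟨⟨i, j⟩, hij⟩, _, hiI, hjI⟩ := w.exists_boundary_dart (I : Set ι) hi₀ hk
        simp only [Finset.mem_coe] at hiI hjI
        have hij : T.Adj i j := hij
        have hpj : ∀ Z ∈ I, ∃ p : T.Walk j Z, p.IsPath ∧ i ∈ p.support ∧
            ∀ Y ∈ p.support, Y ∈ insert j I := by
          intro Z hZ
          obtain ⟨p, hp, hps⟩ := hIp i hiI Z hZ
          refine ⟨SimpleGraph.Walk.cons hij.symm p, ?_, ?_, ?_⟩
          · rw [SimpleGraph.Walk.cons_isPath_iff]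
            exact ⟨hp, fun h => hjI (hps j h)⟩
          · simp
          · intro Y hY
            rw [SimpleGraph.Walk.support_cons, List.mem_cons] at hY
            rcases hY with rfl | hY
            · simp
            · exact Finset.mem_insert_of_mem (hps Y hY)
        refine ⟨insert j I, ?_, good_step G H bag hd' hd1 hrat hcl hcard hI j
          (Or.inr ⟨i, hiI, ?_⟩), ?_⟩
        · rw [Finset.card_insert_of_notMem hjI, hIn]
        · intro v hv
          rw [Finset.mem_inter, Finset.mem_biUnion] at hv
          obtain ⟨hvj, Z, hZ, hvZ⟩ := hv
          obtain ⟨p, hp, hpi, _⟩ := hpj Z hZ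
          exact hpath j Z i p hp hpi v hvj hvZ
        · intro X hX Y hY
          rcases Finset.mem_insert.1 hX with rfl | hX1 <;>
            rcases Finset.mem_insert.1 hY with rfl | hY1
          · exact ⟨SimpleGraph.Walk.nil, by simp, by simp⟩
          · obtain ⟨p, hp, _, hps⟩ := hpj Y hY1
            exact ⟨p, hp, hps⟩
          · obtain ⟨p, hp, _, hps⟩ := hpj X hX1
            exact ⟨p.reverse, hp.reverse, by simpa using hps⟩
          · obtain ⟨p, hp, hps⟩ := hIp X hX1 Y hY1
            exact ⟨p, hp, fun Z hZ => Finset.mem_insert_of_mem (hps Z hZ)⟩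
  obtain ⟨I, hIn, hI, _⟩ := key _ le_rfl
  rwa [(Finset.card_eq_iff_eq_univ I).1 hIn] at hI

lemma hom_bound [Nonempty β] {ι : Type} [Fintype ι] (H : SimpleGraph α) (bag : ι → Finset α)
    {d' : ℝ} (hd' : 0 < d') (hd1 : d' ≤ 1)
    (hedge : ∀ u v : α, H.Adj u v → ∃ X, u ∈ bag X ∧ v ∈ bag X)
    (hgood : Good G H bag d' univ) :
    d' ^ edgeCount H ≤ homDensity H G := by
  obtain ⟨f, hf0, _, hf1, _, hfs, hfe⟩ := hgood
  let b : (α → β) → ℝ := fun x => if ∀ u v, H.Adj u v → G.Adj (x u) (x v) then 1 else 0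
  have hb : ∀ x, 0 ≤ b x := by
    intro x; simp only [b]; split_ifs <;> norm_num
  obtain ⟨h1, h2⟩ := gibbs hf0 hf1 hb (by
    intro x hx
    simp only [b]
    rw [if_pos]
    intro u v huv
    obtain ⟨i, hu, hv⟩ := hedge u v huv
    exact (cc_one_iff G).1 (hfs x hx i (Finset.mem_univ _)) u hu v hv huv.ne)
  have h3 : EE b = homDensity H G := by
    unfold EE homDensity
    congr 1
    · simp only [b]
      rw [Finset.sum_boole]
      congr 1
      rw [← Fintype.card_subtype, ← Nat.card_eq_fintype_card]
      refine Nat.card_congr ⟨fun x => ⟨x.1, fun h => x.2 _ _ h⟩,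
        fun φ => ⟨φ, fun u v h => φ.map_rel h⟩, fun _ => rfl, fun _ => rfl⟩
    · simp
  have h4 : MM H (univ.biUnion bag) ≤ edgeCount H := by
    unfold MM edgeCount
    rw [Nat.card_eq_fintype_card, ← Fintype.card_subtype]
    exact Fintype.card_le_of_injective (fun e => (⟨e.1, e.2.1⟩ : H.edgeSet))
      (fun e e' h => Subtype.ext (by simpa using h))
  have hl : Real.log d' ≤ 0 := Real.log_nonpos hd'.le hd1
  have h4' : (MM H (univ.biUnion bag) : ℝ) ≤ edgeCount H := by exact_mod_cast h4
  rw [← h3, ← Real.log_le_log_iff (by positivity) h1, Real.log_pow]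
  nlinarith

lemma pow_perturb (d ε : ℝ) (h0 : 0 ≤ d - ε) (hε : 0 ≤ ε) (hd1 : d ≤ 1) (e : ℕ) :
    d ^ e - e * ε ≤ (d - ε) ^ e := by
  induction e with
  | zero => simp
  | succ e ih =>
    have h1 : (d - ε) ^ e ≤ 1 := pow_le_one₀ h0 (by linarith)
    have hd : 0 ≤ d := by linarith
    have h2 := mul_le_mul_of_nonneg_left ih hd
    have h3 : d * (e * ε) ≤ 1 * (e * ε) := by gcongr
    rw [pow_succ, pow_succ]
    push_cast
    nlinarith

end RTree

theorem stmt0 {α : Type*} [Fintype α] [DecidableEq α] (r : ℕ) (hr : 1 ≤ r) (H : SimpleGraph α)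
    (hH : JDecomposable H (⊤ : SimpleGraph (Fin (r + 1))))
    (η : ℝ) (hη : 0 < η) :
    ∃ (ρ : ℝ) (n₀ : ℕ), 0 < ρ ∧
      ∀ (d : ℝ), 0 < d → d ≤ 1 →
        ∀ (β : Type) [Fintype β] (G : SimpleGraph β),
          n₀ ≤ Fintype.card β → LocallyDense G ρ d →
            homDensity H G ≥ d ^ edgeCount H - η := by
  classical
  obtain ⟨ι, _, bag, T, ⟨hT, _, hedge, hpath⟩, hiso, _⟩ := hH
  have hcl : ∀ i, ∀ a ∈ bag i, ∀ b ∈ bag i, a ≠ b → H.Adj a b := by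
    intro i a ha b hb hab
    obtain ⟨e⟩ := hiso i
    have := e.map_adj_iff (v := ⟨a, ha⟩) (w := ⟨b, hb⟩)
    rw [SimpleGraph.top_adj] at this
    have h2 := this.1 (fun h => hab (by simpa using e.injective h))
    simpa using h2
  have hcard' : ∀ i, (bag i).card = r + 1 := by
    intro i
    obtain ⟨e⟩ := hiso i
    have := Fintype.card_congr e.toEquiv
    simpa using this
  have he1 : edgeCount H ≠ 0 := by
    obtain ⟨i⟩ := hT.connected.nonempty
    have : 1 < (bag i).card := by rw [hcard']; omega
    obtain ⟨a, ha, b, hb, hab⟩ := Finset.one_lt_card.1 this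
    unfold edgeCount
    have : Nonempty H.edgeSet := ⟨⟨s(a, b), hcl i a ha b hb hab⟩⟩
    exact Nat.card_pos.ne'
  set e := edgeCount H with he
  let θ : ℝ := min η 1
  have hθ0 : 0 < θ := lt_min hη one_pos
  have hθ1 : θ ≤ 1 := min_le_right _ _
  have hθη : θ ≤ η := min_le_left _ _
  let ε : ℝ := θ / (2 * (e + 1))
  have hε0 : 0 < ε := by positivity
  have hε2 : ε ≤ θ / 2 := by
    apply div_le_div_of_nonneg_left hθ0.le (by norm_num)
    have : (0:ℝ) ≤ e := by positivity
    linarith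
  have heε : e * ε ≤ θ := by
    have h1 : ε * (2 * (e + 1)) = θ := div_mul_cancel₀ _ (by positivity)
    have : (0:ℝ) ≤ e * ε := by positivity
    nlinarith
  let γ : ℝ := θ / 2
  have hγ0 : 0 < γ := by positivity
  let ρ : ℝ := ε * γ ^ Fintype.card α
  refine ⟨ρ, 1, by positivity, ?_⟩
  intro d hd0 hd1 β _ G hn hG
  have : Nonempty β := Fintype.card_pos_iff.1 (by omega)
  by_cases hdθ : d ≤ θ
  · have h1 : d ^ e ≤ d := pow_le_of_le_one hd0.le hd1 he1
    have h2 : 0 ≤ homDensity H G := by unfold homDensity; positivity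
    linarith
  · push Not at hdθ
    have hγd : γ ≤ d - ε := by simp only [γ]; linarith
    have hρ : ρ ^ 2 ≤ ε * (γ ^ Fintype.card α) ^ 2 := by
      simp only [ρ]
      rw [mul_pow]
      gcongr
      nlinarith
    have hd' : 0 < d - ε := by linarith
    have hrat : ∀ S : Finset α, 0 < tau G S ∧
        ∀ v ∉ S, (d - ε) ^ S.card * tau G S ≤ tau G (insert v S) := by
      intro S
      have := tau_ratio G hγ0 hε0 hγd hd1 (by positivity) hρ hG S.card S rfl
      refine ⟨this.1, fun v hv => ?_⟩
      convert this.2 v hv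
    have hgood : Good G H bag (d - ε) Finset.univ := by
      apply good_univ G H bag T hT.connected hd' (by linarith) _ hcl
      · intro i j; rw [hcard', hcard']
      · intro X Y Z p hp hZ v hX hY
        exact hpath X Y Z p hp hZ (Finset.mem_inter.2 ⟨hX, hY⟩)
      · intro S
        refine ⟨(hrat S).1, fun v hv => ?_⟩
        convert (hrat S).2 v hv
    have := hom_bound G H bag hd' (by linarith) hedge hgood
    have h2 := pow_perturb d ε hd'.le hε0.le hd1 e
    linarith
end

section
/- Let r₁, r₂, …, r_ℓ be non-negative integers and let H be a K(r₁,r₂,…,r_ℓ)-decomposable graph. Then for every η > 0 there exists ρ > 0 and n₀ such that for every d ∈ (0,1] and every (ρ,d)-dense graph G with at least n₀ vertices, t_H(G) ≥ d^{|E(H)|} − η. -/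
open MeasureTheory

namespace LDense

set_option linter.unusedSectionVars false

open Finset
open scoped BigOperators

variable {α β : Type*} [Fintype α] [DecidableEq α] [Fintype β] [Nonempty β]

/-- Averaging over coordinates outside `S`. -/
noncomputable def cond (S : Finset α) (f : (α → β) → ℝ) (φ : α → β) : ℝ :=
  𝔼 ψ : α → β, f (S.piecewise φ ψ)

theorem av_cond (S : Finset α) (f : (α → β) → ℝ) :
    𝔼 φ, cond S f φ = 𝔼 φ, f φ := by
  have h1 : 𝔼 φ, cond S f φ = 𝔼 p : (α → β) × (α → β), f (S.piecewise p.1 p.2) := by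
    rw [← univ_product_univ, expect_product]; rfl
  have h2 : 𝔼 p : (α → β) × (α → β), f p.1 = 𝔼 φ, f φ := by
    rw [← univ_product_univ, expect_product]
    simp
  rw [h1, ← h2]
  have inv : Function.Involutive (fun p : (α → β) × (α → β) =>
      (S.piecewise p.1 p.2, S.piecewise p.2 p.1)) := by
    rintro ⟨a, b⟩
    ext x <;> by_cases hx : x ∈ S <;> simp [hx]
  exact Fintype.expect_equiv inv.toPerm _ _ (fun p => rfl)

theorem cond_cond {Z V : Finset α} (h : Z ⊆ V) (f : (α → β) → ℝ) (φ : α → β) :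
    cond Z (cond V f) φ = cond Z f φ := by
  have := av_cond V (fun ψ => f (Z.piecewise φ ψ))
  unfold cond at this ⊢
  rw [← this]
  refine expect_congr rfl fun ψ _ => expect_congr rfl fun χ _ => ?_
  congr 1
  ext x
  by_cases hz : x ∈ Z
  · simp [hz, h hz]
  · by_cases hv : x ∈ V <;> simp [hz, hv]

theorem cond_mul_left {S : Finset α} {f g : (α → β) → ℝ} (φ : α → β)
    (hf : ∀ φ ψ, (∀ u ∈ S, φ u = ψ u) → f φ = f ψ) :
    cond S (fun φ => f φ * g φ) φ = f φ * cond S g φ := by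
  unfold cond
  rw [mul_expect]
  refine expect_congr rfl fun ψ _ => ?_
  show f (S.piecewise φ ψ) * g (S.piecewise φ ψ) = _
  rw [hf (S.piecewise φ ψ) φ (fun u hu => by simp [hu])]

theorem cond_dep {S : Finset α} {f : (α → β) → ℝ} (φ ψ : α → β)
    (h : ∀ u ∈ S, φ u = ψ u) : cond S f φ = cond S f ψ := by
  unfold cond
  refine expect_congr rfl fun χ _ => ?_
  congr 1
  ext x
  by_cases hx : x ∈ S <;> simp [hx, h]

/-- if `f` depends only on `V`, and `V ∩ Y = S ∩ V`-ish then the two averages agree. -/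
theorem cond_inter {V Y S : Finset α} {f : (α → β) → ℝ}
    (hf : ∀ φ ψ, (∀ u ∈ V, φ u = ψ u) → f φ = f ψ)
    (h : ∀ u ∈ V, u ∈ Y ↔ u ∈ S) (φ : α → β) : cond Y f φ = cond S f φ := by
  unfold cond
  refine expect_congr rfl fun χ _ => hf _ _ fun u hu => ?_
  by_cases hx : u ∈ S <;> simp [hx, h u hu]

theorem cond_eq_zero {S : Finset α} {f : (α → β) → ℝ} (hf : ∀ φ, 0 ≤ f φ) {φ : α → β}
    (h : cond S f φ = 0) : f φ = 0 := by
  unfold cond at h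
  rw [expect_eq_zero_iff_of_nonneg (fun i _ => hf _)] at h
  have h1 := h φ (mem_univ _)
  have h2 : S.piecewise φ φ = φ := by
    ext x; by_cases hx : x ∈ S <;> simp [hx]
  rwa [h2] at h1

theorem cond_nonneg {S : Finset α} {f : (α → β) → ℝ} (hf : ∀ φ, 0 ≤ f φ) (φ : α → β) :
    0 ≤ cond S f φ := expect_nonneg fun _ _ => hf _

theorem av_update (u : α) (f : (α → β) → ℝ) :
    𝔼 φ, f φ = 𝔼 φ, 𝔼 y, f (Function.update φ u y) := by
  have h1 : 𝔼 φ, 𝔼 y, f (Function.update φ u y)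
      = 𝔼 p : (α → β) × β, f (Function.update p.1 u p.2) := by
    rw [← univ_product_univ, expect_product]
  have h2 : 𝔼 p : (α → β) × β, f p.1 = 𝔼 φ, f φ := by
    rw [← univ_product_univ, expect_product]
    simp
  rw [h1, ← h2]
  have inv : Function.Involutive (fun p : (α → β) × β =>
      (Function.update p.1 u p.2, p.1 u)) := by
    rintro ⟨a, b⟩
    simp
  exact (Fintype.expect_equiv inv.toPerm _ _ (fun p => rfl)).symm

theorem av_prod (P : Finset α) (F : (α → β) → ℝ) (g : (α → β) → β → ℝ)
    (hF : ∀ φ ψ, (∀ u ∉ P, φ u = ψ u) → F φ = F ψ)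
    (hg : ∀ φ ψ, (∀ u ∉ P, φ u = ψ u) → g φ = g ψ) :
    𝔼 φ, F φ * ∏ u ∈ P, g φ (φ u) = 𝔼 φ, F φ * (𝔼 y, g φ y) ^ #P := by
  induction P using Finset.induction_on generalizing F with
  | empty => simp
  | insert a P ha ih =>
    have e1 : ∀ φ : α → β, F φ * ∏ u ∈ insert a P, g φ (φ u)
        = (F φ * g φ (φ a)) * ∏ u ∈ P, g φ (φ u) := by
      intro φ; rw [prod_insert ha]; ring
    simp_rw [e1]
    rw [ih (fun φ => F φ * g φ (φ a))]
    · rw [av_update a]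
      refine expect_congr rfl fun φ _ => ?_
      have hu : ∀ y, ∀ u ∉ insert a P, Function.update φ a y u = φ u := by
        intro y u hu
        rw [Function.update_of_ne]
        rintro rfl; simp at hu
      simp_rw [fun y => hF _ _ (hu y), fun y => hg _ _ (hu y)]
      rw [card_insert_of_notMem ha]
      simp only [Function.update_self]
      rw [← expect_mul, ← mul_expect]
      ring
    · intro φ ψ h
      have h' : ∀ u ∉ insert a P, φ u = ψ u := fun u hu => h u (fun hh => hu (mem_insert_of_mem hh))
      show F φ * g φ (φ a) = F ψ * g ψ (ψ a)
      rw [hF _ _ h', hg _ _ h', h a ha]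
    · intro φ ψ h
      have h' : ∀ u ∉ insert a P, φ u = ψ u := fun u hu => h u (fun hh => hu (mem_insert_of_mem hh))
      exact hg _ _ h'

/-- log-convexity of moments -/
theorem moment {Ω : Type*} [Fintype Ω] (h c : Ω → ℝ) (hh : ∀ x, 0 ≤ h x)
    (hc : ∀ x, 0 ≤ c x) (s : ℕ) :
    (𝔼 x, h x * c x) * (𝔼 x, h x * c x ^ s) ≤ (𝔼 x, h x) * (𝔼 x, h x * c x ^ (s + 1)) := by
  have h0 : 0 ≤ 𝔼 x, 𝔼 y, h x * h y * ((c x - c y) * (c x ^ s - c y ^ s)) := by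
    refine expect_nonneg fun x _ => expect_nonneg fun y _ => ?_
    refine mul_nonneg (mul_nonneg (hh x) (hh y)) ?_
    rcases le_total (c x) (c y) with hxy | hxy
    · exact mul_nonneg_of_nonpos_of_nonpos (by linarith)
        (by linarith [pow_le_pow_left₀ (hc x) hxy s])
    · exact mul_nonneg (by linarith) (by linarith [pow_le_pow_left₀ (hc y) hxy s])
  have h1 : 𝔼 x, 𝔼 y, h x * h y * ((c x - c y) * (c x ^ s - c y ^ s))
      = 2 * ((𝔼 x, h x) * (𝔼 x, h x * c x ^ (s + 1)))
        - 2 * ((𝔼 x, h x * c x) * (𝔼 x, h x * c x ^ s)) := by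
    have e : ∀ x y, h x * h y * ((c x - c y) * (c x ^ s - c y ^ s))
        = h x * c x ^ (s + 1) * h y + h x * (h y * c y ^ (s + 1))
          - (h x * c x) * (h y * c y ^ s) - (h x * c x ^ s) * (h y * c y) := by
      intro x y; ring
    simp_rw [e, expect_sub_distrib, expect_add_distrib, ← mul_expect, ← expect_mul]
    ring
  linarith

/-- log-sum inequality -/
theorem logsum {Ω : Type*} [Fintype Ω] (m h : Ω → ℝ) (hm : ∀ x, 0 ≤ m x)
    (hh : ∀ x, h x = 0 ∨ h x = 1) (hmh : ∀ x, h x = 0 → m x = 0)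
    (ha : 0 < 𝔼 x, m x) (hb : 0 < 𝔼 x, h x) :
    (𝔼 x, m x) * (Real.log (𝔼 x, m x) - Real.log (𝔼 x, h x)) ≤ 𝔼 x, m x * Real.log (m x) := by
  set a := 𝔼 x, m x
  set b := 𝔼 x, h x
  have key : ∀ x, m x * Real.log (a / b) + m x - (a / b) * h x ≤ m x * Real.log (m x) := by
    intro x
    rcases hh x with h0 | h1
    · simp [h0, hmh x h0]
    · rw [h1]
      rcases (hm x).eq_or_lt with h0 | h0
      · rw [← h0]; simp; positivity
      · have := Real.add_one_le_exp (Real.log (a / b) - Real.log (m x))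
        rw [Real.exp_sub, Real.exp_log (by positivity), Real.exp_log h0, le_div_iff₀ h0] at this
        nlinarith
  have := expect_le_expect (s := univ) fun x _ => key x
  rw [expect_sub_distrib, expect_add_distrib, ← expect_mul, ← mul_expect] at this
  have e : a / b * b = a := by field_simp
  change a * _ + a - a / b * b ≤ _ at this
  rw [e, Real.log_div ha.ne' hb.ne'] at this
  linarith

theorem tangent {z a : ℝ} (hz : 0 ≤ z) (ha : 0 < a) (s : ℕ) :
    a ^ s + s * a ^ s * (z / a - 1) ≤ z ^ s := by
  have := one_add_mul_le_pow (a := z / a - 1) (by have := div_nonneg hz ha.le; linarith) s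
  have h2 := mul_le_mul_of_nonneg_left this (pow_nonneg ha.le s)
  rw [← mul_pow] at h2
  have e : a * (1 + (z / a - 1)) = z := by field_simp; ring
  rw [e] at h2
  linarith

open Classical in
/-- indicator that `φ` is a homomorphism on `X` -/
noncomputable def hm (H : SimpleGraph α) (G : SimpleGraph β) (X : Finset α) (φ : α → β) : ℝ :=
  if ∀ u ∈ X, ∀ v ∈ X, H.Adj u v → G.Adj (φ u) (φ v) then 1 else 0

open Classical in
/-- real adjacency matrix -/
noncomputable def A (G : SimpleGraph β) (x y : β) : ℝ := if G.Adj x y then 1 else 0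

/-- indicator of common neighbourhood -/
noncomputable def cn (G : SimpleGraph β) (B : Finset α) (φ : α → β) (y : β) : ℝ :=
  ∏ b ∈ B, A G (φ b) y

/-- density of homomorphisms from the graph induced on `X` -/
noncomputable def tt (H : SimpleGraph α) (G : SimpleGraph β) (X : Finset α) : ℝ :=
  𝔼 φ, hm H G X φ

/-- `X` induces a complete multipartite graph -/
def CM (H : SimpleGraph α) (X : Finset α) : Prop :=
  ∀ u ∈ X, ∀ v ∈ X, ∀ w ∈ X, ¬ H.Adj u v → ¬ H.Adj v w → ¬ H.Adj u w

theorem CM.mono {H : SimpleGraph α} {X Y : Finset α} (h : CM H X) (hY : Y ⊆ X) : CM H Y :=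
  fun u hu v hv w hw => h u (hY hu) v (hY hv) w (hY hw)

variable (H : SimpleGraph α) (G : SimpleGraph β)

theorem hm_01 (X : Finset α) (φ : α → β) : hm H G X φ = 0 ∨ hm H G X φ = 1 := by
  unfold hm; split_ifs <;> simp

theorem hm_nonneg (X : Finset α) (φ : α → β) : 0 ≤ hm H G X φ := by
  rcases hm_01 H G X φ with h | h <;> simp [h]

theorem hm_eq_zero {X Y : Finset α} (h : Y ⊆ X) {φ : α → β} (h0 : hm H G Y φ = 0) :
    hm H G X φ = 0 := by
  unfold hm at *
  rw [if_neg]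
  intro hx
  rw [if_pos] at h0
  · norm_num at h0
  · exact fun u hu v hv => hx u (h hu) v (h hv)

theorem hm_dep (X : Finset α) (φ ψ : α → β) (h : ∀ u ∈ X, φ u = ψ u) :
    hm H G X φ = hm H G X ψ := by
  unfold hm
  congr 1
  rw [eq_iff_iff]
  refine forall₂_congr fun u hu => forall₂_congr fun v hv => ?_
  rw [h u hu, h v hv]

theorem A_nonneg (x y : β) : 0 ≤ A G x y := by unfold A; split_ifs <;> simp

theorem cn_01 (B : Finset α) (φ : α → β) (y : β) : cn G B φ y = 0 ∨ cn G B φ y = 1 := by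
  classical
  unfold cn A
  rw [prod_boole]
  split_ifs <;> simp

theorem cn_nonneg (X : Finset α) (φ : α → β) (y : β) : 0 ≤ cn G X φ y := by
  rcases cn_01 G X φ y with h | h <;> simp [h]

theorem hm_union_aux {B P : Finset α} (hP : ∀ u ∈ P, ∀ v ∈ P, ¬ H.Adj u v)
    (hBP : ∀ b ∈ B, ∀ u ∈ P, H.Adj b u) (φ : α → β) :
    (∀ u ∈ B ∪ P, ∀ v ∈ B ∪ P, H.Adj u v → G.Adj (φ u) (φ v)) ↔
      (∀ u ∈ B, ∀ v ∈ B, H.Adj u v → G.Adj (φ u) (φ v)) ∧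
      (∀ u ∈ P, ∀ b ∈ B, G.Adj (φ b) (φ u)) := by
  constructor
  · intro h
    exact ⟨fun u hu v hv => h u (mem_union_left _ hu) v (mem_union_left _ hv),
      fun u hu b hb => h b (mem_union_left _ hb) u (mem_union_right _ hu) (hBP b hb u hu)⟩
  · rintro ⟨h1, h2⟩ u hu v hv huv
    rcases mem_union.1 hu with hu | hu <;> rcases mem_union.1 hv with hv | hv
    · exact h1 u hu v hv huv
    · exact h2 v hv u hu
    · exact (h2 u hu v hv).symm
    · exact absurd huv (hP u hu v hv)

theorem hm_union {B P : Finset α} (hP : ∀ u ∈ P, ∀ v ∈ P, ¬ H.Adj u v)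
    (hBP : ∀ b ∈ B, ∀ u ∈ P, H.Adj b u) (φ : α → β) :
    hm H G (B ∪ P) φ = hm H G B φ * ∏ u ∈ P, cn G B φ (φ u) := by
  classical
  have key : (∀ u ∈ B ∪ P, ∀ v ∈ B ∪ P, H.Adj u v → G.Adj (φ u) (φ v)) ↔
      (∀ u ∈ B, ∀ v ∈ B, H.Adj u v → G.Adj (φ u) (φ v)) ∧
      (∀ u ∈ P, ∀ b ∈ B, G.Adj (φ b) (φ u)) := hm_union_aux H G hP hBP φ
  have e : ∏ u ∈ P, cn G B φ (φ u)
      = if (∀ u ∈ P, ∀ b ∈ B, G.Adj (φ b) (φ u)) then 1 else 0 := by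
    have e' : ∀ u ∈ P, cn G B φ (φ u)
        = if (∀ b ∈ B, G.Adj (φ b) (φ u)) then 1 else 0 := by
      intro u _
      unfold cn A
      rw [prod_boole]
      congr
    rw [prod_congr rfl e', prod_boole]
    congr
  rw [e]
  unfold hm
  by_cases h1 : (∀ u ∈ B, ∀ v ∈ B, H.Adj u v → G.Adj (φ u) (φ v))
  · by_cases h2 : (∀ u ∈ P, ∀ b ∈ B, G.Adj (φ b) (φ u))
    · rw [if_pos (key.2 ⟨h1, h2⟩), if_pos h1, if_pos h2, one_mul]
    · rw [if_neg (fun h => h2 (key.1 h).2), if_neg h2, mul_zero]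
  · rw [if_neg (fun h => h1 (key.1 h).1), if_neg h1, zero_mul]

theorem expand {B P : Finset α} (hP : ∀ u ∈ P, ∀ v ∈ P, ¬ H.Adj u v)
    (hBP : ∀ b ∈ B, ∀ u ∈ P, H.Adj b u) (f : β → ℝ) :
    𝔼 φ : α → β, hm H G (B ∪ P) φ * ∏ u ∈ B ∪ P, f (φ u)
      = 𝔼 φ : α → β, (hm H G B φ * ∏ u ∈ B, f (φ u)) * (𝔼 y, cn G B φ y * f y) ^ #P := by
  have hd : Disjoint B P := by
    rw [disjoint_left]
    intro u hu hu'
    exact H.loopless.irrefl u (hBP u hu u hu')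
  have hnot : ∀ b ∈ B, b ∉ P := fun b hb => disjoint_left.1 hd hb
  rw [← av_prod P (fun φ => hm H G B φ * ∏ u ∈ B, f (φ u)) (fun φ y => cn G B φ y * f y)]
  · refine expect_congr rfl fun φ _ => ?_
    rw [hm_union H G hP hBP, prod_union hd, prod_mul_distrib]
    ring
  · intro φ ψ h
    have h' : ∀ b ∈ B, φ b = ψ b := fun b hb => h b (hnot b hb)
    show hm H G B φ * _ = hm H G B ψ * _
    rw [hm_dep H G B φ ψ h', prod_congr rfl fun b hb => by rw [h' b hb]]
  · intro φ ψ h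
    have h' : ∀ b ∈ B, φ b = ψ b := fun b hb => h b (hnot b hb)
    ext y
    show cn G B φ y * _ = cn G B ψ y * _
    unfold cn
    rw [prod_congr rfl fun b hb => by rw [h' b hb]]

/-- density of the common neighbourhood -/
noncomputable def cc (B : Finset α) (φ : α → β) : ℝ := 𝔼 y, cn G B φ y

theorem cc_nonneg (X : Finset α) (φ : α → β) : 0 ≤ cc G X φ :=
  expect_nonneg fun _ _ => cn_nonneg _ _ _ _

theorem expand_one {B P : Finset α} (hP : ∀ u ∈ P, ∀ v ∈ P, ¬ H.Adj u v)
    (hBP : ∀ b ∈ B, ∀ u ∈ P, H.Adj b u) :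
    tt H G (B ∪ P) = 𝔼 φ : α → β, hm H G B φ * cc G B φ ^ #P := by
  have := expand H G hP hBP (fun _ => 1)
  simpa [tt, cc] using this

theorem expand_apex {B P : Finset α} (hP : ∀ u ∈ P, ∀ v ∈ P, ¬ H.Adj u v)
    (hBP : ∀ b ∈ B, ∀ u ∈ P, H.Adj b u) :
    𝔼 φ : α → β, hm H G (B ∪ P) φ * cc G (B ∪ P) φ
      = 𝔼 φ : α → β, hm H G B φ *
        𝔼 x, cn G B φ x * (𝔼 y, A G x y * cn G B φ y) ^ #P := by
  have hs : ∀ x y, A G x y = A G y x := by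
    intro x y
    by_cases h : G.Adj x y
    · simp [A, h, h.symm]
    · simp [A, h, mt SimpleGraph.Adj.symm h]
  have e1 : 𝔼 φ : α → β, hm H G (B ∪ P) φ * cc G (B ∪ P) φ
      = 𝔼 x, 𝔼 φ : α → β, hm H G (B ∪ P) φ * ∏ u ∈ B ∪ P, A G (φ u) x := by
    rw [expect_comm]
    refine expect_congr rfl fun φ _ => ?_
    rw [← mul_expect]; rfl
  rw [e1]
  simp_rw [fun x => expand H G hP hBP (fun y => A G y x)]
  rw [expect_comm]
  refine expect_congr rfl fun φ _ => ?_
  rw [mul_expect]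
  refine expect_congr rfl fun x _ => ?_
  rw [mul_assoc]
  congr 2
  congr 1
  refine expect_congr rfl fun y _ => ?_
  rw [hs x y]; ring

variable {G} in
theorem dense_expect {ρ d : ℝ} (hG : LocallyDense G ρ d) (C : β → ℝ)
    (hC : ∀ x, C x = 0 ∨ C x = 1) (hρ : ρ ≤ 𝔼 x, C x) :
    d * (𝔼 x, C x) ^ 2 ≤ 𝔼 x, C x * 𝔼 y, A G x y * C y := by
  classical
  set X : Finset β := univ.filter (fun x => C x = 1) with hX
  have hCX : ∀ x, C x = if x ∈ X then 1 else 0 := by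
    intro x
    rcases hC x with h | h <;> simp [hX, h]
  have hn : (0 : ℝ) < Fintype.card β := by exact_mod_cast Fintype.card_pos
  have hsum : ∑ x, C x = #X := by
    simp_rw [hCX]; simp
  have hE : 𝔼 x, C x = #X / Fintype.card β := by
    rw [Fintype.expect_eq_sum_div_card, hsum]
  rw [hE] at hρ
  have h1 := hG X (by rwa [le_div_iff₀ hn] at hρ)
  let G' : SimpleGraph β :=
    { Adj := fun x y => G.Adj x y ∧ x ∈ X ∧ y ∈ X
      symm := ⟨fun x y h => ⟨h.1.symm, h.2.2, h.2.1⟩⟩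
      loopless := ⟨fun x h => G.loopless.irrefl x h.1⟩ }
  have h2 : Nat.card {e : Sym2 β // e ∈ G.edgeSet ∧ ∀ v ∈ e, v ∈ X} = #G'.edgeFinset := by
    rw [Nat.card_eq_fintype_card, Fintype.card_subtype]
    congr 1
    ext e
    induction e using Sym2.ind with
    | _ x y => simp [G']
  have h3 := G'.two_mul_card_edgeFinset
  have h4 : ((#(univ.filter fun p : β × β => G'.Adj p.1 p.2) : ℕ) : ℝ)
      = ∑ x, C x * ∑ y, A G x y * C y := by
    rw [card_filter]
    push_cast
    rw [← univ_product_univ, sum_product]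
    refine sum_congr rfl fun x _ => ?_
    rw [mul_sum]
    refine sum_congr rfl fun y _ => ?_
    rw [hCX x, hCX y]
    unfold A
    by_cases h1 : G.Adj x y <;> by_cases h2 : x ∈ X <;> by_cases h3 : y ∈ X <;>
      simp [G', h1, h2, h3]
  have h5 : 𝔼 x, C x * 𝔼 y, A G x y * C y
      = (∑ x, C x * ∑ y, A G x y * C y) / (Fintype.card β : ℝ) ^ 2 := by
    rw [Fintype.expect_eq_sum_div_card]
    simp_rw [Fintype.expect_eq_sum_div_card, ← mul_div_assoc]
    rw [← sum_div, div_div, sq]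
  rw [h5, hE, ← h4]
  rw [h2] at h1
  have h6 : (2 : ℝ) * #G'.edgeFinset = #(univ.filter fun p : β × β => G'.Adj p.1 p.2) := by
    exact_mod_cast h3
  rw [← h6, div_pow, ← mul_div_assoc]
  refine div_le_div_of_nonneg_right ?_ (by positivity)
  linarith

variable {G} in
theorem star {ρ d : ℝ} (hρ0 : 0 < ρ) (hd : 0 < d) (hG : LocallyDense G ρ d) (C : β → ℝ)
    (hC : ∀ x, C x = 0 ∨ C x = 1) (s : ℕ) :
    d ^ s * (𝔼 x, C x) ^ s * ((𝔼 x, C x) - ρ) ≤ 𝔼 x, C x * (𝔼 y, A G x y * C y) ^ s := by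
  have hC0 : ∀ x, 0 ≤ C x := fun x => by rcases hC x with h | h <;> simp [h]
  have hz0 : ∀ x, 0 ≤ 𝔼 y, A G x y * C y :=
    fun x => expect_nonneg fun y _ => mul_nonneg (A_nonneg G x y) (hC0 y)
  have hc0 : 0 ≤ 𝔼 x, C x := expect_nonneg fun y _ => hC0 y
  rcases lt_or_ge (𝔼 x, C x) ρ with h | h
  · refine le_trans (mul_nonpos_of_nonneg_of_nonpos (by positivity) (by linarith)) ?_
    exact expect_nonneg fun x _ => mul_nonneg (hC0 x) (pow_nonneg (hz0 x) _)
  · have hD := dense_expect hG C hC h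
    set c := 𝔼 x, C x with hc
    have hcpos : 0 < c := lt_of_lt_of_le hρ0 h
    have ha : 0 < d * c := by positivity
    have key : ∀ x, (d * c) ^ s * C x
        + s * (d * c) ^ s * ((C x * 𝔼 y, A G x y * C y) / (d * c) - C x)
        ≤ C x * (𝔼 y, A G x y * C y) ^ s := by
      intro x
      have := mul_le_mul_of_nonneg_left (tangent (hz0 x) ha s) (hC0 x)
      refine le_trans (le_of_eq ?_) this
      ring
    have h2 := expect_le_expect (s := univ) fun x _ => key x
    rw [expect_add_distrib, ← mul_expect, ← mul_expect, expect_sub_distrib, ← expect_div,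
      ← hc] at h2
    have h3 : 0 ≤ (𝔼 x, C x * 𝔼 y, A G x y * C y) / (d * c) - c := by
      rw [sub_nonneg, le_div_iff₀ ha]
      linarith
    have h4 : 0 ≤ s * (d * c) ^ s * ((𝔼 x, C x * 𝔼 y, A G x y * C y) / (d * c) - c) := by
      positivity
    have h5 : 0 ≤ (d * c) ^ s * ρ := by positivity
    rw [← mul_pow, mul_sub]
    linarith

variable {H} in
theorem split_part {X : Finset α} (hX : CM H X) {v : α} (hv : v ∈ X) [DecidableRel H.Adj] :
    (∀ a ∈ X.filter (fun u => ¬ H.Adj v u), ∀ b ∈ X.filter (fun u => ¬ H.Adj v u), ¬ H.Adj a b) ∧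
    (∀ b ∈ X.filter (fun u => H.Adj v u), ∀ a ∈ X.filter (fun u => ¬ H.Adj v u), H.Adj b a) := by
  constructor
  · intro a ha b hb
    rw [mem_filter] at ha hb
    exact hX a ha.1 v hv b hb.1 (fun h => ha.2 h.symm) hb.2
  · intro b hb a ha
    rw [mem_filter] at ha hb
    by_contra hh
    exact hX v hv a ha.1 b hb.1 ha.2 (fun h => hh h.symm) hb.2

theorem ratio {B : Finset α} (q : ℝ) (h : q * tt H G B ≤ 𝔼 φ : α → β, hm H G B φ * cc G B φ)
    (s : ℕ) : q * 𝔼 φ : α → β, hm H G B φ * cc G B φ ^ s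
      ≤ 𝔼 φ : α → β, hm H G B φ * cc G B φ ^ (s + 1) := by
  have h0 : 0 ≤ tt H G B := expect_nonneg fun _ _ => hm_nonneg _ _ _ _
  rcases h0.eq_or_lt with h1 | h1
  · have : ∀ φ : α → β, hm H G B φ = 0 := by
      intro φ
      unfold tt at h1
      exact (expect_eq_zero_iff_of_nonneg (fun i _ => hm_nonneg H G B i)).1 h1.symm φ (mem_univ _)
    simp [this]
  · have h2 := moment (fun φ : α → β => hm H G B φ) (fun φ => cc G B φ)
      (hm_nonneg H G B) (cc_nonneg G B) s
    have h3 : 0 ≤ 𝔼 φ : α → β, hm H G B φ * cc G B φ ^ s :=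
      expect_nonneg fun φ _ => mul_nonneg (hm_nonneg _ _ _ _) (pow_nonneg (cc_nonneg _ _ _) _)
    change _ ≤ tt H G B * _ at h2
    have h4 := mul_le_mul_of_nonneg_right h h3
    refine le_of_mul_le_mul_left ?_ h1
    linarith

variable {G} in
theorem apex {ρ d : ℝ} (hρ0 : 0 < ρ) (hd : 0 < d) (hd1 : d ≤ 1) (hG : LocallyDense G ρ d)
    (n : ℕ) : ∀ B : Finset α, #B = n → CM H B →
    (d ^ #B - #B * ρ) * tt H G B ≤ 𝔼 φ : α → β, hm H G B φ * cc G B φ := by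
  classical
  induction n using Nat.strong_induction_on with
  | _ n ih =>
  intro X hn hX
  rcases X.eq_empty_or_nonempty with rfl | ⟨v, hv⟩
  · simp [tt, cc, cn]
  · obtain ⟨hP, hBP⟩ := split_part hX hv
    set B := X.filter (fun u => H.Adj v u) with hB
    set P := X.filter (fun u => ¬ H.Adj v u) with hPdef
    have hXB : X = B ∪ P := (filter_union_filter_not_eq _ _).symm
    have hd' : Disjoint B P := disjoint_filter_filter_not _ _ _
    have hcard : #X = #B + #P := by rw [← card_union_of_disjoint hd', ← hXB]
    have hPpos : 0 < #P := card_pos.2 ⟨v, by simp [hPdef, hv]⟩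
    have hih := ih #B (by omega) B rfl (hX.mono (filter_subset _ _))
    have hr := ratio H G _ hih #P
    have e1 := expand_one H G hP hBP
    have e2 := expand_apex H G hP hBP
    rw [hcard, hXB, e1, e2]
    have h3 : 0 ≤ 𝔼 φ : α → β, hm H G B φ * cc G B φ ^ #P :=
      expect_nonneg fun φ _ => mul_nonneg (hm_nonneg _ _ _ _) (pow_nonneg (cc_nonneg _ _ _) _)
    set T := 𝔼 φ : α → β, hm H G B φ * cc G B φ ^ #P with hT
    have h4 : d ^ #P * ((𝔼 φ : α → β, hm H G B φ * cc G B φ ^ (#P + 1)) - ρ * T) ≤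
        𝔼 φ : α → β, hm H G B φ * 𝔼 x, cn G B φ x * (𝔼 y, A G x y * cn G B φ y) ^ #P := by
      rw [hT, mul_expect, ← expect_sub_distrib, mul_expect]
      refine expect_le_expect fun φ _ => ?_
      have := mul_le_mul_of_nonneg_left (star hρ0 hd hG (cn G B φ) (cn_01 G B φ) #P)
        (hm_nonneg H G B φ)
      refine le_trans (le_of_eq ?_) this
      change _ = hm H G B φ * (d ^ #P * cc G B φ ^ #P * (cc G B φ - ρ))
      ring
    refine le_trans ?_ h4
    have h5 : d ^ #P * ((d ^ #B - #B * ρ) * T - ρ * T) ≤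
      d ^ #P * ((𝔼 φ : α → β, hm H G B φ * cc G B φ ^ (#P + 1)) - ρ * T) := by gcongr
    refine le_trans ?_ h5
    have hp1 : d ^ #P ≤ 1 := pow_le_one₀ hd.le hd1
    have hp0 : 0 ≤ d ^ #P := by positivity
    have e : d ^ #P * ((d ^ #B - #B * ρ) * T - ρ * T)
      = (d ^ (#B + #P) - d ^ #P * ((#B + 1) * ρ)) * T := by rw [pow_add]; ring
    rw [e]
    refine mul_le_mul_of_nonneg_right ?_ h3
    have h6 : d ^ #P * ((#B + 1) * ρ) ≤ 1 * ((#B + 1) * ρ) :=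
      mul_le_mul_of_nonneg_right hp1
        (mul_nonneg (add_nonneg (Nat.cast_nonneg _) zero_le_one) hρ0.le)
    have h7 : (1 : ℝ) ≤ #P := by exact_mod_cast hPpos
    push_cast
    nlinarith

variable {G} in
theorem erase_bound {ρ d : ℝ} (hρ0 : 0 < ρ) (hd : 0 < d) (hd1 : d ≤ 1)
    (hG : LocallyDense G ρ d) {X : Finset α} (hX : CM H X) {v : α} (hv : v ∈ X)
    [DecidableRel H.Adj] :
    (d ^ #(X.filter (fun u => H.Adj v u)) - Fintype.card α * ρ) * tt H G (X.erase v)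
      ≤ tt H G X := by
  obtain ⟨hP, hBP⟩ := split_part hX hv
  set B := X.filter (fun u => H.Adj v u) with hB
  set P := X.filter (fun u => ¬ H.Adj v u) with hPdef
  have hXB : X = B ∪ P := (filter_union_filter_not_eq _ _).symm
  have hvP : v ∈ P := by simp [hPdef, hv]
  have hvB : v ∉ B := by simp [hB]
  have hXe : X.erase v = B ∪ P.erase v := by
    conv_lhs => rw [hXB]
    rw [erase_union_distrib, erase_eq_of_notMem hvB]
  have e1 := expand_one H G hP hBP
  have e2 := expand_one H G (B := B) (P := P.erase v)
    (fun a ha b hb => hP a (mem_of_mem_erase ha) b (mem_of_mem_erase hb))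
    (fun b hb a ha => hBP b hb a (mem_of_mem_erase ha))
  have hr := ratio H G _ (apex H hρ0 hd hd1 hG #B B rfl (hX.mono (filter_subset _ _)))
    #(P.erase v)
  rw [card_erase_add_one hvP, ← e1, ← e2, ← hXB, ← hXe] at hr
  refine le_trans ?_ hr
  have h0 : 0 ≤ tt H G (X.erase v) := expect_nonneg fun _ _ => hm_nonneg _ _ _ _
  have : (#B : ℝ) ≤ Fintype.card α := by exact_mod_cast card_le_univ _
  gcongr

theorem tt_nonneg (X : Finset α) : 0 ≤ tt H G X := expect_nonneg fun _ _ => hm_nonneg _ _ _ _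

theorem tt_empty : tt H G ∅ = 1 := by simp [tt, hm]

open Classical in
/-- edges inside `X` -/
noncomputable def ES (X : Finset α) : Finset (Sym2 α) :=
  univ.filter (fun e => e ∈ H.edgeSet ∧ ∀ v ∈ e, v ∈ X)

theorem es_erase {X : Finset α} {v : α} (hv : v ∈ X) [DecidableRel H.Adj] :
    #(X.filter (fun u => H.Adj v u)) + #(ES H (X.erase v)) ≤ #(ES H X) := by
  classical
  have hinj : Function.Injective (fun u : α => s(v, u)) := by
    intro a b h
    exact Sym2.congr_right.1 h
  rw [← card_image_of_injective (X.filter (fun u => H.Adj v u)) hinj,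
    ← card_union_of_disjoint]
  · apply card_le_card
    intro e he
    rcases mem_union.1 he with he | he
    · rw [mem_image] at he
      obtain ⟨u, hu, rfl⟩ := he
      rw [mem_filter] at hu
      simp [ES, hu.2, hu.1, hv]
    · simp only [ES, mem_filter, mem_univ, true_and, mem_erase] at he ⊢
      exact ⟨he.1, fun u hu => (he.2 u hu).2⟩
  · rw [disjoint_left]
    intro e he he'
    rw [mem_image] at he
    obtain ⟨u, hu, rfl⟩ := he
    simp only [ES, mem_filter, mem_univ, true_and, mem_erase] at he'
    exact (he'.2 v (by simp)).1 rfl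

theorem chain {δ d : ℝ} (hδ : 0 < δ) (hd : 0 < d) (hd1 : d ≤ 1) [DecidableRel H.Adj]
    (hyp : ∀ X : Finset α, CM H X → ∀ v ∈ X,
      δ * d ^ #(X.filter (fun u => H.Adj v u)) * tt H G (X.erase v) ≤ tt H G X)
    (S : Finset α) (n : ℕ) : ∀ X : Finset α, #(X \ S) = n → CM H X → S ⊆ X →
    δ ^ n * d ^ #(ES H X) * tt H G S ≤ d ^ #(ES H S) * tt H G X := by
  induction n with
  | zero =>
    intro X hn hX hS
    have : X = S := subset_antisymm (sdiff_eq_empty_iff_subset.1 (card_eq_zero.1 hn)) hS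
    subst this
    simp
  | succ n ih =>
    intro X hn hX hS
    obtain ⟨v, hv⟩ : (X \ S).Nonempty := card_pos.1 (by omega)
    have hvX := (mem_sdiff.1 hv).1
    have hvS := (mem_sdiff.1 hv).2
    have h1 := ih (X.erase v) (by
        rw [erase_sdiff_comm, card_erase_of_mem hv, hn]; rfl) (hX.mono (erase_subset _ _))
      (fun u hu => mem_erase.2 ⟨fun h => hvS (h ▸ hu), hS hu⟩)
    have h2 := hyp X hX v hvX
    have h3 : d ^ #(ES H X) ≤ d ^ (#(X.filter (fun u => H.Adj v u)) + #(ES H (X.erase v))) :=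
      pow_le_pow_of_le_one hd.le hd1 (es_erase H hvX)
    have hS0 := tt_nonneg H G S
    set a := #(X.filter (fun u => H.Adj v u))
    set b := #(ES H (X.erase v))
    calc δ ^ (n + 1) * d ^ #(ES H X) * tt H G S
        ≤ δ ^ (n + 1) * d ^ (a + b) * tt H G S := by
          refine mul_le_mul_of_nonneg_right (mul_le_mul_of_nonneg_left h3 (by positivity)) hS0
      _ = (δ * d ^ a) * (δ ^ n * d ^ b * tt H G S) := by ring
      _ ≤ (δ * d ^ a) * (d ^ #(ES H S) * tt H G (X.erase v)) :=
          mul_le_mul_of_nonneg_left h1 (by positivity)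
      _ = d ^ #(ES H S) * (δ * d ^ a * tt H G (X.erase v)) := by ring
      _ ≤ _ := mul_le_mul_of_nonneg_left h2 (by positivity)

theorem tt_pos {δ d : ℝ} (hδ : 0 < δ) (hd : 0 < d) (hd1 : d ≤ 1) [DecidableRel H.Adj]
    (hyp : ∀ X : Finset α, CM H X → ∀ v ∈ X,
      δ * d ^ #(X.filter (fun u => H.Adj v u)) * tt H G (X.erase v) ≤ tt H G X)
    {X : Finset α} (hX : CM H X) : 0 < tt H G X := by
  have h := chain H G hδ hd hd1 hyp ∅ _ X rfl hX (empty_subset _)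
  rw [tt_empty, mul_one] at h
  have h1 : 0 < δ ^ #(X \ ∅) * d ^ #(ES H X) := by positivity
  exact pos_of_mul_pos_right (lt_of_lt_of_le h1 h) (by positivity)

theorem chain_log {δ d : ℝ} (hδ : 0 < δ) (hd : 0 < d) (hd1 : d ≤ 1) [DecidableRel H.Adj]
    (hyp : ∀ X : Finset α, CM H X → ∀ v ∈ X,
      δ * d ^ #(X.filter (fun u => H.Adj v u)) * tt H G (X.erase v) ≤ tt H G X)
    {S X : Finset α} (hX : CM H X) (hS : S ⊆ X) :
    #(X \ S) * Real.log δ + #(ES H X) * Real.log d + Real.log (tt H G S)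
      ≤ #(ES H S) * Real.log d + Real.log (tt H G X) := by
  have h := chain H G hδ hd hd1 hyp S _ X rfl hX hS
  have p1 := tt_pos H G hδ hd hd1 hyp hX
  have p2 := tt_pos H G hδ hd hd1 hyp (hX.mono hS)
  have h1 : 0 < δ ^ #(X \ S) := pow_pos hδ _
  have h2 : 0 < d ^ #(ES H X) := pow_pos hd _
  have h3 : 0 < d ^ #(ES H S) := pow_pos hd _
  have := Real.log_le_log (mul_pos (mul_pos h1 h2) p2) h
  rwa [Real.log_mul (mul_pos h1 h2).ne' p2.ne', Real.log_mul h1.ne' h2.ne',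
    Real.log_mul h3.ne' p1.ne', Real.log_pow, Real.log_pow, Real.log_pow] at this

theorem glue {V X Y S : Finset α} {w : (α → β) → ℝ} (hS : S = X ∩ Y) (hXV : X ⊆ V)
    (hVY : V ∩ Y ⊆ X) (hw : ∀ φ, 0 ≤ w φ)
    (hdep : ∀ φ ψ, (∀ u ∈ V, φ u = ψ u) → w φ = w ψ)
    (hX : ∀ φ, cond X w φ = hm H G X φ / tt H G X)
    (hXY : ∀ φ, cond S (hm H G X) φ = cond S (hm H G Y) φ)
    (hY0 : 0 < tt H G Y) (hS0 : 0 < tt H G S) :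
    ∃ w' : (α → β) → ℝ, (∀ φ, 0 ≤ w' φ) ∧
      (∀ φ ψ, (∀ u ∈ V ∪ Y, φ u = ψ u) → w' φ = w' ψ) ∧
      (∀ Z ⊆ V, ∀ φ, cond Z w' φ = cond Z w φ) ∧
      (∀ φ, cond Y w' φ = hm H G Y φ / tt H G Y) ∧
      𝔼 φ, w' φ * Real.log (w' φ)
        ≤ 𝔼 φ, w φ * Real.log (w φ) - (Real.log (tt H G Y) - Real.log (tt H G S)) := by
  have hSX : S ⊆ X := hS ▸ inter_subset_left
  have hSY : S ⊆ Y := hS ▸ inter_subset_right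
  have hSV : S ⊆ V := hSX.trans hXV
  have hVS : ∀ u ∈ V, u ∈ Y ↔ u ∈ S := by
    intro u hu
    constructor
    · intro hy; rw [hS]; exact mem_inter.2 ⟨hVY (mem_inter.2 ⟨hu, hy⟩), hy⟩
    · intro h; exact hSY h
  have hYS : ∀ u ∈ Y, u ∈ V ↔ u ∈ S := by
    intro u hu
    exact ⟨fun h => (hVS u h).1 hu, fun h => hSV h⟩
  have htt : tt H G X = tt H G Y := by
    unfold tt
    rw [← av_cond S (hm H G X), ← av_cond S (hm H G Y)]
    exact expect_congr rfl fun φ _ => hXY φ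
  set m : (α → β) → ℝ := cond S (hm H G Y) with hm_def
  have hmS : ∀ φ ψ, (∀ u ∈ S, φ u = ψ u) → m φ = m ψ := fun φ ψ h => cond_dep φ ψ h
  have hm0 : ∀ φ, 0 ≤ m φ := cond_nonneg (hm_nonneg H G Y)
  have hwS : ∀ φ, cond S w φ = m φ / tt H G Y := by
    intro φ
    rw [← cond_cond hSX w φ, ← hXY φ, ← htt]
    unfold cond
    rw [expect_div]
    exact expect_congr rfl fun ψ _ => hX _
  have w0 : ∀ φ, m φ = 0 → w φ = 0 := by
    intro φ h
    apply cond_eq_zero (S := S) hw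
    rw [hwS, h, zero_div]
  have hmY0 : ∀ φ, m φ = 0 → hm H G Y φ = 0 := fun φ h =>
    cond_eq_zero (S := S) (hm_nonneg H G Y) h
  set g : (α → β) → ℝ := fun φ => (m φ)⁻¹ * hm H G Y φ with hg
  have hgV : ∀ φ, cond V g φ = (m φ)⁻¹ * m φ := by
    intro φ
    rw [hg, cond_mul_left (f := fun φ => (m φ)⁻¹) φ
      (fun a b h => by show (m a)⁻¹ = (m b)⁻¹; rw [hmS a b fun u hu => h u (hSV hu)])]
    congr 1
    exact cond_inter (hm_dep H G Y) hYS φ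
  have keyV : ∀ f : (α → β) → ℝ, (∀ φ ψ, (∀ u ∈ V, φ u = ψ u) → f φ = f ψ) →
      (∀ φ, w φ = 0 → f φ = 0) → ∀ φ, cond V (fun φ => f φ * g φ) φ = f φ := by
    intro f hf hf0 φ
    rw [cond_mul_left φ hf, hgV]
    by_cases h : m φ = 0
    · rw [hf0 φ (w0 φ h), zero_mul]
    · rw [inv_mul_cancel₀ h, mul_one]
  refine ⟨fun φ => w φ * g φ, ?_, ?_, ?_, ?_, ?_⟩
  · intro φ
    exact mul_nonneg (hw φ) (mul_nonneg (inv_nonneg.2 (hm0 φ)) (hm_nonneg _ _ _ _))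
  · intro φ ψ h
    show w φ * ((m φ)⁻¹ * hm H G Y φ) = w ψ * ((m ψ)⁻¹ * hm H G Y ψ)
    rw [hdep φ ψ fun u hu => h u (mem_union_left _ hu),
      hmS φ ψ fun u hu => h u (mem_union_left _ (hSV hu)),
      hm_dep H G Y φ ψ fun u hu => h u (mem_union_right _ hu)]
  · intro Z hZ φ
    rw [← cond_cond hZ]
    congr 1
    funext ψ
    exact keyV w hdep (fun _ h => h) ψ
  · intro φ
    have e : (fun φ => w φ * g φ) = fun φ => g φ * w φ := by funext φ; ring
    rw [e, cond_mul_left φ, cond_inter hdep hVS, hwS]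
    · show (m φ)⁻¹ * hm H G Y φ * _ = _
      by_cases h : m φ = 0
      · simp [hmY0 φ h]
      · field_simp
    · intro a b h
      show (m a)⁻¹ * hm H G Y a = (m b)⁻¹ * hm H G Y b
      rw [hmS a b fun u hu => h u (hSY hu), hm_dep H G Y a b h]
  · have pt : ∀ φ, w φ * g φ * Real.log (w φ * g φ)
        = (w φ * Real.log (w φ)) * g φ - (w φ * Real.log (m φ)) * g φ := by
      intro φ
      by_cases h : w φ = 0
      · simp [h]
      · have hm1 : m φ ≠ 0 := fun h' => h (w0 φ h')
        rcases hm_01 H G Y φ with h1 | h1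
        · simp [hg, h1]
        · have : g φ = (m φ)⁻¹ := by simp [hg, h1]
          rw [this, Real.log_mul h (inv_ne_zero hm1), Real.log_inv]
          ring
    simp_rw [pt]
    rw [expect_sub_distrib]
    have e1 : 𝔼 φ, (w φ * Real.log (w φ)) * g φ = 𝔼 φ, w φ * Real.log (w φ) := by
      rw [← av_cond V]
      refine expect_congr rfl fun φ _ => keyV (fun φ => w φ * Real.log (w φ)) ?_ ?_ φ
      · intro a b h
        show w a * _ = w b * _
        rw [hdep a b h]
      · intro a h; simp [h]
    have e2 : 𝔼 φ, (w φ * Real.log (m φ)) * g φ = 𝔼 φ, Real.log (m φ) * w φ := by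
      rw [← av_cond V]
      refine expect_congr rfl fun φ _ => ?_
      rw [keyV (fun φ => w φ * Real.log (m φ)) ?_ ?_ φ, mul_comm]
      · intro a b h
        show w a * Real.log (m a) = w b * Real.log (m b)
        rw [hdep a b h, hmS a b fun u hu => h u (hSV hu)]
      · intro a h; simp [h]
    have e3 : 𝔼 φ, Real.log (m φ) * w φ = (𝔼 φ, m φ * Real.log (m φ)) / tt H G Y := by
      rw [← av_cond S, expect_div]
      refine expect_congr rfl fun φ _ => ?_
      rw [cond_mul_left (f := fun φ => Real.log (m φ)) φ
        (fun a b h => by show Real.log (m a) = Real.log (m b); rw [hmS a b h]), hwS]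
      ring
    have e4 : 𝔼 φ, m φ = tt H G Y := av_cond S _
    have h5 := logsum m (hm H G S) hm0 (hm_01 H G S) (by
      intro φ h
      refine expect_eq_zero fun ψ _ => hm_eq_zero H G hSY ?_
      rw [← h]
      exact hm_dep H G S _ _ fun u hu => by simp [hu]) (by rw [e4]; exact hY0) hS0
    rw [e4] at h5
    change _ * (_ - Real.log (tt H G S)) ≤ _ at h5
    rw [e1, e2, e3]
    have h6 : Real.log (tt H G Y) - Real.log (tt H G S)
        ≤ (𝔼 φ, m φ * Real.log (m φ)) / tt H G Y := by
      rw [le_div_iff₀ hY0]; linarith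
    linarith

variable {H} in
theorem cond_iso {X Y : Finset α} (e : H.induce (X : Set α) ≃g H.induce (Y : Set α))
    (he : ∀ (v : α) (h1 : v ∈ X) (h2 : v ∈ Y), ((e ⟨v, h1⟩ : (Y : Set α)) : α) = v)
    (φ : α → β) : cond (X ∩ Y) (hm H G X) φ = cond (X ∩ Y) (hm H G Y) φ := by
  let e0 : {x // x ∈ X} ≃ {x // x ∈ Y} := e.toEquiv
  set π : Equiv.Perm α := e0.extendSubtype with hπ
  have hπX : ∀ x (hx : x ∈ X), π x = (e ⟨x, hx⟩ : (Y : Set α)) := fun x hx =>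
    e0.extendSubtype_apply_of_mem x hx
  have hπY : ∀ x, x ∈ X → π x ∈ Y := fun x hx => e0.extendSubtype_mem x hx
  have hπN : ∀ x, x ∉ X → π x ∉ Y := fun x hx => e0.extendSubtype_not_mem x hx
  have hadj : ∀ x ∈ X, ∀ y ∈ X, H.Adj (π x) (π y) ↔ H.Adj x y := by
    intro x hx y hy
    rw [hπX x hx, hπX y hy]
    exact e.map_adj_iff (v := ⟨x, hx⟩) (w := ⟨y, hy⟩)
  have hfix : ∀ x ∈ X ∩ Y, π x = x := by
    intro x hx
    rw [hπX x (mem_inter.1 hx).1]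
    exact he x (mem_inter.1 hx).1 (mem_inter.1 hx).2
  have hcomp : ∀ χ : α → β, hm H G Y χ = hm H G X (χ ∘ π) := by
    intro χ
    unfold hm
    congr 1
    rw [eq_iff_iff]
    constructor
    · intro h u hu v hv huv
      exact h _ (hπY u hu) _ (hπY v hv) ((hadj u hu v hv).2 huv)
    · intro h u hu v hv huv
      have hu' : π.symm u ∈ X := by
        by_contra hh; exact hπN _ hh (by simpa using hu)
      have hv' : π.symm v ∈ X := by
        by_contra hh; exact hπN _ hh (by simpa using hv)
      have := h _ hu' _ hv' ((hadj _ hu' _ hv').1 (by simpa using huv))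
      simpa using this
  unfold cond
  symm
  refine Fintype.expect_equiv (Equiv.arrowCongr π.symm (Equiv.refl β)) _ _ fun ψ => ?_
  rw [hcomp]
  refine hm_dep H G X _ _ fun u hu => ?_
  have hψ : (Equiv.arrowCongr π.symm (Equiv.refl β)) ψ = ψ ∘ π := by
    ext x; simp [Equiv.arrowCongr]
  rw [hψ]
  by_cases hS : u ∈ X ∩ Y
  · simp only [Function.comp]
    rw [hfix u hS, piecewise_eq_of_mem _ _ _ hS, piecewise_eq_of_mem _ _ _ hS]
  · have : π u ∉ X ∩ Y := by
      intro h
      have := π.injective (hfix _ h)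
      rw [this] at h
      exact hS h
    simp only [Function.comp]
    rw [piecewise_eq_of_notMem _ _ _ hS, piecewise_eq_of_notMem _ _ _ this]
    rfl

theorem grow {ι : Type*} [Fintype ι] [DecidableEq ι] (bag : ι → Finset α) (T : SimpleGraph ι)
    (hT : T.Connected)
    (hpath : ∀ X Y Z : ι, ∀ p : T.Walk X Y, p.IsPath → Z ∈ p.support → bag X ∩ bag Y ⊆ bag Z)
    (hiso : ∀ X Y : ι, T.Adj X Y → ∃ e : H.induce (bag X : Set α) ≃g H.induce (bag Y : Set α),
      ∀ (v : α) (h1 : v ∈ bag X) (h2 : v ∈ bag Y),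
        ((e ⟨v, h1⟩ : (bag Y : Set α)) : α) = v)
    (hCM : ∀ X, CM H (bag X))
    {δ d : ℝ} (hδ : 0 < δ) (hd : 0 < d) (hd1 : d ≤ 1) [DecidableRel H.Adj]
    (hyp : ∀ X : Finset α, CM H X → ∀ v ∈ X,
      δ * d ^ #(X.filter (fun u => H.Adj v u)) * tt H G (X.erase v) ≤ tt H G X)
    (k : ℕ) : k + 1 ≤ Fintype.card ι →
    ∃ (U : Finset ι) (w : (α → β) → ℝ), #U = k + 1 ∧ 
      (∀ X ∈ U, ∀ Y ∈ U, ∃ p : T.Walk X Y, p.IsPath ∧ ∀ Z ∈ p.support, Z ∈ U) ∧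
      (∀ φ, 0 ≤ w φ) ∧
      (∀ φ ψ, (∀ u ∈ U.biUnion bag, φ u = ψ u) → w φ = w ψ) ∧
      (∀ Z ∈ U, ∀ φ, cond (bag Z) w φ = hm H G (bag Z) φ / tt H G (bag Z)) ∧
      𝔼 φ, w φ * Real.log (w φ) ≤ -(#(U.biUnion bag) * Real.log δ
        + #(U.biUnion (fun Z => ES H (bag Z))) * Real.log d) := by
  have pos : ∀ X, 0 < tt H G (bag X) := fun X => tt_pos H G hδ hd hd1 hyp (hCM X)
  induction k with
  | zero =>
    intro _
    obtain ⟨X⟩ := hT.nonempty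
    refine ⟨{X}, fun φ => (tt H G (bag X))⁻¹ * hm H G (bag X) φ, by simp, ?_, ?_, ?_, ?_, ?_⟩
    · intro Y hY Z hZ
      rw [mem_singleton] at hY hZ
      subst hY; subst hZ
      exact ⟨SimpleGraph.Walk.nil, by simp, by simp⟩
    · intro φ
      exact mul_nonneg (inv_nonneg.2 (pos X).le) (hm_nonneg _ _ _ _)
    · intro φ ψ h
      rw [singleton_biUnion] at h
      show _ * hm H G (bag X) φ = _ * hm H G (bag X) ψ
      rw [hm_dep H G _ φ ψ h]
    · intro Z hZ φ
      rw [mem_singleton] at hZ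
      subst hZ
      have e : cond (bag Z) (fun φ => hm H G (bag Z) φ * (tt H G (bag Z))⁻¹) φ = 
        hm H G (bag Z) φ * cond (bag Z) (fun _ => (tt H G (bag Z))⁻¹) φ :=
        cond_mul_left φ (hm_dep H G (bag Z))
      have e2 : cond (bag Z) (fun _ : α → β => (tt H G (bag Z))⁻¹) φ = (tt H G (bag Z))⁻¹ := by
        simp [cond]
      simp_rw [mul_comm (tt H G (bag Z))⁻¹]
      rw [e, e2, div_eq_mul_inv]
    · rw [singleton_biUnion, singleton_biUnion]
      have pt : ∀ φ : α → β, (tt H G (bag X))⁻¹ * hm H G (bag X) φ *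
          Real.log ((tt H G (bag X))⁻¹ * hm H G (bag X) φ)
          = hm H G (bag X) φ * (-(tt H G (bag X))⁻¹ * Real.log (tt H G (bag X))) := by
        intro φ
        rcases hm_01 H G (bag X) φ with h | h
        · simp [h]
        · rw [h, mul_one, Real.log_inv]; ring
      simp_rw [pt]
      rw [← expect_mul]
      change tt H G (bag X) * _ ≤ _
      have e : tt H G (bag X) * (-(tt H G (bag X))⁻¹ * Real.log (tt H G (bag X)))
          = - Real.log (tt H G (bag X)) := by
        have := (pos X).ne'
        field_simp
      rw [e]
      have h := chain_log H G hδ hd hd1 hyp (hCM X) (empty_subset _)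
      have hE : ES H ∅ = ∅ := by
        rw [eq_empty_iff_forall_notMem]
        intro e he
        simp only [ES, mem_filter, mem_univ, true_and] at he
        induction e using Sym2.ind with
        | _ x y => exact absurd (he.2 x (by simp)) (notMem_empty _)
      rw [hE, tt_empty] at h
      simp at h
      linarith
  | succ k ih =>
    intro hk
    obtain ⟨U, w, hU, hconn, hw, hdep, hmarg, hent⟩ := ih (by omega)
    obtain ⟨a, ha⟩ : U.Nonempty := card_pos.1 (by omega)
    obtain ⟨b, hb⟩ : ∃ b, b ∉ U := by
      by_contra! h
      have : U = univ := eq_univ_iff_forall.2 h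
      rw [this, card_univ] at hU
      omega
    obtain ⟨p⟩ := hT.preconnected a b
    obtain ⟨⟨⟨X, Y⟩, hadj⟩, -, hX, hY⟩ := p.exists_boundary_dart (U : Set ι) ha hb
    simp only [mem_coe] at hX hY
    change T.Adj X Y at hadj
    have newpath : ∀ Z ∈ U, ∃ q : T.Walk Z Y, q.IsPath ∧ X ∈ q.support ∧
        ∀ W ∈ q.support, W ∈ insert Y U := by
      intro Z hZ
      obtain ⟨q, hq, hqU⟩ := hconn Z hZ X hX
      refine ⟨q.concat hadj, hq.concat (fun h => hY (hqU _ h)) hadj, ?_, ?_⟩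
      · rw [SimpleGraph.Walk.support_concat]; simp
      · intro W hW
        rw [SimpleGraph.Walk.support_concat] at hW
        simp only [List.concat_eq_append, List.mem_append, List.mem_singleton] at hW
        rcases hW with hW | hW
        · exact mem_insert_of_mem (hqU W hW)
        · exact hW ▸ mem_insert_self _ _
    have hVY : U.biUnion bag ∩ bag Y ⊆ bag X := by
      intro u hu
      obtain ⟨hu1, hu2⟩ := mem_inter.1 hu
      obtain ⟨Z, hZ, huZ⟩ := mem_biUnion.1 hu1
      obtain ⟨q, hq, hXq, -⟩ := newpath Z hZ
      exact hpath Z Y X q hq hXq (mem_inter.2 ⟨huZ, hu2⟩)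
    have hXV : bag X ⊆ U.biUnion bag := subset_biUnion_of_mem bag hX
    obtain ⟨e, he⟩ := hiso X Y hadj
    have hSY : bag X ∩ bag Y ⊆ bag Y := inter_subset_right
    obtain ⟨w', hw', hdep', hZ', hY', hent'⟩ := glue H G (S := bag X ∩ bag Y) rfl hXV hVY hw hdep
      (hmarg X hX) (fun φ => cond_iso G e he φ) (pos Y)
      (tt_pos H G hδ hd hd1 hyp ((hCM Y).mono hSY))
    have hb1 : (insert Y U).biUnion bag = U.biUnion bag ∪ bag Y := by
      rw [biUnion_insert, union_comm]
    refine ⟨insert Y U, w', by rw [card_insert_of_notMem hY, hU], ?_, hw', ?_, ?_, ?_⟩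
    · intro Z hZ W hW
      rcases mem_insert.1 hZ with hZ1 | hZ1 <;> rcases mem_insert.1 hW with hW1 | hW1
      · subst hZ1; subst hW1
        exact ⟨SimpleGraph.Walk.nil, by simp, by simp⟩
      · obtain ⟨q, hq, -, hqU⟩ := newpath W hW1
        subst hZ1
        exact ⟨q.reverse, hq.reverse, by simpa using hqU⟩
      · obtain ⟨q, hq, -, hqU⟩ := newpath Z hZ1
        subst hW1
        exact ⟨q, hq, hqU⟩
      · obtain ⟨q, hq, hqU⟩ := hconn Z hZ1 W hW1
        exact ⟨q, hq, fun v hv => mem_insert_of_mem (hqU v hv)⟩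
    · rw [hb1]; exact hdep'
    · intro Z hZ φ
      rcases mem_insert.1 hZ with rfl | hZ
      · exact hY' φ
      · rw [hZ' _ (subset_biUnion_of_mem bag hZ), hmarg Z hZ]
    · have hb2 : (insert Y U).biUnion (fun Z => ES H (bag Z))
          = U.biUnion (fun Z => ES H (bag Z)) ∪ ES H (bag Y) := by
        rw [biUnion_insert, union_comm]
      have hc := chain_log H G hδ hd hd1 hyp (hCM Y) hSY
      have hsd : bag Y \ (bag X ∩ bag Y) = bag Y \ U.biUnion bag := by
        ext u
        simp only [mem_sdiff, mem_inter]
        constructor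
        · rintro ⟨h1, h2⟩
          exact ⟨h1, fun h => h2 ⟨hVY (mem_inter.2 ⟨h, h1⟩), h1⟩⟩
        · rintro ⟨h1, h2⟩
          exact ⟨h1, fun h => h2 (hXV h.1)⟩
      have hcV : #((insert Y U).biUnion bag) = #(U.biUnion bag) + #(bag Y \ (bag X ∩ bag Y)) := by
        rw [hb1, hsd, ← card_union_of_disjoint disjoint_sdiff, union_sdiff_self_eq_union]
      have hcE : #(U.biUnion (fun Z => ES H (bag Z))) + #(ES H (bag Y))
          ≤ #((insert Y U).biUnion (fun Z => ES H (bag Z))) + #(ES H (bag X ∩ bag Y)) := by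
        rw [hb2, ← card_union_add_card_inter]
        gcongr
        intro e he
        obtain ⟨h1, h2⟩ := mem_inter.1 he
        obtain ⟨Z, hZ, heZ⟩ := mem_biUnion.1 h1
        simp only [ES, mem_filter, mem_univ, true_and] at heZ h2 ⊢
        refine ⟨h2.1, fun v hv => ?_⟩
        have hvY := h2.2 v hv
        exact mem_inter.2 ⟨hVY (mem_inter.2 ⟨mem_biUnion.2 ⟨Z, hZ, heZ.2 v hv⟩, hvY⟩), hvY⟩
      have hld : Real.log d ≤ 0 := Real.log_nonpos hd.le hd1
      have hcE' : (#(U.biUnion (fun Z => ES H (bag Z))) + #(ES H (bag Y)) : ℝ)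
          ≤ #((insert Y U).biUnion (fun Z => ES H (bag Z))) + #(ES H (bag X ∩ bag Y)) := by
        exact_mod_cast hcE
      have hfin := mul_le_mul_of_nonpos_right hcE' hld
      rw [hcV]
      push_cast
      linarith

theorem homDensity_eq : homDensity H G = tt H G univ := by
  classical
  unfold homDensity tt
  rw [Fintype.expect_eq_sum_div_card]
  congr 1
  · unfold hm
    rw [sum_boole]
    congr 1
    rw [← Fintype.card_subtype, ← Nat.card_eq_fintype_card]
    refine Nat.card_congr ⟨fun f => ⟨f, fun u _ v _ h => f.map_rel h⟩,
      fun f => ⟨f.1, fun {u v} h => f.2 u (mem_univ _) v (mem_univ _) h⟩, fun _ => rfl,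
      fun _ => rfl⟩
  · rw [Fintype.card_fun]; push_cast; rfl

theorem final {ι : Type*} [Fintype ι] (bag : ι → Finset α) (T : SimpleGraph ι)
    (hdec : IsTreeDecomp H bag T)
    (hiso : ∀ X Y : ι, T.Adj X Y → ∃ e : H.induce (bag X : Set α) ≃g H.induce (bag Y : Set α),
      ∀ (v : α) (h1 : v ∈ bag X) (h2 : v ∈ bag Y),
        ((e ⟨v, h1⟩ : (bag Y : Set α)) : α) = v)
    (hCM : ∀ X, CM H (bag X))
    {δ d : ℝ} (hδ : 0 < δ) (hd : 0 < d) (hd1 : d ≤ 1) [DecidableRel H.Adj]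
    (hyp : ∀ X : Finset α, CM H X → ∀ v ∈ X,
      δ * d ^ #(X.filter (fun u => H.Adj v u)) * tt H G (X.erase v) ≤ tt H G X) :
    δ ^ Fintype.card α * d ^ edgeCount H ≤ homDensity H G := by
  classical
  obtain ⟨hT, hcov, hedge, hpath⟩ := hdec
  have hne := hT.isConnected.nonempty
  have hcard : 0 < Fintype.card ι := Fintype.card_pos
  obtain ⟨U, w, hU, -, hw, hdep, hmarg, hent⟩ :=
    grow H G bag T hT.isConnected hpath hiso hCM hδ hd hd1 hyp (Fintype.card ι - 1) (by omega)
  have hUu : U = univ := (card_eq_iff_eq_univ U).1 (by omega)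
  subst hUu
  have hV : univ.biUnion bag = univ := by
    rw [eq_univ_iff_forall]
    intro v
    obtain ⟨X, hX⟩ := hcov v
    exact mem_biUnion.2 ⟨X, mem_univ _, hX⟩
  have hE : #(univ.biUnion (fun Z => ES H (bag Z))) ≤ edgeCount H := by
    unfold edgeCount
    rw [Nat.card_eq_fintype_card, ← SimpleGraph.edgeFinset_card]
    apply card_le_card
    intro e he
    obtain ⟨Z, -, hZ⟩ := mem_biUnion.1 he
    simp only [ES, mem_filter, mem_univ, true_and] at hZ
    rw [SimpleGraph.mem_edgeFinset]
    exact hZ.1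
  obtain ⟨X⟩ := hne
  have posX : 0 < tt H G (bag X) := tt_pos H G hδ hd hd1 hyp (hCM X)
  have hw1 : 𝔼 φ, w φ = 1 := by
    rw [← av_cond (bag X)]
    simp_rw [hmarg X (mem_univ _)]
    rw [← expect_div]
    exact div_self posX.ne'
  have hsupp : ∀ φ, hm H G univ φ = 0 → w φ = 0 := by
    intro φ h
    by_contra hwφ
    have hall : ∀ Z, hm H G (bag Z) φ ≠ 0 := by
      intro Z hZ
      apply hwφ
      apply cond_eq_zero (S := bag Z) hw
      rw [hmarg Z (mem_univ _), hZ, zero_div]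
    have : hm H G univ φ = 1 := by
      unfold hm
      rw [if_pos]
      intro u _ v _ huv
      obtain ⟨Z, hu, hv⟩ := hedge u v huv
      have := hall Z
      unfold hm at this
      by_contra hno
      apply this
      rw [if_neg]
      intro hh
      exact hno (hh u hu v hv huv)
    rw [this] at h
    norm_num at h
  have hpos : 0 < tt H G univ := by
    rcases (tt_nonneg H G univ).eq_or_lt with h | h
    · exfalso
      have h0 : ∀ φ : α → β, w φ = 0 := fun φ => hsupp φ
        ((expect_eq_zero_iff_of_nonneg (fun i _ => hm_nonneg H G univ i)).1 h.symm φ (mem_univ _))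
      simp [h0] at hw1
    · exact h
  have hls := logsum w (hm H G univ) hw (hm_01 H G univ) hsupp (by rw [hw1]; norm_num) hpos
  rw [hw1, Real.log_one] at hls
  change _ * (_ - Real.log (tt H G univ)) ≤ _ at hls
  rw [hV, card_univ] at hent
  rw [homDensity_eq]
  have hld : Real.log d ≤ 0 := Real.log_nonpos hd.le hd1
  have hE' : (#(univ.biUnion (fun Z => ES H (bag Z))) : ℝ) ≤ edgeCount H := by exact_mod_cast hE
  have h1 := mul_le_mul_of_nonpos_right hE' hld
  have h2 : 0 < δ ^ Fintype.card α := pow_pos hδ _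
  have h3 : 0 < d ^ edgeCount H := pow_pos hd _
  rw [← Real.log_le_log_iff (mul_pos h2 h3) hpos, Real.log_mul h2.ne' h3.ne', Real.log_pow,
    Real.log_pow]
  linarith

variable {H} in
theorem cm_of_iso {ℓ : ℕ} {r : Fin ℓ → ℕ} {X : Finset α}
    (e : H.induce (X : Set α) ≃g
      SimpleGraph.completeMultipartiteGraph (fun i : Fin ℓ => Fin (r i))) : CM H X := by
  have key : ∀ u (hu : u ∈ X) v (hv : v ∈ X),
      H.Adj u v ↔ (e ⟨u, hu⟩).1 ≠ (e ⟨v, hv⟩).1 := by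
    intro u hu v hv
    exact (e.map_adj_iff (v := ⟨u, hu⟩) (w := ⟨v, hv⟩)).symm
  intro u hu v hv w hw
  rw [key u hu v hv, key v hv w hw, key u hu w hw]
  simp only [ne_eq, not_not]
  exact fun h1 h2 => h1.trans h2

theorem deg_le_edgeCount [DecidableRel H.Adj] {X : Finset α} {v : α} (hv : v ∈ X) :
    #(X.filter (fun u => H.Adj v u)) ≤ edgeCount H := by
  classical
  have h1 := es_erase H hv
  have h2 : #(ES H X) ≤ edgeCount H := by
    unfold edgeCount
    rw [Nat.card_eq_fintype_card, ← SimpleGraph.edgeFinset_card]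
    apply card_le_card
    intro e he
    simp only [ES, mem_filter, mem_univ, true_and] at he
    rw [SimpleGraph.mem_edgeFinset]
    exact he.1
  omega

end LDense

theorem stmt1 {α : Type*} [Fintype α] [DecidableEq α] (ℓ : ℕ) (r : Fin ℓ → ℕ)
    (H : SimpleGraph α)
    (hH : JDecomposable H (SimpleGraph.completeMultipartiteGraph (fun i : Fin ℓ => Fin (r i))))
    (η : ℝ) (hη : 0 < η) :
    ∃ (ρ : ℝ) (n₀ : ℕ), 0 < ρ ∧
      ∀ (d : ℝ), 0 < d → d ≤ 1 →
        ∀ (β : Type) [Fintype β] (G : SimpleGraph β),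
          n₀ ≤ Fintype.card β → LocallyDense G ρ d →
            homDensity H G ≥ d ^ edgeCount H - η := by
  classical
  obtain ⟨ι, _, bag, T, hdec, hJ, hiso⟩ := hH
  obtain ⟨N, hN⟩ : ∃ N : ℝ, N = (Fintype.card α : ℝ) := ⟨_, rfl⟩
  have hN0 : 0 ≤ N := hN ▸ Nat.cast_nonneg _
  refine ⟨η ^ 2 / (N ^ 2 + 1), 1, by positivity, ?_⟩
  intro d hd hd1 β _ G hn hG
  have hne : Nonempty β := Fintype.card_pos_iff.1 (by omega)
  have h0 : 0 ≤ homDensity H G := by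
    rw [LDense.homDensity_eq]; exact LDense.tt_nonneg H G _
  rcases le_or_gt (d ^ edgeCount H) η with hle | hgt
  · linarith
  have hη1 : η < 1 := lt_of_lt_of_le hgt (pow_le_one₀ hd.le hd1)
  set ρ : ℝ := η ^ 2 / (N ^ 2 + 1) with hρ
  have hρ0 : 0 < ρ := by positivity
  set ε : ℝ := N * ρ / η with hε
  have hε0 : 0 ≤ ε := by positivity
  have hε' : ε = N * η / (N ^ 2 + 1) := by
    rw [hε, hρ]; field_simp
  have hε1 : ε < 1 := by
    rw [hε', div_lt_one (by positivity)]
    nlinarith [sq_nonneg (N - 1)]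
  have hNε : N * ε ≤ η := by
    rw [hε', ← mul_div_assoc, div_le_iff₀ (by positivity)]
    nlinarith
  have hyp : ∀ X : Finset α, LDense.CM H X → ∀ v ∈ X,
      (1 - ε) * d ^ (X.filter (fun u => H.Adj v u)).card * LDense.tt H G (X.erase v)
        ≤ LDense.tt H G X := by
    intro X hX v hv
    refine le_trans ?_ (LDense.erase_bound H hρ0 hd hd1 hG hX hv)
    refine mul_le_mul_of_nonneg_right ?_ (LDense.tt_nonneg H G _)
    have h1 : d ^ edgeCount H ≤ d ^ (X.filter (fun u => H.Adj v u)).card :=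
      pow_le_pow_of_le_one hd.le hd1 (LDense.deg_le_edgeCount H hv)
    have h2 : η ≤ d ^ (X.filter (fun u => H.Adj v u)).card := hgt.le.trans h1
    have h3 : ε * η = N * ρ := by rw [hε]; field_simp
    have h4 := mul_le_mul_of_nonneg_left h2 hε0
    rw [h3] at h4
    rw [← hN]
    linarith
  have hfin := LDense.final H G bag T hdec hiso
    (fun X => LDense.cm_of_iso (hJ X).some) (δ := 1 - ε) (by linarith) hd hd1 hyp
  have hB := one_add_mul_le_pow (a := -ε) (by linarith) (Fintype.card α)
  rw [← sub_eq_add_neg, ← hN] at hB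
  have hp1 : d ^ edgeCount H ≤ 1 := pow_le_one₀ hd.le hd1
  have hp0 : 0 < d ^ edgeCount H := pow_pos hd _
  have h5 := mul_le_mul_of_nonneg_right hB hp0.le
  have h6 : N * ε * d ^ edgeCount H ≤ N * ε * 1 :=
    mul_le_mul_of_nonneg_left hp1 (by positivity)
  have h7 : (1 + N * -ε) * d ^ edgeCount H = d ^ edgeCount H - N * ε * d ^ edgeCount H := by ring
  linarith
end

section
/- Let k ≥ 1 and let H be a C_{2k+1}-decomposable graph, where C_{2k+1} is the cycle on 2k+1 vertices. Then for every η > 0 there exists ρ > 0 and n₀ such that for every d ∈ (0,1] and every (ρ,d)-dense graph G with at least n₀ vertices, t_H(G) ≥ d^{|E(H)|} − η. -/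
open MeasureTheory

namespace KN
set_option linter.unusedSectionVars false
open Finset
open scoped BigOperators

section CondE
variable {α β : Type*} [Fintype α] [DecidableEq α] [Fintype β]

/-- average over the coordinates outside `S`. -/
noncomputable def condE (S : Finset α) (g : (α → β) → ℝ) (φ : α → β) : ℝ :=
  𝔼 ψ : α → β, g (S.piecewise φ ψ)

/-- swapping the coordinates outside `S`. -/
def swapEquiv (S : Finset α) : ((α → β) × (α → β)) ≃ ((α → β) × (α → β)) where
  toFun p := (S.piecewise p.1 p.2, S.piecewise p.2 p.1)
  invFun p := (S.piecewise p.1 p.2, S.piecewise p.2 p.1)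
  left_inv p := by
    ext i <;> by_cases h : i ∈ S <;> simp [h]
  right_inv p := by
    ext i <;> by_cases h : i ∈ S <;> simp [h]

lemma expect_prod_univ {γ δ : Type*} [Fintype γ] [Fintype δ] (f : γ × δ → ℝ) :
    𝔼 x, f x = 𝔼 i, 𝔼 j, f (i, j) := by
  rw [← Finset.expect_product]; rfl

lemma expect_condE [Nonempty β] (S : Finset α) (g : (α → β) → ℝ) :
    𝔼 φ, condE S g φ = 𝔼 φ, g φ := by
  unfold condE
  rw [← expect_prod_univ (fun p : (α → β) × (α → β) => g (S.piecewise p.1 p.2)),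
    Fintype.expect_equiv (swapEquiv S) (fun p : (α → β) × (α → β) => g (S.piecewise p.1 p.2))
      (fun p : (α → β) × (α → β) => g p.1) (fun _ => rfl),
    expect_prod_univ]
  simp only [Fintype.expect_const]

lemma condE_condE [Nonempty β] (A B : Finset α) (g : (α → β) → ℝ) :
    condE A (condE B g) = condE (A ∩ B) g := by
  ext φ
  have := expect_condE B (fun θ => g ((A ∩ B).piecewise φ θ))
  rw [condE, condE, ← this]
  refine Finset.expect_congr rfl fun ψ _ => ?_
  refine Finset.expect_congr rfl fun χ _ => ?_
  congr 1
  ext i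
  by_cases h : i ∈ A <;> by_cases h' : i ∈ B <;> simp [h, h']

lemma condE_of_dependsOn [Nonempty β] {B : Finset α} {g : (α → β) → ℝ}
    (hg : DependsOn g (B : Set α)) : condE B g = g := by
  ext φ
  have : ∀ ψ, g (B.piecewise φ ψ) = g φ := fun ψ => hg (by
    intro i hi
    exact Finset.piecewise_eq_of_mem _ _ _ (by simpa using hi))
  simp only [condE, this, Fintype.expect_const]

lemma condE_inter [Nonempty β] (A : Finset α) {B : Finset α} {g : (α → β) → ℝ}
    (hg : DependsOn g (B : Set α)) : condE A g = condE (A ∩ B) g := by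
  rw [← condE_condE, condE_of_dependsOn hg]

lemma condE_mul {S : Finset α} {g h : (α → β) → ℝ}
    (hg : DependsOn g (S : Set α)) (φ : α → β) :
    condE S (fun φ => g φ * h φ) φ = g φ * condE S h φ := by
  unfold condE
  rw [Finset.mul_expect]
  refine Finset.expect_congr rfl fun ψ _ => ?_
  show g (S.piecewise φ ψ) * h (S.piecewise φ ψ) = _
  rw [hg (x := S.piecewise φ ψ) (y := φ) ?_]
  intro i hi
  exact Finset.piecewise_eq_of_mem _ _ _ hi

lemma expect_mul_condE [Nonempty β] {S : Finset α} {g h : (α → β) → ℝ}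
    (hg : DependsOn g (S : Set α)) :
    𝔼 φ, g φ * h φ = 𝔼 φ, g φ * condE S h φ := by
  rw [← expect_condE S]
  exact Finset.expect_congr rfl fun φ _ => condE_mul hg φ

lemma dependsOn_condE (S : Finset α) (g : (α → β) → ℝ) :
    DependsOn (condE S g) (S : Set α) := by
  intro x y hxy
  unfold condE
  refine Finset.expect_congr rfl fun ψ _ => ?_
  congr 1
  ext i
  by_cases h : i ∈ S
  · simp [h, hxy i h]
  · simp [h]

lemma condE_nonneg (S : Finset α) {g : (α → β) → ℝ} (hg : ∀ φ, 0 ≤ g φ) (φ : α → β) :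
    0 ≤ condE S g φ := Finset.expect_nonneg fun _ _ => hg _

lemma eq_zero_of_condE {S : Finset α} {g : (α → β) → ℝ} (hg : ∀ φ, 0 ≤ g φ) {φ : α → β}
    (h : condE S g φ = 0) : g φ = 0 := by
  unfold condE at h
  rw [Finset.expect_eq_zero_iff_of_nonneg (fun _ _ => hg _)] at h
  have := h φ (Finset.mem_univ _)
  rwa [Finset.piecewise_same] at this

lemma dep_mono {f : (α → β) → ℝ} {S T : Set α} (h : DependsOn f S) (hST : S ⊆ T) :
    DependsOn f T := fun _ _ hxy => h fun i hi => hxy i (hST hi)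

/-- the glueing step -/
lemma ent_step [Nonempty β] (f c : (α → β) → ℝ) (V Y S : Finset α)
    (hf0 : ∀ φ, 0 ≤ f φ) (hc0 : ∀ φ, 0 ≤ c φ)
    (hfV : DependsOn f (V : Set α)) (hcY : DependsOn c (Y : Set α)) (hVY : V ∩ Y = S)
    (hm : condE S f = condE S c) :
    ∃ f' : (α → β) → ℝ, (∀ φ, 0 ≤ f' φ) ∧ DependsOn f' ((V ∪ Y : Finset α) : Set α) ∧
      (∀ φ, f' φ ≠ 0 → f φ ≠ 0 ∧ c φ ≠ 0) ∧
      condE V f' = f ∧ condE Y f' = c ∧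
      𝔼 φ, f' φ * Real.log (f' φ) = 𝔼 φ, f φ * Real.log (f φ) + 𝔼 φ, c φ * Real.log (c φ)
        - 𝔼 φ, condE S c φ * Real.log (condE S c φ) := by
  set m := condE S c with hmdef
  have hSV : S ⊆ V := hVY ▸ Finset.inter_subset_left
  have hSY : S ⊆ Y := hVY ▸ Finset.inter_subset_right
  have hmS : DependsOn m (S : Set α) := dependsOn_condE S c
  have hmV : DependsOn m (V : Set α) := dep_mono hmS (by exact_mod_cast hSV)
  have hmY : DependsOn m (Y : Set α) := dep_mono hmS (by exact_mod_cast hSY)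
  have hm0 : ∀ φ, 0 ≤ m φ := condE_nonneg S hc0
  have hfm : ∀ φ, m φ = 0 → f φ = 0 := fun φ h => eq_zero_of_condE (S := S) hf0 (by rw [hm]; exact h)
  have hcm : ∀ φ, m φ = 0 → c φ = 0 := fun φ h => eq_zero_of_condE (S := S) hc0 h
  have hV : condE V (fun φ => f φ * c φ / m φ) = f := by
    have e1 : (fun φ => f φ * c φ / m φ) = fun φ => (f φ / m φ) * c φ := by
      ext φ; ring
    ext φ
    rw [e1, condE_mul (g := fun φ => f φ / m φ)]
    · rw [condE_inter V hcY, hVY, ← hmdef]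
      by_cases h : m φ = 0
      · simp [h, hfm φ h]
      · field_simp
    · intro x y hxy
      simp only [hfV hxy, hmV hxy]
  have hY : condE Y (fun φ => f φ * c φ / m φ) = c := by
    have e1 : (fun φ => f φ * c φ / m φ) = fun φ => (c φ / m φ) * f φ := by
      ext φ; ring
    ext φ
    rw [e1, condE_mul (g := fun φ => c φ / m φ)]
    · rw [condE_inter Y hfV, Finset.inter_comm, hVY, hm]
      by_cases h : m φ = 0
      · simp [h, hcm φ h]
      · field_simp
    · intro x y hxy
      simp only [hcY hxy, hmY hxy]
  refine ⟨fun φ => f φ * c φ / m φ, fun φ => div_nonneg (mul_nonneg (hf0 φ) (hc0 φ)) (hm0 φ),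
    ?_, ?_, hV, hY, ?_⟩
  · intro x y hxy
    have h1 : ∀ i ∈ (V : Set α), x i = y i := fun i hi => hxy i (by simp at hi ⊢; exact Or.inl hi)
    have h2 : ∀ i ∈ (Y : Set α), x i = y i := fun i hi => hxy i (by simp at hi ⊢; exact Or.inr hi)
    simp only [hfV h1, hcY h2, hmV h1]
  · intro φ h
    constructor
    · intro h'; simp [h'] at h
    · intro h'; simp [h'] at h
  · set f' : (α → β) → ℝ := fun φ => f φ * c φ / m φ with hf'
    have e1 : ∀ φ, f' φ * Real.log (f' φ) =
        Real.log (f φ) * f' φ + Real.log (c φ) * f' φ - Real.log (m φ) * f' φ := by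
      intro φ
      by_cases h : f' φ = 0
      · simp [h]
      · have h1 : f φ ≠ 0 := by intro h'; simp [hf', h'] at h
        have h2 : c φ ≠ 0 := by intro h'; simp [hf', h'] at h
        have h3 : m φ ≠ 0 := by intro h'; simp [hf', h'] at h
        have : Real.log (f' φ) = Real.log (f φ) + Real.log (c φ) - Real.log (m φ) := by
          rw [hf']; simp only
          rw [Real.log_div (mul_ne_zero h1 h2) h3, Real.log_mul h1 h2]
        rw [this]; ring
    simp only [e1]
    rw [Finset.expect_sub_distrib, Finset.expect_add_distrib]
    rw [expect_mul_condE (S := V) (g := fun φ => Real.log (f φ)) (h := f')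
        (fun x y hxy => by simp only [hfV hxy]),
      expect_mul_condE (S := Y) (g := fun φ => Real.log (c φ)) (h := f')
        (fun x y hxy => by simp only [hcY hxy]),
      expect_mul_condE (S := Y) (g := fun φ => Real.log (m φ)) (h := f')
        (fun x y hxy => by simp only [hmY hxy]), hV, hY,
      expect_mul_condE (S := S) (g := fun φ => Real.log (m φ)) (h := c)
        (fun x y hxy => by simp only [hmS hxy]), ← hmdef]
    simp only [mul_comm]

open Classical in
/-- Gibbs inequality -/
lemma gibbs {Ω : Type*} [Fintype Ω] (f : Ω → ℝ) (P : Ω → Prop) (hf0 : ∀ φ, 0 ≤ f φ)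
    (hf1 : 𝔼 φ, f φ = 1) (hP : ∀ φ, f φ ≠ 0 → P φ) :
    0 < 𝔼 φ, (if P φ then (1 : ℝ) else 0) ∧
    - Real.log (𝔼 φ, if P φ then (1 : ℝ) else 0) ≤ 𝔼 φ, f φ * Real.log (f φ) := by
  set t := 𝔼 φ, (if P φ then (1 : ℝ) else 0) with ht
  have ht0 : 0 < t := by
    have h0 : 0 ≤ t := Finset.expect_nonneg fun _ _ => by split_ifs <;> norm_num
    rcases h0.lt_or_eq with h | h
    · exact h
    · exfalso
      have h' := h.symm
      rw [ht, Finset.expect_eq_zero_iff_of_nonneg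
        (fun _ _ => by split_ifs <;> norm_num)] at h'
      have : ∀ φ, f φ = 0 := by
        intro φ
        by_contra hne
        have := h' φ (Finset.mem_univ _)
        simp [hP φ hne] at this
      simp [this] at hf1
  refine ⟨ht0, ?_⟩
  have key : ∀ φ, f φ * (- Real.log t) + (f φ - (1 / t) * (if P φ then (1 : ℝ) else 0))
      ≤ f φ * Real.log (f φ) := by
    intro φ
    by_cases h : f φ = 0
    · have : 0 ≤ (1 / t) * (if P φ then (1 : ℝ) else 0) := by
        split_ifs <;> positivity
      simp [h] at this ⊢
      exact this
    · have hpos : 0 < f φ := lt_of_le_of_ne (hf0 φ) (Ne.symm h)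
      simp only [hP φ h, if_true]
      have h1 := Real.one_sub_inv_le_log_of_pos (mul_pos hpos ht0)
      rw [Real.log_mul h ht0.ne'] at h1
      have h2 := mul_le_mul_of_nonneg_left h1 hpos.le
      have h3 : f φ * (1 - (f φ * t)⁻¹) = f φ - 1 / t := by field_simp
      rw [h3] at h2
      linarith
  have := Finset.expect_le_expect (s := Finset.univ) fun φ _ => key φ
  rw [Finset.expect_add_distrib, Finset.expect_sub_distrib, ← Finset.expect_mul,
    ← Finset.mul_expect, ← ht, hf1] at this
  have h4 : 1 / t * t = 1 := by field_simp
  rw [h4] at this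
  linarith

end CondE
section Walk
open Matrix
variable {β : Type*} [Fintype β] [DecidableEq β]

open Classical in
/-- real valued adjacency -/
noncomputable def adjR (G : SimpleGraph β) (x y : β) : ℝ := if G.Adj x y then 1 else 0

/-- normalised adjacency matrix -/
noncomputable def nadj (G : SimpleGraph β) : Matrix β β ℝ :=
  Matrix.of fun x y => adjR G x y / (Fintype.card β : ℝ)

lemma adjR_symm (G : SimpleGraph β) (x y : β) : adjR G x y = adjR G y x := by
  classical
  unfold adjR; exact if_congr (G.adj_comm x y) rfl rfl

lemma adjR_nonneg (G : SimpleGraph β) (x y : β) : 0 ≤ adjR G x y := by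
  unfold adjR; split_ifs <;> norm_num

lemma adjR_le_one (G : SimpleGraph β) (x y : β) : adjR G x y ≤ 1 := by
  unfold adjR; split_ifs <;> norm_num

lemma nadj_pow_symm (G : SimpleGraph β) (j : ℕ) (x y : β) :
    (nadj G ^ j) x y = (nadj G ^ j) y x := by
  have h : (nadj G)ᵀ = nadj G := by
    ext a b; simp [nadj, adjR_symm G a b]
  have h2 : (nadj G ^ j)ᵀ = nadj G ^ j := by rw [Matrix.transpose_pow, h]
  conv_lhs => rw [← h2]
  rfl

lemma nadj_pow_nonneg (G : SimpleGraph β) (j : ℕ) (x y : β) :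
    0 ≤ (nadj G ^ j) x y := by
  induction j generalizing x y with
  | zero => simp [Matrix.one_apply]; split_ifs <;> norm_num
  | succ j ih =>
    rw [pow_succ, Matrix.mul_apply]
    exact Finset.sum_nonneg fun z _ => mul_nonneg (ih _ _)
      (div_nonneg (adjR_nonneg _ _ _) (by positivity))

lemma nadj_row_le (G : SimpleGraph β) (x : β) : ∑ y, nadj G x y ≤ 1 := by
  have : Nonempty β := ⟨x⟩
  have hn : (0 : ℝ) < Fintype.card β := by exact_mod_cast Fintype.card_pos
  calc ∑ y, nadj G x y ≤ ∑ y : β, 1 / (Fintype.card β : ℝ) := by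
        refine Finset.sum_le_sum fun y _ => ?_
        simp only [nadj, Matrix.of_apply]
        gcongr
        exact adjR_le_one _ _ _
    _ = 1 := by simp

lemma nadj_pow_le (G : SimpleGraph β) (j : ℕ) (x y : β) :
    (nadj G ^ (j + 1)) x y ≤ 1 / (Fintype.card β : ℝ) := by
  have : Nonempty β := ⟨x⟩
  have hn : (0 : ℝ) < Fintype.card β := by exact_mod_cast Fintype.card_pos
  induction j generalizing x y with
  | zero =>
    simp only [zero_add, pow_one, nadj, Matrix.of_apply]
    gcongr
    exact adjR_le_one _ _ _
  | succ j ih =>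
    rw [pow_succ', Matrix.mul_apply]
    calc ∑ z, nadj G x z * (nadj G ^ (j + 1)) z y
        ≤ ∑ z, nadj G x z * (1 / (Fintype.card β : ℝ)) := by
          refine Finset.sum_le_sum fun z _ => ?_
          refine mul_le_mul_of_nonneg_left (ih _ _) ?_
          exact div_nonneg (adjR_nonneg _ _ _) (by positivity)
      _ = (∑ z, nadj G x z) * (1 / (Fintype.card β : ℝ)) := by rw [Finset.sum_mul]
      _ ≤ 1 * (1 / (Fintype.card β : ℝ)) := by
          gcongr; exact nadj_row_le G x
      _ = _ := one_mul _

/-- walk vector -/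
noncomputable def wv (G : SimpleGraph β) (j : ℕ) (x : β) : ℝ := ∑ y, (nadj G ^ j) x y

/-- walk densities -/
noncomputable def wd (G : SimpleGraph β) (j : ℕ) : ℝ :=
  (∑ x, wv G j x) / (Fintype.card β : ℝ)

lemma wv_nonneg (G : SimpleGraph β) (j : ℕ) (x : β) : 0 ≤ wv G j x :=
  Finset.sum_nonneg fun _ _ => nadj_pow_nonneg _ _ _ _

lemma wd_nonneg (G : SimpleGraph β) (j : ℕ) : 0 ≤ wd G j :=
  div_nonneg (Finset.sum_nonneg fun _ _ => wv_nonneg _ _ _) (by positivity)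

lemma wd_zero [Nonempty β] (G : SimpleGraph β) : wd G 0 = 1 := by
  have hn : (0 : ℝ) < Fintype.card β := by exact_mod_cast Fintype.card_pos
  simp [wd, wv, Matrix.one_apply]

lemma wd_add (G : SimpleGraph β) (i j : ℕ) :
    wd G (i + j) = (∑ x, wv G i x * wv G j x) / (Fintype.card β : ℝ) := by
  unfold wd wv
  congr 1
  simp only [pow_add, Matrix.mul_apply]
  calc ∑ x, ∑ y, ∑ z, (nadj G ^ i) x z * (nadj G ^ j) z y
      = ∑ x, ∑ z, ∑ y, (nadj G ^ i) x z * (nadj G ^ j) z y :=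
        Finset.sum_congr rfl fun x _ => Finset.sum_comm
    _ = ∑ z, ∑ x, ∑ y, (nadj G ^ i) x z * (nadj G ^ j) z y := Finset.sum_comm
    _ = _ := by
        refine Finset.sum_congr rfl fun z _ => ?_
        rw [Finset.sum_mul_sum]
        refine Finset.sum_congr rfl fun x _ => Finset.sum_congr rfl fun y _ => ?_
        rw [nadj_pow_symm G i x z]

lemma wd_cs (G : SimpleGraph β) (i j : ℕ) :
    wd G (i + j) ^ 2 ≤ wd G (i + i) * wd G (j + j) := by
  rw [wd_add, wd_add, wd_add, div_pow, div_mul_div_comm, sq (Fintype.card β : ℝ)]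
  gcongr
  have := Finset.sum_mul_sq_le_sq_mul_sq Finset.univ (wv G i) (wv G j)
  simpa [sq] using this

lemma wd_even [Nonempty β] (G : SimpleGraph β) (m : ℕ) :
    wd G (2 * m) ^ (m + 1) ≤ wd G (2 * (m + 1)) ^ m := by
  induction m with
  | zero => simp [wd_zero]
  | succ m ih =>
    have h := wd_cs G m (m + 2)
    rw [show m + (m + 2) = 2 * (m + 1) by ring, show m + m = 2 * m by ring,
      show m + 2 + (m + 2) = 2 * (m + 1 + 1) by ring] at h
    set a := wd G (2 * m)
    set b := wd G (2 * (m + 1))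
    set c := wd G (2 * (m + 1 + 1))
    have ha : 0 ≤ a := wd_nonneg _ _
    have hb : 0 ≤ b := wd_nonneg _ _
    have hc : 0 ≤ c := wd_nonneg _ _
    rcases hb.eq_or_lt with hb0 | hb0
    · rw [← hb0]; simp; positivity
    · have h1 : (b ^ 2) ^ (m + 1) ≤ (a * c) ^ (m + 1) := by gcongr
      have h2 : b ^ m * b ^ (m + 1 + 1) ≤ b ^ m * c ^ (m + 1) := by
        calc b ^ m * b ^ (m + 1 + 1) = (b ^ 2) ^ (m + 1) := by ring
          _ ≤ (a * c) ^ (m + 1) := h1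
          _ = a ^ (m + 1) * c ^ (m + 1) := by ring
          _ ≤ _ := by gcongr
      exact le_of_mul_le_mul_left h2 (by positivity)

lemma wd_even_le [Nonempty β] (G : SimpleGraph β) (θ : ℝ) (hθ : 0 ≤ θ) (k : ℕ)
    (h : wd G (2 * k) ≤ θ ^ (2 * k)) (m : ℕ) (hm : m ≤ k) : wd G (2 * m) ≤ θ ^ (2 * m) := by
  induction k, hm using Nat.le_induction with
  | base => exact h
  | succ k hk ih =>
    apply ih
    have h1 := wd_even G k
    have h2 : wd G (2 * k) ^ (k + 1) ≤ (θ ^ (2 * k)) ^ (k + 1) := by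
      calc _ ≤ _ := h1
        _ ≤ (θ ^ (2 * (k + 1))) ^ k := by
          gcongr
          exact wd_nonneg _ _
        _ = _ := by rw [← pow_mul, ← pow_mul]; congr 1; ring
    exact le_of_pow_le_pow_left₀ (by omega) (by positivity) h2

lemma wd_le [Nonempty β] (G : SimpleGraph β) (θ : ℝ) (hθ : 0 ≤ θ) (k : ℕ)
    (h : wd G (2 * k) ≤ θ ^ (2 * k)) (j : ℕ) (hj : j ≤ 2 * k) : wd G j ≤ θ ^ j := by
  rcases Nat.even_or_odd' j with ⟨m, rfl | rfl⟩
  · exact wd_even_le G θ hθ k h m (by omega)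
  · have h1 := wd_cs G m (m + 1)
    rw [show m + (m + 1) = 2 * m + 1 by ring, show m + m = 2 * m by ring,
      show m + 1 + (m + 1) = 2 * (m + 1) by ring] at h1
    have h2 := wd_even_le G θ hθ k h m (by omega)
    have h3 := wd_even_le G θ hθ k h (m + 1) (by omega)
    refine le_of_pow_le_pow_left₀ (n := 2) (by norm_num) (by positivity) ?_
    calc _ ≤ _ := h1
      _ ≤ θ ^ (2 * m) * θ ^ (2 * (m + 1)) := by
        gcongr
        exact wd_nonneg _ _
      _ = _ := by ring

/-- transfer vectors -/
noncomputable def tv (u : β → ℝ) (B : ℕ → β → β → ℝ) : ℕ → β → ℝ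
  | 0 => u
  | i + 1 => fun y => 𝔼 x, tv u B i x * B i x y

lemma expect_path (u : β → ℝ) (B : ℕ → β → β → ℝ) (m : ℕ) (h : β → ℝ) :
    𝔼 ψ : Fin (m + 1) → β, u (ψ 0) * (∏ i : Fin m, B i (ψ i.castSucc) (ψ i.succ)) *
      h (ψ (Fin.last m)) = 𝔼 y, tv u B m y * h y := by
  induction m generalizing h with
  | zero =>
    simp only [Finset.univ_eq_empty, Finset.prod_empty, mul_one, tv]
    refine Fintype.expect_equiv (Equiv.funUnique (Fin 1) β) _ _ fun ψ => ?_
    simp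
  | succ m ih =>
    rw [← Fintype.expect_equiv (Fin.snocEquiv (fun _ : Fin (m + 2) => β)) _ _ (fun _ => rfl),
      expect_prod_univ]
    refine Finset.expect_congr rfl fun b _ => ?_
    simp only [tv]
    rw [← ih (fun x => B m x b), Finset.expect_mul]
    refine Finset.expect_congr rfl fun ψ _ => ?_
    rw [Fin.prod_univ_castSucc]
    have h0 : (Fin.snocEquiv (fun _ : Fin (m + 2) => β)) (b, ψ) 0 = ψ 0 := by
      have : (0 : Fin (m + 2)) = Fin.castSucc 0 := rfl
      rw [this]; simp only [Fin.snocEquiv_apply, Fin.snoc_castSucc]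
    have h1 : ∀ i : Fin (m + 1), (Fin.snocEquiv (fun _ : Fin (m + 2) => β)) (b, ψ) i.castSucc = ψ i := by
      intro i; simp only [Fin.snocEquiv_apply, Fin.snoc_castSucc]
    have h2 : (Fin.snocEquiv (fun _ : Fin (m + 2) => β)) (b, ψ) (Fin.last (m + 1)) = b := by
      simp only [Fin.snocEquiv_apply, Fin.snoc_last]
    simp only [h0, h1, h2, Fin.succ_castSucc, Fin.succ_last, Fin.val_castSucc, Fin.val_last]
    ring

end Walk
section Dense
open Matrix
variable {β : Type*} [Fintype β] [DecidableEq β]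

lemma dense_set (G : SimpleGraph β) {ρ d : ℝ} (hG : LocallyDense G ρ d) (X : Finset β)
    (hX : ρ * (Fintype.card β : ℝ) ≤ (X.card : ℝ)) :
    d * (X.card : ℝ) ^ 2 ≤ ∑ x ∈ X, ∑ y ∈ X, adjR G x y := by
  classical
  have h := hG X hX
  let G' : SimpleGraph β :=
    { Adj := fun x y => G.Adj x y ∧ x ∈ X ∧ y ∈ X
      symm := ⟨fun x y h => ⟨h.1.symm, h.2.2, h.2.1⟩⟩
      loopless := ⟨fun x h => G.loopless.irrefl x h.1⟩ }
  have h1 : Nat.card {e : Sym2 β // e ∈ G.edgeSet ∧ ∀ v ∈ e, v ∈ X} = #G'.edgeFinset := by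
    rw [SimpleGraph.edgeFinset, Set.toFinset_card, ← Nat.card_eq_fintype_card]
    refine Nat.card_congr (Equiv.subtypeEquivRight fun e => ?_)
    induction e using Sym2.ind with
    | _ x y => simp [G']
  have h2 := G'.sum_degrees_eq_twice_card_edges
  have h3 : ∑ x ∈ X, ∑ y ∈ X, adjR G x y = ((∑ v, G'.degree v : ℕ) : ℝ) := by
    push_cast
    have : ∀ v, (G'.degree v : ℝ) = ∑ y, if G.Adj v y ∧ v ∈ X ∧ y ∈ X then (1 : ℝ) else 0 := by
      intro v
      rw [← SimpleGraph.card_neighborFinset_eq_degree, SimpleGraph.neighborFinset_eq_filter,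
        Finset.card_filter]
      push_cast
      rfl
    simp only [this]
    rw [← Finset.sum_filter_add_sum_filter_not Finset.univ (· ∈ X)]
    rw [Finset.sum_eq_zero (s := Finset.univ.filter (¬ · ∈ X))]
    · rw [add_zero]
      have e : Finset.univ.filter (· ∈ X) = X := by ext; simp
      rw [e]
      refine Finset.sum_congr rfl fun x hx => ?_
      rw [← Finset.sum_filter_add_sum_filter_not Finset.univ (· ∈ X)]
      rw [Finset.sum_eq_zero (s := Finset.univ.filter (¬ · ∈ X)), add_zero, e]
      · refine Finset.sum_congr rfl fun y hy => ?_
        simp [adjR, hx, hy]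
      · intro y hy
        simp at hy
        simp [hy]
    · intro x hx
      simp at hx
      simp [hx]
  rw [h3, h2, ← h1]
  push_cast
  linarith

/-- the defect form -/
noncomputable def defect (G : SimpleGraph β) (d : ℝ) (f : β → ℝ) : ℝ :=
  ∑ x, ∑ y, (d - adjR G x y) * (f x * f y)

lemma defect_convex (G : SimpleGraph β) (d t : ℝ) (f g : β → ℝ) :
    defect G d (fun x => (1 - t) * f x + t * g x) =
      (1 - t) * defect G d f + t * defect G d g
        - t * (1 - t) * defect G d (fun x => g x - f x) := by
  unfold defect
  simp only [Finset.mul_sum]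
  simp only [← Finset.sum_add_distrib, ← Finset.sum_sub_distrib]
  refine Finset.sum_congr rfl fun x _ => Finset.sum_congr rfl fun y _ => ?_
  ring

lemma defect_eq (G : SimpleGraph β) (d : ℝ) (f : β → ℝ) :
    defect G d f = d * (∑ x, f x) ^ 2 - ∑ x, ∑ y, f x * f y * adjR G x y := by
  unfold defect
  rw [sq, Finset.sum_mul_sum]
  simp only [Finset.mul_sum, ← Finset.sum_sub_distrib]
  refine Finset.sum_congr rfl fun x _ => Finset.sum_congr rfl fun y _ => ?_
  ring

lemma defect_le_aux (G : SimpleGraph β) {ρ d : ℝ} (hG : LocallyDense G ρ d) (hρ : 0 < ρ)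
    (hd0 : 0 ≤ d) (hd1 : d ≤ 1) (s : Finset β) :
    ∀ f : β → ℝ, (∀ x, 0 ≤ f x ∧ f x ≤ 1) → (∀ x, x ∉ s → f x = 0 ∨ f x = 1) →
      defect G d f ≤ ρ ^ 2 * (Fintype.card β : ℝ) ^ 2 := by
  induction s using Finset.induction_on with
  | empty =>
    intro f _ hf
    classical
    set X := Finset.univ.filter (fun x => f x = 1) with hX
    have hfX : ∀ x, f x = if x ∈ X then 1 else 0 := by
      intro x
      rcases hf x (by simp) with h | h <;> simp [hX, h]
    have hs : ∑ x, f x = (X.card : ℝ) := by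
      rw [Finset.sum_congr rfl fun x _ => hfX x]
      simp
    have hss : ∑ x, ∑ y, f x * f y * adjR G x y = ∑ x ∈ X, ∑ y ∈ X, adjR G x y := by
      rw [Finset.sum_congr rfl fun x _ => Finset.sum_congr rfl fun y _ => by rw [hfX x, hfX y]]
      simp
    rw [defect_eq, hs, hss]
    by_cases h : ρ * (Fintype.card β : ℝ) ≤ (X.card : ℝ)
    · have := dense_set G hG X h
      have h0 : 0 ≤ ρ ^ 2 * (Fintype.card β : ℝ) ^ 2 := by positivity
      linarith
    · push Not at h
      have h0 : 0 ≤ ∑ x ∈ X, ∑ y ∈ X, adjR G x y :=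
        Finset.sum_nonneg fun _ _ => Finset.sum_nonneg fun _ _ => adjR_nonneg _ _ _
      have h1 : (X.card : ℝ) ^ 2 ≤ (ρ * (Fintype.card β : ℝ)) ^ 2 :=
        pow_le_pow_left₀ (Nat.cast_nonneg _) h.le 2
      have h2 : d * (X.card : ℝ) ^ 2 ≤ 1 * (X.card : ℝ) ^ 2 :=
        mul_le_mul_of_nonneg_right hd1 (sq_nonneg _)
      rw [mul_pow] at h1
      linarith
  | insert a s ha ih =>
    intro f hf hf'
    set f0 := Function.update f a 0 with hf0
    set f1 := Function.update f a 1 with hf1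
    have e : f = fun x => (1 - f a) * f0 x + f a * f1 x := by
      ext x
      by_cases hx : x = a
      · subst hx; simp [hf0, hf1]
      · simp [hf0, hf1, hx]; ring
    have h0 : defect G d f0 ≤ ρ ^ 2 * (Fintype.card β : ℝ) ^ 2 := by
      apply ih
      · intro x
        by_cases hx : x = a
        · subst hx; simp [hf0]
        · simp [hf0, hx, hf x]
      · intro x hxs
        by_cases hx : x = a
        · subst hx; simp [hf0]
        · have := hf' x (by simp [hx, hxs])
          simpa [hf0, hx] using this
    have h1 : defect G d f1 ≤ ρ ^ 2 * (Fintype.card β : ℝ) ^ 2 := by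
      apply ih
      · intro x
        by_cases hx : x = a
        · subst hx; simp [hf1]
        · simp [hf1, hx, hf x]
      · intro x hxs
        by_cases hx : x = a
        · subst hx; simp [hf1]
        · have := hf' x (by simp [hx, hxs])
          simpa [hf1, hx] using this
    have h2 : 0 ≤ defect G d (fun x => f1 x - f0 x) := by
      have : (fun x => f1 x - f0 x) = Pi.single a 1 := by
        ext x
        by_cases hx : x = a
        · subst hx; simp [hf0, hf1]
        · simp [hf0, hf1, hx]
      rw [this]
      unfold defect
      rw [Finset.sum_eq_single a, Finset.sum_eq_single a]
      · simp [adjR, hd0]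
      · intro b _ hb; simp [hb]
      · simp
      · intro b _ hb; simp [hb]
      · simp
    rw [e, defect_convex]
    have ha0 := (hf a).1
    have ha1 : 0 ≤ 1 - f a := by linarith [(hf a).2]
    have h3 := mul_le_mul_of_nonneg_left h0 ha1
    have h4 := mul_le_mul_of_nonneg_left h1 ha0
    have h5 := mul_nonneg (mul_nonneg ha0 ha1) h2
    linarith

lemma dense_fun (G : SimpleGraph β) {ρ d : ℝ} (hG : LocallyDense G ρ d) (hρ : 0 < ρ)
    (hd0 : 0 ≤ d) (hd1 : d ≤ 1) (f : β → ℝ) (hf : ∀ x, 0 ≤ f x ∧ f x ≤ 1) :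
    d * (∑ x, f x) ^ 2 - ρ ^ 2 * (Fintype.card β : ℝ) ^ 2 ≤
      ∑ x, ∑ y, f x * f y * adjR G x y := by
  have := defect_le_aux G hG hρ hd0 hd1 Finset.univ f hf (by simp)
  rw [defect_eq] at this
  linarith

lemma wd_one_ge [Nonempty β] (G : SimpleGraph β) {ρ d : ℝ} (hG : LocallyDense G ρ d)
    (hρ1 : ρ ≤ 1) : d ≤ wd G 1 := by
  have hn : (0 : ℝ) < Fintype.card β := by exact_mod_cast Fintype.card_pos
  have h := dense_set G hG Finset.univ (by
    rw [Finset.card_univ]; nlinarith)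
  rw [Finset.card_univ] at h
  unfold wd wv
  simp only [pow_one, nadj, Matrix.of_apply, ← Finset.sum_div]
  rw [div_div, le_div_iff₀ (by positivity), ← sq]
  exact h

lemma trace_ge [Nonempty β] (G : SimpleGraph β) {ρ d : ℝ} (hG : LocallyDense G ρ d) (hρ : 0 < ρ)
    (hd0 : 0 ≤ d) (hd1 : d ≤ 1) (k : ℕ) (hk : 1 ≤ k) :
    d * wd G (2 * k) - ρ ^ 2 ≤ ∑ b, ∑ y, (nadj G ^ (2 * k)) b y * nadj G y b := by
  have hn : (0 : ℝ) < Fintype.card β := by exact_mod_cast Fintype.card_pos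
  set n : ℝ := (Fintype.card β : ℝ) with hndef
  have e1 : ∑ b, ∑ y, (nadj G ^ (2 * k)) b y * nadj G y b =
      ∑ z, ∑ x, ∑ y, (nadj G ^ k) z x * (nadj G ^ k) z y * (adjR G x y / n) := by
    calc _ = ∑ x, ∑ y, ∑ z, (nadj G ^ k) x z * (nadj G ^ k) z y * nadj G y x := by
          refine Finset.sum_congr rfl fun x _ => Finset.sum_congr rfl fun y _ => ?_
          rw [two_mul, pow_add, Matrix.mul_apply, Finset.sum_mul]
      _ = ∑ x, ∑ z, ∑ y, (nadj G ^ k) x z * (nadj G ^ k) z y * nadj G y x :=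
          Finset.sum_congr rfl fun x _ => Finset.sum_comm
      _ = ∑ z, ∑ x, ∑ y, (nadj G ^ k) x z * (nadj G ^ k) z y * nadj G y x := Finset.sum_comm
      _ = _ := by
          refine Finset.sum_congr rfl fun z _ => Finset.sum_congr rfl fun x _ =>
            Finset.sum_congr rfl fun y _ => ?_
          rw [nadj_pow_symm G k x z, adjR_symm G x y]
          rfl
  have e2 : ∀ z, d * wv G k z ^ 2 / n - ρ ^ 2 / n ≤
      ∑ x, ∑ y, (nadj G ^ k) z x * (nadj G ^ k) z y * (adjR G x y / n) := by
    intro z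
    have h := dense_fun G hG hρ hd0 hd1 (fun x => n * (nadj G ^ k) z x) (fun x =>
      ⟨mul_nonneg hn.le (nadj_pow_nonneg _ _ _ _), by
        obtain ⟨j, rfl⟩ : ∃ j, k = j + 1 := ⟨k - 1, by omega⟩
        have := mul_le_mul_of_nonneg_left (nadj_pow_le G j z x) hn.le
        rw [← hndef] at this
        have h3 : n * (1 / n) = 1 := by field_simp
        linarith⟩)
    rw [← hndef, ← Finset.mul_sum] at h
    have h5 : ∑ x, ∑ y, n * (nadj G ^ k) z x * (n * (nadj G ^ k) z y) * adjR G x y =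
        n ^ 3 * ∑ x, ∑ y, (nadj G ^ k) z x * (nadj G ^ k) z y * (adjR G x y / n) := by
      simp only [Finset.mul_sum]
      refine Finset.sum_congr rfl fun x _ => Finset.sum_congr rfl fun y _ => ?_
      field_simp
    rw [h5] at h
    have h6 : d * (n * ∑ x, (nadj G ^ k) z x) ^ 2 - ρ ^ 2 * n ^ 2 =
        n ^ 3 * (d * wv G k z ^ 2 / n - ρ ^ 2 / n) := by
      unfold wv; field_simp
    rw [h6] at h
    exact le_of_mul_le_mul_left h (by positivity)
  rw [e1]
  refine le_trans (le_of_eq ?_) (Finset.sum_le_sum fun z _ => e2 z)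
  rw [Finset.sum_sub_distrib, two_mul, wd_add, ← Finset.sum_div, ← Finset.mul_sum]
  simp only [← sq, Finset.sum_const, Finset.card_univ, nsmul_eq_mul, ← hndef]
  field_simp

lemma tv_adj (G : SimpleGraph β) (b : β) (m : ℕ) :
    tv (fun x => if b = x then 1 else 0) (fun _ => adjR G) m = fun y => (nadj G ^ m) b y := by
  induction m with
  | zero => ext y; simp [tv, Matrix.one_apply]
  | succ m ih =>
    ext y
    simp only [tv, ih]
    rw [pow_succ, Matrix.mul_apply, Fintype.expect_eq_sum_div_card, Finset.sum_div]
    refine Finset.sum_congr rfl fun x _ => ?_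
    simp only [nadj, Matrix.of_apply]; ring

lemma cycle_expect (G : SimpleGraph β) (m : ℕ) :
    𝔼 ψ : Fin (m + 1) → β, (∏ i : Fin m, adjR G (ψ i.castSucc) (ψ i.succ)) *
      adjR G (ψ (Fin.last m)) (ψ 0) = ∑ b, ∑ y, (nadj G ^ m) b y * nadj G y b := by
  have h1 : ∀ ψ : Fin (m + 1) → β, (∏ i : Fin m, adjR G (ψ i.castSucc) (ψ i.succ)) *
      adjR G (ψ (Fin.last m)) (ψ 0) = ∑ b, (if b = ψ 0 then (1 : ℝ) else 0) *
        (∏ i : Fin m, adjR G (ψ i.castSucc) (ψ i.succ)) * adjR G (ψ (Fin.last m)) b := by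
    intro ψ
    rw [Finset.sum_eq_single (ψ 0)]
    · simp
    · intro b _ hb; simp [hb]
    · simp
  simp only [h1]
  rw [Finset.expect_sum_comm]
  refine Finset.sum_congr rfl fun b _ => ?_
  rw [expect_path (fun x => if b = x then 1 else 0) (fun _ => adjR G) m (fun y => adjR G y b),
    tv_adj, Fintype.expect_eq_sum_div_card, Finset.sum_div]
  refine Finset.sum_congr rfl fun x _ => ?_
  simp only [nadj, Matrix.of_apply]; ring

lemma forest_expect [Nonempty β] (G : SimpleGraph β) (θ : ℝ) (hθ : 0 ≤ θ) (k : ℕ)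
    (h : wd G (2 * k) ≤ θ ^ (2 * k)) (E : ℕ → Prop) [DecidablePred E] (m : ℕ) (hm : m ≤ 2 * k) :
    𝔼 ψ : Fin (m + 1) → β, (∏ i : Fin m, if E i then adjR G (ψ i.castSucc) (ψ i.succ) else 1)
      ≤ θ ^ (#{i ∈ Finset.range m | E i}) := by
  have h1 := expect_path (fun _ : β => (1 : ℝ)) (fun i x y => if E i then adjR G x y else 1) m
    (fun _ => 1)
  simp only [one_mul, mul_one] at h1
  rw [h1]
  have key : ∀ m, m ≤ 2 * k → ∃ (c : ℝ) (r : ℕ), 0 ≤ c ∧ r ≤ m ∧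
      (tv (fun _ : β => (1 : ℝ)) (fun i x y => if E i then adjR G x y else 1) m =
        fun y => c * wv G r y) ∧ c * θ ^ r ≤ θ ^ (#{i ∈ Finset.range m | E i}) := by
    intro m
    induction m with
    | zero =>
      intro _
      refine ⟨1, 0, by norm_num, le_rfl, ?_, by simp⟩
      ext y
      simp [tv, wv, Matrix.one_apply]
    | succ m ih =>
      intro hm
      obtain ⟨c, r, hc, hr, h2, h3⟩ := ih (by omega)
      by_cases hE : E m
      · refine ⟨c, r + 1, hc, by omega, ?_, ?_⟩
        · ext y
          simp only [tv, h2, hE, if_true]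
          rw [Fintype.expect_eq_sum_div_card]
          have : wv G (r + 1) y = ∑ x, nadj G y x * wv G r x := by
            unfold wv
            simp only [pow_succ', Matrix.mul_apply, Finset.mul_sum]
            rw [Finset.sum_comm]
          rw [this, Finset.mul_sum, Finset.sum_div]
          refine Finset.sum_congr rfl fun x _ => ?_
          simp only [nadj, Matrix.of_apply, adjR_symm G x y]; ring
        · rw [Finset.range_add_one, Finset.filter_insert, if_pos hE,
            Finset.card_insert_of_notMem (by simp), pow_succ, pow_succ, ← mul_assoc]
          gcongr
      · refine ⟨c * wd G r, 0, mul_nonneg hc (wd_nonneg _ _), by omega, ?_, ?_⟩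
        · ext y
          simp only [tv, h2, hE, if_false, mul_one]
          rw [Fintype.expect_eq_sum_div_card, ← Finset.mul_sum]
          simp [wd, wv, Matrix.one_apply]
          ring
        · rw [Finset.range_add_one, Finset.filter_insert, if_neg hE]
          have := wd_le G θ hθ k h r (by omega)
          simp only [pow_zero, mul_one]
          exact le_trans (mul_le_mul_of_nonneg_left this hc) h3
  obtain ⟨c, r, hc, hr, h2, h3⟩ := key m hm
  rw [h2, Fintype.expect_eq_sum_div_card, ← Finset.mul_sum, mul_div_assoc]
  exact le_trans (mul_le_mul_of_nonneg_left (wd_le G θ hθ k h r (by omega)) hc) h3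

end Dense
section Transfer
variable {α β : Type*} [Fintype α] [DecidableEq α] [Fintype β]

lemma expect_comp [Nonempty β] {γ : Type*} [Fintype γ] [DecidableEq γ] (g : γ → α)
    (hg : Function.Injective g) (F : (γ → β) → ℝ) :
    𝔼 φ : α → β, F (fun i => φ (g i)) = 𝔼 ψ : γ → β, F ψ := by
  classical
  let e1 := Equiv.piEquivPiSubtypeProd (fun a => a ∈ Set.range g) (fun _ : α => β)
  let e2 : γ ≃ {a // a ∈ Set.range g} := Equiv.ofInjective g hg
  rw [Fintype.expect_equiv e1 (fun φ : α → β => F (fun i => φ (g i)))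
    (fun p => F (fun i => p.1 (e2 i))) (fun φ => rfl), expect_prod_univ]
  simp only [Fintype.expect_const]
  exact Fintype.expect_equiv (e2.arrowCongr (Equiv.refl β)).symm _ _ (fun ψ => rfl)

/-- `φ` preserves the edges of `H` inside `S`. -/
def good (H : SimpleGraph α) (G : SimpleGraph β) (S : Finset α) (φ : α → β) : Prop :=
  ∀ u ∈ S, ∀ v ∈ S, H.Adj u v → G.Adj (φ u) (φ v)

open Classical in
/-- density of `H[S]` in `G`. -/
noncomputable def td (H : SimpleGraph α) (G : SimpleGraph β) (S : Finset α) : ℝ :=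
  𝔼 φ : α → β, if good H G S φ then (1 : ℝ) else 0

open Classical in
/-- edges of `H` inside `S`. -/
noncomputable def edgesIn (H : SimpleGraph α) (S : Finset α) : Finset (Sym2 α) :=
  Finset.univ.filter fun e => e ∈ H.edgeSet ∧ ∀ v ∈ e, v ∈ S

/-- cyclic parametrisation of a bag. -/
structure Param (H : SimpleGraph α) (k : ℕ) (Y : Finset α) (g : Fin (2 * k + 1) → α) : Prop where
  inj : Function.Injective g
  mem : ∀ v, v ∈ Y ↔ ∃ i, g i = v
  adj : ∀ i j, H.Adj (g i) (g j) ↔ (j = i + 1 ∨ i = j + 1)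

lemma exists_param (H : SimpleGraph α) (k : ℕ) (hk : 1 ≤ k) (Y : Finset α)
    (h : Nonempty (H.induce (Y : Set α) ≃g SimpleGraph.cycleGraph (2 * k + 1))) :
    ∃ g, Param H k Y g := by
  obtain ⟨e⟩ := h
  obtain ⟨j, rfl⟩ : ∃ j, k = j + 1 := ⟨k - 1, by omega⟩
  refine ⟨fun i => (e.symm i).1, ?_, ?_, ?_⟩
  · intro a b hab
    exact e.symm.injective (Subtype.ext hab)
  · intro v
    constructor
    · intro hv
      exact ⟨e ⟨v, hv⟩, by simp⟩
    · rintro ⟨i, rfl⟩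
      exact (e.symm i).2
  · intro a b
    have h1 : H.Adj (e.symm a).1 (e.symm b).1 ↔ (SimpleGraph.cycleGraph (2 * (j + 1) + 1)).Adj a b := by
      rw [← e.symm.map_adj_iff]; rfl
    rw [h1]
    have h2 := SimpleGraph.cycleGraph_adj (n := 2 * j + 1) (u := a) (v := b)
    refine h2.trans ?_
    rw [or_comm, sub_eq_iff_eq_add, sub_eq_iff_eq_add, add_comm 1 a, add_comm 1 b]

lemma Param.rotate {H : SimpleGraph α} {k : ℕ} {Y : Finset α} {g : Fin (2 * k + 1) → α}
    (h : Param H k Y g) (c : Fin (2 * k + 1)) : Param H k Y (fun i => g (i + c)) := by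
  refine ⟨fun a b hab => add_right_cancel (h.inj hab), ?_, ?_⟩
  · intro v
    rw [h.mem]
    constructor
    · rintro ⟨i, rfl⟩
      exact ⟨i - c, by simp⟩
    · rintro ⟨i, rfl⟩
      exact ⟨_, rfl⟩
  · intro i j
    rw [h.adj, add_right_comm i c 1, add_right_comm j c 1, add_left_inj, add_left_inj]

lemma Param.td_eq [Nonempty β] [DecidableEq β] {H : SimpleGraph α} {k : ℕ} {Y : Finset α}
    {g : Fin (2 * k + 1) → α} (h : Param H k Y g) (G : SimpleGraph β) :
    td H G Y = ∑ b, ∑ y, (nadj G ^ (2 * k)) b y * nadj G y b := by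
  classical
  rw [← cycle_expect, ← expect_comp g h.inj]
  unfold td
  refine Finset.expect_congr rfl fun φ _ => ?_
  have h1 : (∏ i : Fin (2 * k), adjR G (φ (g i.castSucc)) (φ (g i.succ))) *
      adjR G (φ (g (Fin.last (2 * k)))) (φ (g 0)) =
      ∏ i : Fin (2 * k + 1), adjR G (φ (g i)) (φ (g (i + 1))) := by
    rw [Fin.prod_univ_castSucc]
    simp only [Fin.coeSucc_eq_succ, Fin.last_add_one]
  rw [h1]
  unfold adjR
  rw [Finset.prod_boole]
  have hiff : good H G Y φ ↔ ∀ i ∈ (Finset.univ : Finset (Fin (2 * k + 1))),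
      G.Adj (φ (g i)) (φ (g (i + 1))) := ?_
  · by_cases hP : good H G Y φ
    · rw [if_pos hP, if_pos (hiff.1 hP)]
    · rw [if_neg hP, if_neg (fun hc => hP (hiff.2 hc))]
  constructor
  · intro hg i _
    exact hg _ ((h.mem _).2 ⟨_, rfl⟩) _ ((h.mem _).2 ⟨_, rfl⟩) ((h.adj _ _).2 (Or.inl rfl))
  · intro hg u hu v hv huv
    obtain ⟨i, rfl⟩ := (h.mem _).1 hu
    obtain ⟨j, rfl⟩ := (h.mem _).1 hv
    rcases (h.adj _ _).1 huv with rfl | rfl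
    · exact hg _ (Finset.mem_univ _)
    · exact (hg _ (Finset.mem_univ _)).symm

lemma Param.edges_ge {H : SimpleGraph α} {k : ℕ} (hk : 1 ≤ k) {Y : Finset α}
    {g : Fin (2 * k + 1) → α} (h : Param H k Y g) : #(edgesIn H Y) = 2 * k + 1 := by
  classical
  have h2 : edgesIn H Y = Finset.univ.image (fun i : Fin (2 * k + 1) => s(g i, g (i + 1))) := by
    ext e
    induction e using Sym2.ind with
    | _ u v =>
      simp only [edgesIn, Finset.mem_filter, Finset.mem_univ, true_and, Finset.mem_image,
        SimpleGraph.mem_edgeSet, Sym2.mem_iff, forall_eq_or_imp, forall_eq]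
      constructor
      · rintro ⟨huv, hu, hv⟩
        obtain ⟨i, rfl⟩ := (h.mem _).1 hu
        obtain ⟨j, rfl⟩ := (h.mem _).1 hv
        rcases (h.adj _ _).1 huv with rfl | rfl
        · exact ⟨i, rfl⟩
        · exact ⟨j, Sym2.eq_swap⟩
      · rintro ⟨i, hi⟩
        have hadj : H.Adj (g i) (g (i + 1)) := (h.adj _ _).2 (Or.inl rfl)
        have hi1 : g i ∈ Y := (h.mem _).2 ⟨_, rfl⟩
        have hi2 : g (i + 1) ∈ Y := (h.mem _).2 ⟨_, rfl⟩
        rcases Sym2.eq_iff.1 hi with ⟨rfl, rfl⟩ | ⟨rfl, rfl⟩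
        · exact ⟨hadj, hi1, hi2⟩
        · exact ⟨hadj.symm, hi2, hi1⟩
  rw [h2, Finset.card_image_of_injective, Finset.card_univ, Fintype.card_fin]
  intro i j hij
  rcases Sym2.eq_iff.1 hij with ⟨h1, _⟩ | ⟨h1, h2⟩
  · exact h.inj h1
  · have e1 := h.inj h1
    have e2 := h.inj h2
    exfalso
    rw [e1, add_assoc] at e2
    have e3 : (1 + 1 : Fin (2 * k + 1)) = 0 := by simpa using e2
    obtain ⟨q, rfl⟩ : ∃ q, k = q + 1 := ⟨k - 1, by omega⟩
    have e4 : (1 % (2 * (q + 1) + 1) + 1 % (2 * (q + 1) + 1)) % (2 * (q + 1) + 1) =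
      0 % (2 * (q + 1) + 1) := congrArg Fin.val e3
    rw [Nat.mod_eq_of_lt (show 1 < 2 * (q + 1) + 1 by omega),
      Nat.mod_eq_of_lt (show 1 + 1 < 2 * (q + 1) + 1 by omega)] at e4
    simp at e4

lemma Param.td_le [Nonempty β] [DecidableEq β] {H : SimpleGraph α} {k : ℕ} (hk : 1 ≤ k)
    {Y : Finset α}
    {g : Fin (2 * k + 1) → α} (h : Param H k Y g) (G : SimpleGraph β) (θ : ℝ) (hθ : 0 ≤ θ)
    (hW : wd G (2 * k) ≤ θ ^ (2 * k)) (S : Finset α) (hSY : S ⊆ Y) (hS : S ≠ Y) :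
    ∃ j, #(edgesIn H S) ≤ j ∧ j ≤ 2 * k ∧ td H G S ≤ θ ^ j := by
  classical
  obtain ⟨y, hyY, hyS⟩ : ∃ y ∈ Y, y ∉ S := by
    by_contra hc
    push Not at hc
    exact hS (Finset.Subset.antisymm hSY hc)
  obtain ⟨c, rfl⟩ := (h.mem _).1 hyY
  have h' := h.rotate (c + 1)
  set g' : Fin (2 * k + 1) → α := fun i => g (i + (c + 1)) with hg'
  have hlast : g' (Fin.last (2 * k)) ∉ S := by
    have : Fin.last (2 * k) + (c + 1) = c := by
      rw [add_comm c 1, ← add_assoc, Fin.last_add_one, zero_add]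
    simp only [hg', this]
    exact hyS
  clear_value g'
  have hof : ∀ i : Fin (2 * k + 1), Fin.ofNat (2 * k + 1) i.val = i :=
    fun i => Fin.ext (Nat.mod_eq_of_lt i.2)
  set E : ℕ → Prop := fun i => g' (Fin.ofNat (2 * k + 1) i) ∈ S ∧ g' ((Fin.ofNat (2 * k + 1) i) + 1) ∈ S
    with hE
  refine ⟨#{i ∈ Finset.range (2 * k) | E i}, ?_, ?_, ?_⟩
  · have : edgesIn H S ⊆ ({i ∈ Finset.range (2 * k) | E i}).image
        (fun i : ℕ => s(g' (Fin.ofNat (2 * k + 1) i), g' ((Fin.ofNat (2 * k + 1) i) + 1))) := by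
      intro e
      induction e using Sym2.ind with
      | _ u v =>
        simp only [edgesIn, Finset.mem_filter, Finset.mem_univ, true_and, Finset.mem_image,
          SimpleGraph.mem_edgeSet, Sym2.mem_iff, forall_eq_or_imp, forall_eq]
        rintro ⟨huv, hu, hv⟩
        obtain ⟨i, rfl⟩ := (h'.mem _).1 (hSY hu)
        obtain ⟨j, rfl⟩ := (h'.mem _).1 (hSY hv)
        have aux : ∀ i : Fin (2 * k + 1), g' i ∈ S → (i : ℕ) < 2 * k := by
          intro i hi
          have h1 : i ≠ Fin.last (2 * k) := by rintro rfl; exact hlast hi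
          exact Fin.val_lt_last h1
        rcases (h'.adj _ _).1 huv with rfl | rfl
        · refine ⟨i, ⟨Finset.mem_range.2 (aux i hu), ?_⟩, ?_⟩
          · simp only [hE, hof]; exact ⟨hu, hv⟩
          · simp only [hof]
        · refine ⟨j, ⟨Finset.mem_range.2 (aux j hv), ?_⟩, ?_⟩
          · simp only [hE, hof]; exact ⟨hv, hu⟩
          · simp only [hof]; exact Sym2.eq_swap
    exact (Finset.card_le_card this).trans Finset.card_image_le
  · exact (Finset.card_filter_le _ _).trans (by simp)
  · refine le_trans ?_ (forest_expect G θ hθ k hW E (2 * k) le_rfl)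
    rw [← expect_comp g' h'.inj]
    unfold td
    refine Finset.expect_le_expect fun φ _ => ?_
    have hcast : ∀ i : Fin (2 * k), Fin.ofNat (2 * k + 1) (i : ℕ) = i.castSucc :=
      fun i => hof i.castSucc
    split_ifs with hgood
    · refine le_of_eq (Finset.prod_eq_one fun i _ => ?_).symm
      split_ifs with hEi
      · simp only [hE, hcast, Fin.coeSucc_eq_succ] at hEi
        have : G.Adj (φ (g' i.castSucc)) (φ (g' i.succ)) := by
          refine hgood _ hEi.1 _ hEi.2 ((h'.adj _ _).2 (Or.inl ?_))
          rw [Fin.coeSucc_eq_succ]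
        simp [adjR, this]
      · rfl
    · refine Finset.prod_nonneg fun i _ => ?_
      split_ifs
      · exact adjR_nonneg _ _ _
      · norm_num

lemma td_pos_of_le {H : SimpleGraph α} {G : SimpleGraph β} {S Y : Finset α} (h : S ⊆ Y) :
    td H G Y ≤ td H G S := by
  classical
  unfold td
  refine Finset.expect_le_expect fun φ _ => ?_
  split_ifs with h1 h2 h2
  · exact le_rfl
  · exact absurd (fun u hu v hv huv => h1 u (h hu) v (h hv) huv) h2
  · norm_num
  · exact le_rfl

/-- the numerical bound for one bag -/
lemma Param.bound [Nonempty β] [DecidableEq β] {H : SimpleGraph α} {k : ℕ} (hk : 1 ≤ k)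
    {Y : Finset α}
    {g : Fin (2 * k + 1) → α} (h : Param H k Y g) (G : SimpleGraph β) {ρ d ε : ℝ}
    (hG : LocallyDense G ρ d) (hρ : 0 < ρ) (hρ1 : ρ ≤ 1) (hd0 : 0 < d) (hd1 : d ≤ 1)
    (hε : 0 < ε) (hε1 : ε < 1) (hρε : ρ ≤ ε * d ^ (2 * k + 1)) :
    0 < td H G Y ∧ ∀ S ⊆ Y, - Real.log (td H G Y) + Real.log (td H G S) ≤
      - Real.log (1 - ε) - ((#(edgesIn H Y) : ℝ) - #(edgesIn H S)) * Real.log d := by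
  obtain ⟨θ, hθ0, hθ⟩ : ∃ θ : ℝ, 0 ≤ θ ∧ θ ^ (2 * k) = wd G (2 * k) :=
    ⟨(wd G (2 * k)) ^ (((2 * k : ℕ) : ℝ)⁻¹), Real.rpow_nonneg (wd_nonneg _ _) _,
      Real.rpow_inv_natCast_pow (wd_nonneg _ _) (by omega)⟩
  have hdθ : d ≤ θ := by
    have h1 := wd_one_ge G hG hρ1
    have h2 := wd_le G θ hθ0 k hθ.ge 1 (by omega)
    rw [pow_one] at h2
    exact h1.trans h2
  have hθpos : 0 < θ := hd0.trans_le hdθ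
  have h1ε : 0 < 1 - ε := by linarith
  have hT : (1 - ε) * (d * θ ^ (2 * k)) ≤ td H G Y := by
    rw [h.td_eq]
    have h1 := trace_ge G hG hρ hd0.le hd1 k hk
    rw [← hθ] at h1
    have h2 : ρ ^ 2 ≤ ρ := by nlinarith
    have h3 : d ^ (2 * k + 1) ≤ d * θ ^ (2 * k) := by
      rw [pow_succ, mul_comm]; gcongr
    have h4 := mul_le_mul_of_nonneg_left h3 hε.le
    linarith
  have hTpos : 0 < td H G Y := lt_of_lt_of_le (by positivity) hT
  refine ⟨hTpos, fun S hS => ?_⟩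
  have hlogε : Real.log (1 - ε) ≤ 0 := Real.log_nonpos h1ε.le (by linarith)
  by_cases hSY : S = Y
  · subst hSY
    simp
    exact hlogε
  · obtain ⟨j, hj1, hj2, hj3⟩ := h.td_le hk G θ hθ0 hθ.ge S hS hSY
    have hSpos : 0 < td H G S := hTpos.trans_le (td_pos_of_le hS)
    have l1 := Real.log_le_log (by positivity) hT
    rw [Real.log_mul h1ε.ne' (by positivity), Real.log_mul hd0.ne' (by positivity),
      Real.log_pow] at l1
    have l2 := Real.log_le_log hSpos hj3
    rw [Real.log_pow] at l2
    have l3 := Real.log_le_log hd0 hdθ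
    have l4 := Real.log_nonpos hd0.le hd1
    rw [h.edges_ge hk]
    push_cast at l1 ⊢
    have hj1' : (#(edgesIn H S) : ℝ) ≤ j := by exact_mod_cast hj1
    have hj2' : (j : ℝ) ≤ 2 * k := by exact_mod_cast hj2
    nlinarith [mul_nonneg (sub_nonneg.2 hj2') (sub_nonneg.2 l3),
      mul_nonneg (sub_nonneg.2 hj1') (neg_nonneg.2 l4)]

end Transfer
section Build
variable {α β : Type*} [Fintype α] [DecidableEq α] [Fintype β]

open Classical in
/-- normalised density of the uniform distribution on copies of `H[X]`. -/
noncomputable def cd (H : SimpleGraph α) (G : SimpleGraph β) (X : Finset α) (φ : α → β) : ℝ :=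
  if good H G X φ then 1 / td H G X else 0

lemma good_congr {H : SimpleGraph α} {G : SimpleGraph β} {X : Finset α} {φ ψ : α → β}
    (h : ∀ i ∈ X, φ i = ψ i) : good H G X φ ↔ good H G X ψ := by
  unfold good
  constructor
  · intro hg u hu v hv huv
    rw [← h u hu, ← h v hv]; exact hg u hu v hv huv
  · intro hg u hu v hv huv
    rw [h u hu, h v hv]; exact hg u hu v hv huv

lemma td_nonneg (H : SimpleGraph α) (G : SimpleGraph β) (X : Finset α) : 0 ≤ td H G X := by
  unfold td
  exact Finset.expect_nonneg fun _ _ => by split_ifs <;> norm_num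

lemma cd_nonneg (H : SimpleGraph α) (G : SimpleGraph β) (X : Finset α) (φ : α → β) :
    0 ≤ cd H G X φ := by
  unfold cd
  split_ifs
  · exact div_nonneg zero_le_one (td_nonneg _ _ _)
  · exact le_rfl

lemma cd_good {H : SimpleGraph α} {G : SimpleGraph β} {X : Finset α} {φ : α → β}
    (h : cd H G X φ ≠ 0) : good H G X φ := by
  by_contra hc
  exact h (by simp [cd, hc])

lemma cd_dep (H : SimpleGraph α) (G : SimpleGraph β) (X : Finset α) :
    DependsOn (cd H G X) (X : Set α) := by
  intro φ ψ h
  have : good H G X φ ↔ good H G X ψ := good_congr fun i hi => h i (by simpa using hi)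
  unfold cd
  by_cases hP : good H G X φ
  · rw [if_pos hP, if_pos (this.1 hP)]
  · rw [if_neg hP, if_neg (fun hc => hP (this.2 hc))]

lemma cd_expect (H : SimpleGraph α) (G : SimpleGraph β) (X : Finset α) (h : 0 < td H G X) :
    𝔼 φ, cd H G X φ = 1 := by
  classical
  have : ∀ φ, cd H G X φ = (if good H G X φ then (1 : ℝ) else 0) * (1 / td H G X) := by
    intro φ; unfold cd; split_ifs <;> simp
  simp only [this]
  rw [← Finset.expect_mul]
  change td H G X * (1 / td H G X) = 1
  field_simp

lemma cd_ent (H : SimpleGraph α) (G : SimpleGraph β) (X : Finset α) (h : 0 < td H G X) :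
    𝔼 φ, cd H G X φ * Real.log (cd H G X φ) = - Real.log (td H G X) := by
  classical
  have : ∀ φ, cd H G X φ * Real.log (cd H G X φ) = cd H G X φ * (- Real.log (td H G X)) := by
    intro φ; unfold cd; split_ifs <;> simp
  simp only [this]
  rw [← Finset.expect_mul, cd_expect H G X h, one_mul]

lemma good_iso (H : SimpleGraph α) (G : SimpleGraph β) (X Y : Finset α) (σ : Equiv.Perm α)
    (hm : ∀ x, x ∈ X ↔ σ x ∈ Y) (hadj : ∀ u ∈ X, ∀ v ∈ X, H.Adj u v ↔ H.Adj (σ u) (σ v))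
    (φ : α → β) : good H G X φ ↔ good H G Y (fun a => φ (σ.symm a)) := by
  constructor
  · intro h u hu v hv huv
    refine h _ ((hm _).2 (by simpa using hu)) _ ((hm _).2 (by simpa using hv)) ?_
    rw [hadj _ ((hm _).2 (by simpa using hu)) _ ((hm _).2 (by simpa using hv))]
    simpa using huv
  · intro h u hu v hv huv
    have := h (σ u) ((hm _).1 hu) (σ v) ((hm _).1 hv) ((hadj u hu v hv).1 huv)
    simpa using this

lemma condE_cd_iso (H : SimpleGraph α) (G : SimpleGraph β) (X Y : Finset α)
    (e : H.induce (X : Set α) ≃g H.induce (Y : Set α))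
    (he : ∀ (v : α) (h1 : v ∈ X) (h2 : v ∈ Y), ((e ⟨v, h1⟩ : (Y : Set α)) : α) = v) :
    condE (X ∩ Y) (cd H G X) = condE (X ∩ Y) (cd H G Y) := by
  classical
  let e' : {x // x ∈ X} ≃ {x // x ∈ Y} := e.toEquiv
  let σ : Equiv.Perm α := e'.extendSubtype
  have hσ : ∀ (x : α) (hx : x ∈ X), σ x = (e ⟨x, hx⟩ : (Y : Set α)).1 := fun x hx =>
    Equiv.extendSubtype_apply_of_mem e' x hx
  have hm : ∀ x, x ∈ X ↔ σ x ∈ Y := by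
    intro x
    constructor
    · intro hx; exact Equiv.extendSubtype_mem e' x hx
    · intro hx
      by_contra hc
      exact Equiv.extendSubtype_not_mem e' x hc hx
  have hadj : ∀ u ∈ X, ∀ v ∈ X, H.Adj u v ↔ H.Adj (σ u) (σ v) := by
    intro u hu v hv
    rw [hσ u hu, hσ v hv]
    exact (e.map_adj_iff (v := ⟨u, hu⟩) (w := ⟨v, hv⟩)).symm
  have hfix : ∀ x ∈ X ∩ Y, σ x = x := by
    intro x hx
    rw [Finset.mem_inter] at hx
    rw [hσ x hx.1, he x hx.1 hx.2]
  have hfix' : ∀ x ∈ X ∩ Y, σ.symm x = x := by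
    intro x hx
    rw [Equiv.symm_apply_eq, hfix x hx]
  have hg := good_iso H G X Y σ hm hadj
  have htd : td H G X = td H G Y := by
    unfold td
    refine Fintype.expect_equiv (σ.arrowCongr (Equiv.refl β)) _ _ fun φ => ?_
    have : good H G X φ ↔ good H G Y ((σ.arrowCongr (Equiv.refl β)) φ) := hg φ
    simp only [this]
  have hcd : ∀ φ, cd H G X φ = cd H G Y (fun a => φ (σ.symm a)) := by
    intro φ
    unfold cd
    simp only [hg φ, htd]
  ext φ
  unfold condE
  refine Fintype.expect_equiv (σ.arrowCongr (Equiv.refl β)) _ _ fun ψ => ?_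
  rw [hcd]
  congr 1
  ext a
  by_cases ha : a ∈ X ∩ Y
  · rw [hfix' a ha, Finset.piecewise_eq_of_mem _ _ _ ha, Finset.piecewise_eq_of_mem _ _ _ ha]
  · have : σ.symm a ∉ X ∩ Y := by
      intro hc
      have := hfix _ hc
      rw [Equiv.apply_symm_apply] at this
      rw [← this] at hc
      exact ha hc
    rw [Finset.piecewise_eq_of_notMem _ _ _ this, Finset.piecewise_eq_of_notMem _ _ _ ha]
    rfl

lemma m_ent [Nonempty β] (H : SimpleGraph α) (G : SimpleGraph β) (Y S : Finset α) (hSY : S ⊆ Y)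
    (h : 0 < td H G Y) :
    - Real.log (td H G S) ≤
      𝔼 φ, condE S (cd H G Y) φ * Real.log (condE S (cd H G Y) φ) := by
  refine (gibbs (condE S (cd H G Y)) (good H G S) (condE_nonneg S (cd_nonneg H G Y))
    (by rw [expect_condE, cd_expect H G Y h]) ?_).2
  intro φ hφ
  obtain ⟨ψ, _, hψ⟩ := Finset.exists_ne_zero_of_expect_ne_zero hφ
  have h1 := cd_good hψ
  have h2 : good H G S (S.piecewise φ ψ) := fun u hu v hv huv => h1 u (hSY hu) v (hSY hv) huv
  exact (good_congr (φ := S.piecewise φ ψ) (ψ := φ)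
    (fun i hi => Finset.piecewise_eq_of_mem S φ ψ hi)).1 h2

lemma build [Nonempty β] {ι : Type*} [Fintype ι] [DecidableEq ι] (H : SimpleGraph α)
    (G : SimpleGraph β) (bag : ι → Finset α) (T : SimpleGraph ι) (hT : T.Connected)
    (hpath : ∀ X Y Z : ι, ∀ p : T.Walk X Y, p.IsPath → Z ∈ p.support → bag X ∩ bag Y ⊆ bag Z)
    (hiso : ∀ X Y : ι, T.Adj X Y →
      ∃ e : H.induce (bag X : Set α) ≃g H.induce (bag Y : Set α),
      ∀ (v : α) (h1 : v ∈ bag X) (h2 : v ∈ bag Y),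
        ((e ⟨v, h1⟩ : (bag Y : Set α)) : α) = v)
    (L D : ℝ) (hpos : ∀ X, 0 < td H G (bag X))
    (hb : ∀ X, ∀ S ⊆ bag X, - Real.log (td H G (bag X)) + Real.log (td H G S) ≤
      L - ((#(edgesIn H (bag X)) : ℝ) - #(edgesIn H S)) * D) (m : ℕ) (hm : m < Fintype.card ι) :
    ∃ s : Finset ι, #s = m + 1 ∧
      (∀ Z ∈ s, ∀ W ∈ s, ∃ p : T.Walk Z W, p.IsPath ∧ ∀ x ∈ p.support, x ∈ s) ∧
      ∃ f : (α → β) → ℝ, (∀ φ, 0 ≤ f φ) ∧ DependsOn f ((s.biUnion bag : Finset α) : Set α) ∧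
        (∀ φ, f φ ≠ 0 → ∀ X ∈ s, good H G (bag X) φ) ∧
        (∀ X ∈ s, condE (bag X) f = cd H G (bag X)) ∧
        𝔼 φ, f φ * Real.log (f φ) ≤
          (m + 1) * L - (#(s.biUnion fun X => edgesIn H (bag X)) : ℝ) * D := by
  classical
  induction m with
  | zero =>
    obtain ⟨r⟩ := hT.nonempty
    refine ⟨{r}, by simp, ?_, cd H G (bag r), cd_nonneg _ _ _, ?_, ?_, ?_, ?_⟩
    · intro Z hZ W hW
      rw [Finset.mem_singleton] at hZ hW
      subst hZ; subst hW
      exact ⟨SimpleGraph.Walk.nil, SimpleGraph.Walk.IsPath.nil, by simp⟩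
    · rw [Finset.singleton_biUnion]; exact cd_dep _ _ _
    · intro φ hφ X hX
      rw [Finset.mem_singleton] at hX
      subst hX; exact cd_good hφ
    · intro X hX
      rw [Finset.mem_singleton] at hX
      subst hX; exact condE_of_dependsOn (cd_dep _ _ _)
    · rw [cd_ent _ _ _ (hpos r), Finset.singleton_biUnion]
      have h1 := hb r ∅ (Finset.empty_subset _)
      have h2 : td H G (∅ : Finset α) = 1 := by
        simp [td, good]
      have h3 : edgesIn H (∅ : Finset α) = ∅ := by
        ext e
        induction e using Sym2.ind with
        | _ u v =>
          simp [edgesIn]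
          exact fun _ => ⟨u, fun h => absurd rfl h⟩
      rw [h2, h3] at h1
      simp at h1 ⊢
      linarith
  | succ m ih =>
    obtain ⟨s, hcard, hconn, f, hf0, hfdep, hfgood, hfmarg, hfent⟩ := ih (by omega)
    obtain ⟨a, ha⟩ : s.Nonempty := Finset.card_pos.1 (by omega)
    obtain ⟨b, hb'⟩ : ∃ b, b ∉ s := by
      by_contra hc
      push Not at hc
      have : s = Finset.univ := Finset.eq_univ_iff_forall.2 hc
      rw [this, Finset.card_univ] at hcard
      omega
    obtain ⟨w⟩ := hT.preconnected a b
    obtain ⟨δ, _, hX, hY⟩ := w.exists_boundary_dart (s : Set ι) (by simpa using ha)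
      (by simpa using hb')
    obtain ⟨⟨X, Y⟩, hXY⟩ := δ
    simp only [Finset.mem_coe] at hX hY
    replace hXY : T.Adj X Y := hXY
    have hpaths : ∀ Z ∈ s, ∃ p : T.Walk Z Y, p.IsPath ∧ X ∈ p.support ∧
        ∀ x ∈ p.support, x ∈ insert Y s := by
      intro Z hZ
      obtain ⟨p, hp, hps⟩ := hconn Z hZ X hX
      refine ⟨p.concat hXY, hp.concat (fun hc => hY (hps _ hc)) hXY, ?_, ?_⟩
      · rw [SimpleGraph.Walk.support_concat]
        simp
      · intro x hx
        rw [SimpleGraph.Walk.support_concat] at hx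
        simp at hx
        rcases hx with hx | hx
        · exact Finset.mem_insert_of_mem (hps _ hx)
        · simp [hx]
    have hinter : s.biUnion bag ∩ bag Y = bag X ∩ bag Y := by
      ext v
      simp only [Finset.mem_inter, Finset.mem_biUnion]
      constructor
      · rintro ⟨⟨Z, hZ, hvZ⟩, hvY⟩
        obtain ⟨p, hp, hXp, _⟩ := hpaths Z hZ
        exact ⟨hpath Z Y X p hp hXp (Finset.mem_inter.2 ⟨hvZ, hvY⟩), hvY⟩
      · rintro ⟨h1, h2⟩
        exact ⟨⟨X, hX, h1⟩, h2⟩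
    obtain ⟨e, he⟩ := hiso X Y hXY
    have hcdiso := condE_cd_iso H G (bag X) (bag Y) e he
    have hmarg : condE (bag X ∩ bag Y) f = condE (bag X ∩ bag Y) (cd H G (bag Y)) := by
      rw [← hcdiso, ← hfmarg X hX, condE_condE]
      congr 1
      ext v; simp; tauto
    obtain ⟨f', hf'0, hf'dep, hf'ne, hf'V, hf'Y, hf'ent⟩ :=
      ent_step f (cd H G (bag Y)) (s.biUnion bag) (bag Y) (bag X ∩ bag Y) hf0 (cd_nonneg _ _ _)
        hfdep (cd_dep _ _ _) hinter hmarg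
    refine ⟨insert Y s, by rw [Finset.card_insert_of_notMem hY, hcard], ?_, f', hf'0, ?_, ?_, ?_, ?_⟩
    · intro Z hZ W hW
      rw [Finset.mem_insert] at hZ hW
      rcases hZ with rfl | hZ <;> rcases hW with rfl | hW
      · exact ⟨SimpleGraph.Walk.nil, SimpleGraph.Walk.IsPath.nil, by simp⟩
      · obtain ⟨p, hp, _, hps⟩ := hpaths W hW
        exact ⟨p.reverse, hp.reverse, fun x hx => hps x (by simpa using hx)⟩
      · obtain ⟨p, hp, _, hps⟩ := hpaths Z hZ
        exact ⟨p, hp, hps⟩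
      · obtain ⟨p, hp, hps⟩ := hconn Z hZ W hW
        exact ⟨p, hp, fun x hx => Finset.mem_insert_of_mem (hps x hx)⟩
    · rw [Finset.biUnion_insert, Finset.union_comm]
      exact hf'dep
    · intro φ hφ Z hZ
      rw [Finset.mem_insert] at hZ
      rcases hZ with rfl | hZ
      · exact cd_good (hf'ne φ hφ).2
      · exact hfgood φ (hf'ne φ hφ).1 Z hZ
    · intro Z hZ
      rw [Finset.mem_insert] at hZ
      rcases hZ with rfl | hZ
      · exact hf'Y
      · rw [← hfmarg Z hZ, ← hf'V, condE_condE]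
        congr 1
        rw [Finset.inter_eq_left.2]
        exact Finset.subset_biUnion_of_mem bag hZ
    · rw [hf'ent, cd_ent _ _ _ (hpos Y), Finset.biUnion_insert]
      have h1 := m_ent H G (bag Y) (bag X ∩ bag Y) Finset.inter_subset_right (hpos Y)
      have h2 := hb Y (bag X ∩ bag Y) Finset.inter_subset_right
      have h3 : edgesIn H (bag Y) ∩ (s.biUnion fun X => edgesIn H (bag X)) =
          edgesIn H (bag X ∩ bag Y) := by
        ext e
        induction e using Sym2.ind with
        | _ u v =>
          simp only [edgesIn, Finset.mem_inter, Finset.mem_biUnion, Finset.mem_filter,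
            Finset.mem_univ, true_and, SimpleGraph.mem_edgeSet, Sym2.mem_iff, forall_eq_or_imp,
            forall_eq]
          constructor
          · rintro ⟨⟨huv, huY, hvY⟩, Z, hZ, _, huZ, hvZ⟩
            have hu : u ∈ s.biUnion bag ∩ bag Y :=
              Finset.mem_inter.2 ⟨Finset.mem_biUnion.2 ⟨Z, hZ, huZ⟩, huY⟩
            have hv : v ∈ s.biUnion bag ∩ bag Y :=
              Finset.mem_inter.2 ⟨Finset.mem_biUnion.2 ⟨Z, hZ, hvZ⟩, hvY⟩
            rw [hinter, Finset.mem_inter] at hu hv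
            exact ⟨huv, hu, hv⟩
          · rintro ⟨huv, hu, hv⟩
            exact ⟨⟨huv, hu.2, hv.2⟩, X, hX, huv, hu.1, hv.1⟩
      have h4 := Finset.card_union_add_card_inter (edgesIn H (bag Y))
        (s.biUnion fun X => edgesIn H (bag X))
      rw [h3] at h4
      have h5 : (#(edgesIn H (bag Y) ∪ s.biUnion fun X => edgesIn H (bag X)) : ℝ) =
          #(edgesIn H (bag Y)) + #(s.biUnion fun X => edgesIn H (bag X)) -
            #(edgesIn H (bag X ∩ bag Y)) := by
        rw [eq_sub_iff_add_eq]; exact_mod_cast h4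
      rw [h5]
      push_cast
      linarith

end Build

end KN

open KN Finset in
lemma KN.homDensity_eq {α β : Type*} [Fintype α] [DecidableEq α] [Fintype β] [Nonempty β]
    (H : SimpleGraph α) (G : SimpleGraph β) : homDensity H G = td H G Finset.univ := by
  classical
  unfold homDensity td
  rw [Fintype.expect_eq_sum_div_card, Finset.sum_boole, Fintype.card_fun]
  push_cast
  congr 2
  rw [← Fintype.card_subtype, ← Nat.card_eq_fintype_card]
  refine Nat.card_congr ⟨fun φ => ⟨φ, fun u _ v _ huv => φ.map_adj huv⟩,
    fun φ => ⟨φ.1, fun {u v} huv => φ.2 u (Finset.mem_univ _) v (Finset.mem_univ _) huv⟩,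
    fun φ => rfl, fun φ => rfl⟩

theorem stmt2 {α : Type*} [Fintype α] [DecidableEq α] (k : ℕ) (hk : 1 ≤ k)
    (H : SimpleGraph α)
    (hH : JDecomposable H (SimpleGraph.cycleGraph (2 * k + 1)))
    (η : ℝ) (hη : 0 < η) :
    ∃ (ρ : ℝ) (n₀ : ℕ), 0 < ρ ∧
      ∀ (d : ℝ), 0 < d → d ≤ 1 →
        ∀ (β : Type) [Fintype β] (G : SimpleGraph β),
          n₀ ≤ Fintype.card β → LocallyDense G ρ d →
            homDensity H G ≥ d ^ edgeCount H - η := by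
  classical
  obtain ⟨ι, hι, bag, T, ⟨hT, hcov, hedge, hpath⟩, hJ, hiso⟩ := hH
  have hTc := hT.connected
  obtain ⟨r⟩ := hTc.nonempty
  have hcard : 0 < Fintype.card ι := Fintype.card_pos_iff.2 ⟨r⟩
  have hcardR : (1 : ℝ) ≤ Fintype.card ι := by exact_mod_cast hcard
  set F : ℝ := (Fintype.card ι : ℝ) with hF
  set η' := min η (1 / 2) with hη'
  have hη'0 : 0 < η' := lt_min hη (by norm_num)
  have hη'1 : η' ≤ 1 / 2 := min_le_right _ _
  have hη'η : η' ≤ η := min_le_left _ _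
  set ε := η' / F with hε
  have hε0 : 0 < ε := by positivity
  have hεη : ε ≤ η' := div_le_self hη'0.le hcardR
  have hε1 : ε < 1 := by linarith
  refine ⟨ε * η' ^ (2 * k + 1), 1, by positivity, ?_⟩
  intro d hd0 hd1 β _ G hn hG
  have : Nonempty β := Fintype.card_pos_iff.1 (by omega)
  rw [KN.homDensity_eq]
  have hparam : ∀ X, ∃ g, KN.Param H k (bag X) g := fun X => KN.exists_param H k hk _ (hJ X)
  set E := Finset.univ.biUnion (fun X => KN.edgesIn H (bag X)) with hE
  have hEcount : edgeCount H = E.card := by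
    unfold edgeCount
    rw [Nat.card_eq_fintype_card, ← Set.toFinset_card]
    congr 1
    ext e
    induction e using Sym2.ind with
    | _ u v =>
      simp only [hE, KN.edgesIn, Finset.mem_biUnion, Finset.mem_filter,
        Finset.mem_univ, true_and, SimpleGraph.mem_edgeSet, Sym2.mem_iff, forall_eq_or_imp,
        forall_eq, Set.mem_toFinset]
      constructor
      · intro h
        obtain ⟨X, h1, h2⟩ := hedge u v h
        exact ⟨X, h, h1, h2⟩
      · rintro ⟨_, h, _⟩
        exact h
  have hE1 : 1 ≤ E.card := by
    obtain ⟨g, hg⟩ := hparam r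
    have h1 := hg.edges_ge hk
    have h2 : KN.edgesIn H (bag r) ⊆ E :=
      Finset.subset_biUnion_of_mem (fun X => KN.edgesIn H (bag X)) (Finset.mem_univ r)
    have := Finset.card_le_card h2
    omega
  rw [hEcount]
  by_cases hsmall : d ^ E.card ≤ η'
  · have := KN.td_nonneg H G Finset.univ
    linarith
  push Not at hsmall
  have hdη : η' ≤ d := by
    have : d ^ E.card ≤ d ^ 1 := pow_le_pow_of_le_one hd0.le hd1 hE1
    rw [pow_one] at this
    linarith
  have hρ0 : 0 < ε * η' ^ (2 * k + 1) := by positivity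
  have hρ1 : ε * η' ^ (2 * k + 1) ≤ 1 := by
    have : η' ^ (2 * k + 1) ≤ 1 := pow_le_one₀ hη'0.le (by linarith)
    nlinarith
  have hρd : ε * η' ^ (2 * k + 1) ≤ ε * d ^ (2 * k + 1) := by gcongr
  have hbound : ∀ X, 0 < KN.td H G (bag X) ∧ ∀ S ⊆ bag X,
      - Real.log (KN.td H G (bag X)) + Real.log (KN.td H G S) ≤
      - Real.log (1 - ε) -
        (((KN.edgesIn H (bag X)).card : ℝ) - (KN.edgesIn H S).card) * Real.log d := by
    intro X
    obtain ⟨g, hg⟩ := hparam X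
    exact hg.bound hk G hG hρ0 hρ1 hd0 hd1 hε0 hε1 hρd
  obtain ⟨s, hs, -, f, hf0, -, hfgood, hfmarg, hfent⟩ :=
    KN.build H G bag T hTc hpath hiso (- Real.log (1 - ε)) (Real.log d)
      (fun X => (hbound X).1) (fun X => (hbound X).2) (Fintype.card ι - 1) (by omega)
  have hsu : s = Finset.univ := by
    rw [← Finset.card_eq_iff_eq_univ, hs]; omega
  subst hsu
  have hf1 : Finset.expect Finset.univ f = 1 := by
    rw [← KN.expect_condE (bag r), hfmarg r (Finset.mem_univ _)]
    exact KN.cd_expect H G (bag r) (hbound r).1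
  obtain ⟨ht0, ht⟩ := KN.gibbs f (KN.good H G Finset.univ) hf0 hf1 (by
    intro φ hφ u _ v _ huv
    obtain ⟨X, h1, h2⟩ := hedge u v huv
    exact hfgood φ hφ X (Finset.mem_univ _) u h1 v h2 huv)
  change 0 < KN.td H G Finset.univ at ht0
  change - Real.log (KN.td H G Finset.univ) ≤ _ at ht
  have hm1 : ((Fintype.card ι - 1 : ℕ) : ℝ) + 1 = F := by
    rw [Nat.cast_sub (by omega)]; simp [hF]
  rw [hm1, ← hE] at hfent
  have h1ε : 0 < 1 - ε := by linarith
  have hlog : Real.log ((1 - ε) ^ Fintype.card ι * d ^ E.card) ≤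
      Real.log (KN.td H G Finset.univ) := by
    rw [Real.log_mul (by positivity) (by positivity), Real.log_pow, Real.log_pow, ← hF]
    linarith
  have hfin := (Real.log_le_log_iff (by positivity) ht0).1 hlog
  have hbern : 1 - F * ε ≤ (1 - ε) ^ Fintype.card ι := by
    have := one_add_mul_le_pow (a := -ε) (by linarith) (Fintype.card ι)
    rw [← hF] at this
    have e : (1 + -ε) = 1 - ε := by ring
    rw [e] at this
    linarith
  have hFε : F * ε = η' := by rw [hε]; field_simp
  rw [hFε] at hbern
  have hp0 : 0 ≤ d ^ E.card := by positivity
  have hp1 : d ^ E.card ≤ 1 := pow_le_one₀ hd0.le hd1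
  have := mul_le_mul_of_nonneg_right hbern hp0
  nlinarith
end
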